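/- Let n, k ∈ ℕ with 2 ≤ 2k < n < 4k and let M > 0. Then there exists λ₀ > 0 (depending only on n, k, M) such that for every λ with 0 < λ < λ₀, every radial function u ∈ C^{2k}(closure(B)) satisfying Δ^k u − λ·u = |u|^{2*−2}·u in B, the Dirichlet boundary conditions on ∂B, and ‖u‖_{L^{2*}(B)} ≤ M, is identically zero on B. -/

import Mathlib

/-!
The proof rewrites the radial problem as an integral equation on a half-line, extracts a limit
equation as `λ → 0`, and shows that the limit has no nontrivial solution because every solution
would have too many sign changes.

*Logarithmic coordinates.* Put `m₀ = (n - 2k)/2`, `q = 2* - 2`, `κ = m₀ q = 2k`, and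
`v(t) = e^{-m₀ t} φ(e^{-t})`, where `φ` is the radial profile of `u`. On radial functions
`r^{2k} Δ^k` is a product of the commuting first-order operators `d/dt + μⱼ` and `d/dt - μⱼ` with
`μⱼ = m₀ + 2j`, `0 ≤ j < k` (`Las_mix`, `mix_perm`), so the equation becomes
`∏ (d/dt - μⱼ) ∏ (d/dt + μⱼ) v = |v|^q v + λ e^{-κt} v` on `t > 0`.

*Pohozaev.* Testing with `dv/dt` leaves `(-1)^k w(0)² = κ λ ∫ e^{-κt} v²`, where
`w = ∏ (d/dt + μⱼ) v` (`poho_identity`). For odd `k` the signs are incompatible unless `v = 0`. For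
even `k`, the boundary conditions and the regularity at the origin allow inverting the factors by
one-sided exponential averages: `v = Es₋ (1_{t>0} Es₊ (|v|^q v + λ e^{-κt} v))`, where
`Es₊` averages over the future and `Es₋` over the past (`Es_one_Ph`, `Es_neg_one_Ph`).

*Compactness.* A nontrivial `v` is translated so that the average `Es₊` of the absolute value of the
right-hand side is normalized at the boundary (`exists_sol`). The assumption `n < 4k`, that is
`2 m₀ < κ`, bounds `∫ e^{-κt} v²` by a multiple of the square of this mass, so that the Pohozaev
identity turns the signed average at the boundary into a quantity of relative size `√λ`. As
`λ → 0` a subsequence converges to some `v = Es₋ (1_D Es₊ (|v|^q v))`, with `D` a half-line or all of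
`ℝ`; the signed moment over `D` vanishes while that of the absolute values stays `1`
(`moment_tendsto`, `no_seq`).

*Rigidity.* One-sided averages create no sign changes (`AltAt.of_E_one`, `AltAt.of_E_neg_one`), and a
vanishing moment makes the number of sign changes drop strictly (`AltAt.of_E_one_extra`). As `|v|^q v`
has the same sign changes as `v`, going around the limit equation shows that `v` has arbitrarily
many of them, hence infinitely many zeros. But `v` is the first component of a triangular chain of
`2k` first-order equations closed by `± |v|^q v`; if the zeros accumulate, Rolle's theorem passes
them on to every component, and contraction estimates give `v = 0` (`Chain.rigid`), contradicting
the normalization (`no_limit`).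
-/

open MeasureTheory Metric Filter Topology Real

noncomputable section

def lap {n : ℕ} (u : EuclideanSpace ℝ (Fin n) → ℝ) : EuclideanSpace ℝ (Fin n) → ℝ :=
  fun x => ∑ i : Fin n, iteratedFDeriv ℝ 2 u x (fun _ => EuclideanSpace.single i 1)

def iterLap {n : ℕ} (k : ℕ) (u : EuclideanSpace ℝ (Fin n) → ℝ) :
    EuclideanSpace ℝ (Fin n) → ℝ :=
  lap^[k] u

def twoStar (n k : ℕ) : ℝ := 2 * n / ((n : ℝ) - 2 * k)

def ank (n k : ℕ) : ℝ :=
  (∏ j ∈ Finset.range (2 * k), ((n : ℝ) + 2 * ((j : ℝ) - (k : ℝ)))) ^ (-(1 : ℝ) / (k : ℝ))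

def Ubub (n k : ℕ) (x : EuclideanSpace ℝ (Fin n)) : ℝ :=
  (1 / (1 + ank n k * ‖x‖ ^ 2)) ^ (((n : ℝ) - 2 * k) / 2)

def BlowUpSetup (n k : ℕ) (M : ℝ) (lam : ℕ → ℝ)
    (u : ℕ → EuclideanSpace ℝ (Fin n) → ℝ) : Prop :=
  (∀ i, 0 < lam i) ∧ Filter.Tendsto lam Filter.atTop (nhds 0) ∧
  (∀ i, ContDiff ℝ (2 * k : ℕ) (u i)) ∧
  (∀ i, ∀ x y : EuclideanSpace ℝ (Fin n), ‖x‖ = ‖y‖ → u i x = u i y) ∧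
  (∀ i, ∀ x ∈ Metric.ball (0 : EuclideanSpace ℝ (Fin n)) 1,
    iterLap k (u i) x - lam i * u i x = |u i x| ^ (twoStar n k - 2) * u i x) ∧
  (∀ i, ∀ x : EuclideanSpace ℝ (Fin n), ‖x‖ = 1 → ∀ j < k,
    iteratedFDeriv ℝ j (u i) x (fun _ => x) = 0) ∧
  (∀ i, ∃ x ∈ Metric.closedBall (0 : EuclideanSpace ℝ (Fin n)) 1, u i x ≠ 0) ∧
  (∀ i, (∫ x in Metric.ball (0 : EuclideanSpace ℝ (Fin n)) 1, |u i x| ^ twoStar n k)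
      ≤ M ^ twoStar n k)

def CLocConv {n : ℕ} (m : ℕ) (S : Set (EuclideanSpace ℝ (Fin n)))
    (f : ℕ → EuclideanSpace ℝ (Fin n) → ℝ) (g : EuclideanSpace ℝ (Fin n) → ℝ) : Prop :=
  ∀ K : Set (EuclideanSpace ℝ (Fin n)), K ⊆ S → IsCompact K → ∀ j ≤ m,
    Filter.Tendsto
      (fun i => ⨆ x : K, ‖iteratedFDeriv ℝ j (f i) (x : EuclideanSpace ℝ (Fin n))
        - iteratedFDeriv ℝ j g (x : EuclideanSpace ℝ (Fin n))‖)
      Filter.atTop (nhds 0)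

def Concentration (n k : ℕ) (u : ℕ → EuclideanSpace ℝ (Fin n) → ℝ)
    (ν : ℕ → ℝ) (ε₀ : ℝ) : Prop :=
  (∀ i, 0 < ν i) ∧ Filter.Tendsto ν Filter.atTop (nhds 0) ∧ (ε₀ = 1 ∨ ε₀ = -1) ∧
  CLocConv (2 * k) {(0 : EuclideanSpace ℝ (Fin n))}ᶜ
    (fun i z => (ν i) ^ (((n : ℝ) - 2 * k) / 2) * u i ((ν i) • z))
    (fun z => ε₀ * Ubub n k z) ∧
  Filter.Tendsto (fun R : ℝ => Filter.limsup (fun i =>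
      ⨆ x : {x : EuclideanSpace ℝ (Fin n) //
        x ∈ Metric.ball (0 : EuclideanSpace ℝ (Fin n)) 1 ∧ R * ν i ≤ ‖x‖},
        ‖(x : EuclideanSpace ℝ (Fin n))‖ ^ (((n : ℝ) - 2 * k) / 2)
          * |u i (x : EuclideanSpace ℝ (Fin n))|) Filter.atTop)
    Filter.atTop (nhds 0)

def Tfun (n k : ℕ) (u : EuclideanSpace ℝ (Fin n) → ℝ) (x : EuclideanSpace ℝ (Fin n)) : ℝ :=
  (((n : ℝ) - 2 * k) / 2) * u x + fderiv ℝ u x x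

def ndS {n : ℕ} (u : EuclideanSpace ℝ (Fin n) → ℝ) (x : EuclideanSpace ℝ (Fin n)) : ℝ :=
  fderiv ℝ u x (‖x‖⁻¹ • x)

def halfLapSq {n : ℕ} (k : ℕ) (u : EuclideanSpace ℝ (Fin n) → ℝ)
    (x : EuclideanSpace ℝ (Fin n)) : ℝ :=
  if k % 2 = 0 then (iterLap (k / 2) u x) ^ 2 else ‖gradient (iterLap (k / 2) u) x‖ ^ 2

def Sfun (n k : ℕ) (u : EuclideanSpace ℝ (Fin n) → ℝ) (x : EuclideanSpace ℝ (Fin n)) : ℝ :=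
  (∑ i ∈ Finset.range (k / 2),
    (-(ndS (iterLap (k - i - 1) u) x) * iterLap i (Tfun n k u) x
      + iterLap (k - i - 1) u x * ndS (iterLap i (Tfun n k u)) x))
  - (if k % 2 = 1 then ndS (iterLap (k / 2) u) x * iterLap (k / 2) (Tfun n k u) x else 0)

def sphVol (n : ℕ) : ℝ :=
  (μH[(n : ℝ) - 1] (Metric.sphere (0 : EuclideanSpace ℝ (Fin n)) 1)).toReal

def Cnk (n k : ℕ) : ℝ :=
  1 / (((n : ℝ) - 2) * sphVol n *
    ∏ i ∈ Finset.Icc 1 (k - 1), (((n : ℝ) - 2 * k + 2 * ((i : ℝ) - 1)) * (2 * (k : ℝ) - 2 * (i : ℝ))))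

namespace PolyH

/-! ### One-sided exponential averages -/

/-- The one-sided exponential average `∫₀^∞ e^{-μx} g(t + σx) dx`. For `σ = 1` it inverts
`-d/dt + μ`, for `σ = -1` it inverts `d/dt + μ`. -/
def E (σ μ : ℝ) (g : ℝ → ℝ) (t : ℝ) : ℝ :=
  ∫ x in Set.Ioi (0 : ℝ), exp (-(μ * x)) * g (t + σ * x)

/-- The composition `E σ (m₀ + 2j) ∘ E σ (m₀ + 2(j+1)) ∘ ⋯` of `m` exponential averages. -/
def Es (σ m0 : ℝ) : ℕ → ℕ → (ℝ → ℝ) → ℝ → ℝ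
  | _, 0, g => g
  | j, m + 1, g => E σ (m0 + 2 * j) (Es σ m0 (j + 1) m g)

lemma Es_zero (σ m0 : ℝ) (j : ℕ) (g : ℝ → ℝ) : Es σ m0 j 0 g = g := rfl

lemma Es_succ (σ m0 : ℝ) (j m : ℕ) (g : ℝ → ℝ) :
    Es σ m0 j (m + 1) g = E σ (m0 + 2 * j) (Es σ m0 (j + 1) m g) := rfl

lemma Es_succ' (σ m0 : ℝ) (j m : ℕ) (g : ℝ → ℝ) :
    Es σ m0 j (m + 1) g = Es σ m0 j m (E σ (m0 + 2 * ((j + m : ℕ) : ℝ)) g) := by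
  induction m generalizing j with
  | zero => simp [Es]
  | succ m ih =>
    rw [Es_succ, ih (j + 1), Es_succ]
    congr 5
    push_cast; ring

lemma int_exp {a : ℝ} (ha : 0 < a) : ∫ x in Set.Ioi (0 : ℝ), exp (-(a * x)) = 1 / a := by
  have := integral_exp_mul_Ioi (a := -a) (by linarith) 0
  simp only [neg_mul] at this
  rw [this]; simp

lemma intOn_exp {a : ℝ} (ha : 0 < a) (c : ℝ) :
    IntegrableOn (fun x => exp (-(a * x))) (Set.Ioi c) := by
  have := integrableOn_exp_mul_Ioi (a := -a) (by linarith) c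
  simpa only [neg_mul] using this

lemma E_bound_le {σ μ α B t : ℝ} {g ρ : ℝ → ℝ} (hα : α < μ) (hB : 0 ≤ B)
    (hρ : ∀ x, 0 ≤ x → ρ (t + σ * x) ≤ exp (α * x) * ρ t)
    (hg : ∀ x, 0 ≤ x → |g (t + σ * x)| ≤ B * ρ (t + σ * x)) :
    |E σ μ g t| ≤ B / (μ - α) * ρ t := by
  have h1 : ∫ x in Set.Ioi (0 : ℝ), (B * ρ t) * exp (-((μ - α) * x)) = B / (μ - α) * ρ t := by
    rw [integral_const_mul, int_exp (by linarith)]; ring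
  rw [← h1, ← Real.norm_eq_abs]
  apply norm_integral_le_of_norm_le ((intOn_exp (by linarith) 0).const_mul _)
  filter_upwards [ae_restrict_mem measurableSet_Ioi] with x hx
  have hx0 : 0 ≤ x := le_of_lt hx
  rw [Real.norm_eq_abs, abs_mul, abs_of_pos (exp_pos _)]
  calc exp (-(μ * x)) * |g (t + σ * x)| ≤ exp (-(μ * x)) * (B * (exp (α * x) * ρ t)) := by
        gcongr
        exact (hg x hx0).trans (by gcongr; exact hρ x hx0)
    _ = B * ρ t * (exp (-(μ * x)) * exp (α * x)) := by ring
    _ = _ := by rw [← exp_add]; congr 2; ring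

/-- Weighted sup bound: a weight `ρ` growing by at most `e^{αx}` along the ray is reproduced. -/
lemma Es_bound {σ m0 α B c : ℝ} {g ρ : ℝ → ℝ} {S : Set ℝ} (hc : 0 < c) (hB : 0 ≤ B)
    (hS : ∀ t ∈ S, ∀ x, 0 ≤ x → t + σ * x ∈ S)
    (hρ : ∀ t ∈ S, ∀ x, 0 ≤ x → ρ (t + σ * x) ≤ exp (α * x) * ρ t)
    (hρ0 : ∀ t ∈ S, 0 ≤ ρ t)
    (hg : ∀ t ∈ S, |g t| ≤ B * ρ t) (m j : ℕ) (hj : α + c ≤ m0 + 2 * j) :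
    ∀ t ∈ S, |Es σ m0 j m g t| ≤ B / c ^ m * ρ t := by
  induction m generalizing j with
  | zero => simpa [Es] using hg
  | succ m ih =>
    intro t ht
    have h1 := ih (j + 1) (by push_cast; linarith)
    rw [Es_succ]
    refine (E_bound_le (α := α) (B := B / c ^ m) (ρ := ρ) (by linarith) (by positivity)
      (hρ t ht) (fun x hx => h1 _ (hS t ht x hx))).trans ?_
    have : B / c ^ m / (m0 + 2 * j - α) ≤ B / c ^ (m + 1) := by
      rw [pow_succ, ← div_div]
      apply div_le_div_of_nonneg_left (by positivity) hc (by linarith)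
    exact mul_le_mul_of_nonneg_right this (hρ0 t ht)

lemma E_congr {σ μ t : ℝ} {g g' : ℝ → ℝ} (h : ∀ x, 0 < x → g (t + σ * x) = g' (t + σ * x)) :
    E σ μ g t = E σ μ g' t := by
  unfold E
  apply setIntegral_congr_fun measurableSet_Ioi
  intro x hx
  simp only [h x hx]

lemma Es_congr {σ m0 : ℝ} {g g' : ℝ → ℝ} {S : Set ℝ}
    (hS : ∀ t ∈ S, ∀ x, 0 ≤ x → t + σ * x ∈ S) (h : ∀ t ∈ S, g t = g' t) (m j : ℕ) :
    ∀ t ∈ S, Es σ m0 j m g t = Es σ m0 j m g' t := by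
  induction m generalizing j with
  | zero => simpa [Es] using h
  | succ m ih =>
    intro t ht
    exact E_congr fun x hx => ih _ _ (hS t ht x hx.le)

lemma E_meas {σ μ : ℝ} {g : ℝ → ℝ} (hg : Measurable g) : Measurable (E σ μ g) := by
  have : StronglyMeasurable (fun p : ℝ × ℝ => exp (-(μ * p.2)) * g (p.1 + σ * p.2)) := by
    apply Measurable.stronglyMeasurable
    have : Measurable fun p : ℝ × ℝ => g (p.1 + σ * p.2) := hg.comp (by fun_prop)
    fun_prop
  exact (this.integral_prod_right (ν := volume.restrict (Set.Ioi 0))).measurable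

lemma Es_meas {σ m0 : ℝ} {g : ℝ → ℝ} (hg : Measurable g) (m j : ℕ) :
    Measurable (Es σ m0 j m g) := by
  induction m generalizing j with
  | zero => exact hg
  | succ m ih => exact E_meas (ih _)

lemma E_intOn {σ μ t α B : ℝ} {g : ℝ → ℝ} (hg : Measurable g) (hα : α < μ)
    (hB : ∀ x, 0 < x → |g (t + σ * x)| ≤ B * exp (α * x)) :
    IntegrableOn (fun x => exp (-(μ * x)) * g (t + σ * x)) (Set.Ioi 0) := by
  refine Integrable.mono' ((intOn_exp (a := μ - α) (by linarith) 0).const_mul B) ?_ ?_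
  · have : Measurable fun x : ℝ => g (t + σ * x) := hg.comp (by fun_prop)
    exact Measurable.aestronglyMeasurable (by fun_prop)
  · filter_upwards [ae_restrict_mem measurableSet_Ioi] with x hx
    rw [Real.norm_eq_abs, abs_mul, abs_of_pos (exp_pos _)]
    calc exp (-(μ * x)) * |g (t + σ * x)| ≤ exp (-(μ * x)) * (B * exp (α * x)) := by
          gcongr; exact hB x hx
      _ = B * (exp (-(μ * x)) * exp (α * x)) := by ring
      _ = _ := by rw [← exp_add]; congr 2; ring

lemma E_intOn' {σ μ t B : ℝ} {g : ℝ → ℝ} (hg : Measurable g) (hμ : 0 < μ)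
    (hB : ∀ t, |g t| ≤ B) :
    IntegrableOn (fun x => exp (-(μ * x)) * g (t + σ * x)) (Set.Ioi 0) :=
  E_intOn (α := 0) (B := B) hg hμ (by simpa using fun x _ => hB (t + σ * x))

lemma E_bdd {σ μ B : ℝ} {g : ℝ → ℝ} (hμ : 0 < μ) (hB : ∀ t, |g t| ≤ B) :
    ∀ t, |E σ μ g t| ≤ B / μ := by
  intro t
  have := E_bound_le (σ := σ) (μ := μ) (α := 0) (B := B) (t := t) (g := g) (ρ := fun _ => 1) hμ
    ((abs_nonneg _).trans (hB 0)) (by simp) (by simpa using fun x _ => hB (t + σ * x))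
  simpa using this

lemma Es_bdd {σ m0 B : ℝ} {g : ℝ → ℝ} (hm : 0 < m0) (hB : ∀ t, |g t| ≤ B) (m j : ℕ) :
    ∀ t, |Es σ m0 j m g t| ≤ B / m0 ^ m := by
  intro t
  have := Es_bound (σ := σ) (m0 := m0) (α := 0) (B := B) (c := m0) (g := g) (ρ := fun _ => 1)
    (S := Set.univ) hm ((abs_nonneg _).trans (hB 0)) (by simp) (by simp) (by simp)
    (by simpa using hB) m j (by simp) t trivial
  simpa using this

lemma E_mono {σ μ t : ℝ} {g g' : ℝ → ℝ}
    (hg : IntegrableOn (fun x => exp (-(μ * x)) * g (t + σ * x)) (Set.Ioi 0))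
    (hg' : IntegrableOn (fun x => exp (-(μ * x)) * g' (t + σ * x)) (Set.Ioi 0))
    (h : ∀ x, 0 < x → g (t + σ * x) ≤ g' (t + σ * x)) : E σ μ g t ≤ E σ μ g' t := by
  apply setIntegral_mono_on hg hg' measurableSet_Ioi
  intro x hx
  exact mul_le_mul_of_nonneg_left (h x hx) (exp_pos _).le

lemma abs_E_le (σ μ : ℝ) (g : ℝ → ℝ) (t : ℝ) : |E σ μ g t| ≤ E σ μ (fun s => |g s|) t := by
  unfold E
  rw [← Real.norm_eq_abs]
  refine (norm_integral_le_integral_norm _).trans (le_of_eq ?_)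
  simp

lemma E_nonneg {σ μ t : ℝ} {g : ℝ → ℝ} (h : ∀ s, 0 ≤ g s) : 0 ≤ E σ μ g t :=
  integral_nonneg fun _ => mul_nonneg (exp_pos _).le (h _)

lemma Es_nonneg {σ m0 : ℝ} {g : ℝ → ℝ} (h : ∀ s, 0 ≤ g s) (m j : ℕ) :
    ∀ t, 0 ≤ Es σ m0 j m g t := by
  induction m generalizing j with
  | zero => exact h
  | succ m ih => exact fun t => E_nonneg (ih _)

lemma abs_Es_le {σ m0 B : ℝ} {g : ℝ → ℝ} (hm : 0 < m0) (hg : Measurable g) (hB : ∀ t, |g t| ≤ B)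
    (m j : ℕ) : ∀ t, |Es σ m0 j m g t| ≤ Es σ m0 j m (fun s => |g s|) t := by
  induction m generalizing j with
  | zero => simp [Es]
  | succ m ih =>
    intro t
    have hB' : ∀ t, |(fun s => |g s|) t| ≤ B := by simpa using hB
    have hj : 0 < m0 + 2 * (j : ℝ) := by positivity
    refine (abs_E_le _ _ _ _).trans (E_mono ?_ ?_ fun _ _ => ih _ _)
    · refine E_intOn' (B := B / m0 ^ m) ((Es_meas hg _ _).abs) hj ?_
      simpa using Es_bdd hm hB m (j + 1)
    · exact E_intOn' (B := B / m0 ^ m) (Es_meas hg.abs _ _) hj (Es_bdd hm hB' m (j + 1))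

lemma E_add {σ μ t : ℝ} {g g' : ℝ → ℝ}
    (hg : IntegrableOn (fun x => exp (-(μ * x)) * g (t + σ * x)) (Set.Ioi 0))
    (hg' : IntegrableOn (fun x => exp (-(μ * x)) * g' (t + σ * x)) (Set.Ioi 0)) :
    E σ μ (fun s => g s + g' s) t = E σ μ g t + E σ μ g' t := by
  unfold E
  rw [← integral_add hg hg']
  congr 1; ext x; ring

lemma Es_add {σ m0 B B' : ℝ} {g g' : ℝ → ℝ} (hm : 0 < m0) (hg : Measurable g)
    (hg' : Measurable g') (hB : ∀ t, |g t| ≤ B) (hB' : ∀ t, |g' t| ≤ B') (m j : ℕ) :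
    Es σ m0 j m (fun s => g s + g' s) = fun t => Es σ m0 j m g t + Es σ m0 j m g' t := by
  induction m generalizing j with
  | zero => rfl
  | succ m ih =>
    ext t
    have hj : 0 < m0 + 2 * (j : ℝ) := by positivity
    rw [Es_succ, ih]
    exact E_add (E_intOn' (Es_meas hg _ _) hj (Es_bdd hm hB m (j + 1)))
      (E_intOn' (Es_meas hg' _ _) hj (Es_bdd hm hB' m (j + 1)))

lemma E_smul (σ μ a : ℝ) (g : ℝ → ℝ) : E σ μ (fun s => a * g s) = fun t => a * E σ μ g t := by
  ext t
  unfold E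
  rw [← integral_const_mul]
  congr 1; ext x; ring

lemma Es_smul (σ m0 a : ℝ) (g : ℝ → ℝ) (m j : ℕ) :
    Es σ m0 j m (fun s => a * g s) = fun t => a * Es σ m0 j m g t := by
  induction m generalizing j with
  | zero => rfl
  | succ m ih => rw [Es_succ, ih, E_smul]; rfl

lemma E_shift (σ μ a : ℝ) (g : ℝ → ℝ) :
    E σ μ (fun s => g (s - a)) = fun t => E σ μ g (t - a) := by
  ext t
  unfold E
  congr 1; ext x; congr 2; ring_nf

lemma Es_shift (σ m0 a : ℝ) (g : ℝ → ℝ) (m j : ℕ) :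
    Es σ m0 j m (fun s => g (s - a)) = fun t => Es σ m0 j m g (t - a) := by
  induction m generalizing j with
  | zero => rfl
  | succ m ih => rw [Es_succ, ih, E_shift]; rfl

lemma E_neg (σ μ : ℝ) (g : ℝ → ℝ) :
    E σ μ (fun s => g (-s)) = fun t => E (-σ) μ g (-t) := by
  ext t
  unfold E
  congr 1; ext x; congr 2; ring_nf

/-- The average over `(t, ∞)` as a tail integral. -/
lemma E_one_eq (μ : ℝ) (g : ℝ → ℝ) (t : ℝ) :
    E 1 μ g t = exp (μ * t) * ∫ s in Set.Ioi t, exp (-(μ * s)) * g s := by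
  have h := (measurePreserving_add_left volume t).setIntegral_preimage_emb
    (MeasurableEquiv.addLeft t).measurableEmbedding (fun s => exp (-(μ * s)) * g s) (Set.Ioi t)
  have h2 : (fun x => t + x) ⁻¹' Set.Ioi t = Set.Ioi 0 := by ext x; simp
  rw [h2] at h
  rw [← h, ← integral_const_mul]
  unfold E
  congr 1; ext x
  rw [← mul_assoc, ← exp_add]
  congr 2 <;> ring_nf

lemma Ioi_intOn {μ B t : ℝ} {g : ℝ → ℝ} (hμ : 0 < μ) (hg : Measurable g) (hB : ∀ t, |g t| ≤ B) :
    IntegrableOn (fun s => exp (-(μ * s)) * g s) (Set.Ioi t) := by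
  refine Integrable.mono' ((intOn_exp hμ t).const_mul B) ?_ ?_
  · exact Measurable.aestronglyMeasurable (by fun_prop)
  · refine Eventually.of_forall fun x => ?_
    rw [Real.norm_eq_abs, abs_mul, abs_of_pos (exp_pos _), mul_comm]
    exact mul_le_mul_of_nonneg_right (hB x) (exp_pos _).le

lemma E_one_sub {μ B s t : ℝ} {g : ℝ → ℝ} (hμ : 0 < μ) (hg : Measurable g)
    (hB : ∀ t, |g t| ≤ B) (hst : s ≤ t) :
    exp (-(μ * s)) * E 1 μ g s - exp (-(μ * t)) * E 1 μ g t
      = ∫ x in Set.Ioc s t, exp (-(μ * x)) * g x := by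
  have h := intervalIntegral.integral_Ioi_sub_Ioi (Ioi_intOn (t := s) hμ hg hB) hst
  rw [intervalIntegral.integral_of_le hst] at h
  rw [← h, E_one_eq, E_one_eq, ← mul_assoc, ← mul_assoc, ← exp_add, ← exp_add]
  simp

lemma E_one_lip {μ B s t : ℝ} {g : ℝ → ℝ} (hμ : 0 < μ) (hg : Measurable g)
    (hB : ∀ t, |g t| ≤ B) (hst : s ≤ t) : |E 1 μ g s - E 1 μ g t| ≤ 2 * B * (t - s) := by
  have h := E_one_sub hμ hg hB hst
  have hB0 : 0 ≤ B := (abs_nonneg _).trans (hB 0)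
  have h1 : |∫ x in Set.Ioc s t, exp (-(μ * x)) * g x| ≤ exp (-(μ * s)) * B * (t - s) := by
    have := norm_setIntegral_le_of_norm_le_const (μ := volume) (s := Set.Ioc s t)
      (f := fun x => exp (-(μ * x)) * g x) (C := exp (-(μ * s)) * B) (by simp) (by
        intro x hx
        rw [Real.norm_eq_abs, abs_mul, abs_of_pos (exp_pos _)]
        have : exp (-(μ * x)) ≤ exp (-(μ * s)) := by
          apply exp_le_exp.2; nlinarith [hx.1]
        exact mul_le_mul this (hB x) (abs_nonneg _) (exp_pos _).le)
    simpa [hst] using this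
  have h2 := E_bdd (σ := 1) hμ hB t
  have h3 : E 1 μ g s - E 1 μ g t = exp (μ * s) *
      (∫ x in Set.Ioc s t, exp (-(μ * x)) * g x) - (1 - exp (-(μ * (t - s)))) * E 1 μ g t := by
    rw [← h, mul_sub, ← mul_assoc, ← mul_assoc, ← exp_add, ← exp_add]
    have e1 : μ * s + -(μ * s) = 0 := by ring
    have e2 : μ * s + -(μ * t) = -(μ * (t - s)) := by ring
    rw [e1, e2, exp_zero]; ring
  have h4 : |exp (μ * s) * (∫ x in Set.Ioc s t, exp (-(μ * x)) * g x)| ≤ B * (t - s) := by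
    rw [abs_mul, abs_of_pos (exp_pos _)]
    calc _ ≤ exp (μ * s) * (exp (-(μ * s)) * B * (t - s)) := by gcongr
      _ = (exp (μ * s) * exp (-(μ * s))) * (B * (t - s)) := by ring
      _ = _ := by rw [← exp_add]; simp
  have h5 : |(1 - exp (-(μ * (t - s)))) * E 1 μ g t| ≤ B * (t - s) := by
    have e0 : 0 ≤ μ * (t - s) := mul_nonneg hμ.le (by linarith)
    have e1 : 0 ≤ 1 - exp (-(μ * (t - s))) := by
      have : exp (-(μ * (t - s))) ≤ 1 := exp_le_one_iff.2 (by linarith)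
      linarith
    have e2 : 1 - exp (-(μ * (t - s))) ≤ μ * (t - s) := by
      have := add_one_le_exp (-(μ * (t - s))); linarith
    rw [abs_mul, abs_of_nonneg e1]
    calc _ ≤ μ * (t - s) * (B / μ) := by gcongr
      _ = _ := by field_simp
  rw [h3]
  rw [abs_le] at h4 h5 ⊢
  constructor <;> linarith [h4.1, h4.2, h5.1, h5.2]

lemma E_neg_one (μ : ℝ) (g : ℝ → ℝ) (t : ℝ) : E (-1) μ g t = E 1 μ (fun s => g (-s)) (-t) := by
  rw [E_neg]; simp

lemma E_lip {σ μ B : ℝ} {g : ℝ → ℝ} (hσ : σ = 1 ∨ σ = -1) (hμ : 0 < μ) (hg : Measurable g)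
    (hB : ∀ t, |g t| ≤ B) (s t : ℝ) : |E σ μ g s - E σ μ g t| ≤ 2 * B * |s - t| := by
  have key : ∀ (g : ℝ → ℝ), Measurable g → (∀ t, |g t| ≤ B) → ∀ s t,
      |E 1 μ g s - E 1 μ g t| ≤ 2 * B * |s - t| := by
    intro g hg hB s t
    rcases le_total s t with h | h
    · rw [abs_sub_comm s t, abs_of_nonneg (show 0 ≤ t - s by linarith)]
      exact E_one_lip hμ hg hB h
    · rw [abs_of_nonneg (show 0 ≤ s - t by linarith), abs_sub_comm]
      exact E_one_lip hμ hg hB h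
  rcases hσ with rfl | rfl
  · exact key g hg hB s t
  · rw [E_neg_one, E_neg_one]
    have := key (fun s => g (-s)) (hg.comp measurable_neg) (fun t => hB _) (-s) (-t)
    rwa [show -s - -t = -(s - t) by ring, abs_neg] at this

lemma cont_of_lip {C : ℝ} {f : ℝ → ℝ} (h : ∀ s t, |f s - f t| ≤ C * |s - t|) : Continuous f := by
  have hC : 0 ≤ C := by
    have := (abs_nonneg _).trans (h 1 0); simpa using this
  exact (LipschitzWith.of_dist_le_mul (K := ⟨C, hC⟩) (fun x y => by
    rw [Real.dist_eq, Real.dist_eq]; exact h x y)).continuous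

lemma E_cont {σ μ B : ℝ} {g : ℝ → ℝ} (hσ : σ = 1 ∨ σ = -1) (hμ : 0 < μ) (hg : Measurable g)
    (hB : ∀ t, |g t| ≤ B) : Continuous (E σ μ g) :=
  cont_of_lip (E_lip hσ hμ hg hB)

lemma Es_cont {σ m0 B : ℝ} {g : ℝ → ℝ} (hσ : σ = 1 ∨ σ = -1) (hm : 0 < m0) (hg : Measurable g)
    (hB : ∀ t, |g t| ≤ B) (m j : ℕ) : Continuous (Es σ m0 j (m + 1) g) :=
  E_cont hσ (by positivity) (Es_meas hg _ _) (Es_bdd hm hB m (j + 1))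

lemma E_one_hasDeriv {μ B t : ℝ} {g : ℝ → ℝ} (hμ : 0 < μ) (hg : Measurable g)
    (hB : ∀ t, |g t| ≤ B) (hc : ContinuousAt g t) :
    HasDerivAt (E 1 μ g) (μ * E 1 μ g t - g t) t := by
  set G : ℝ → ℝ := fun x => exp (-(μ * x)) * g x
  have hGm : Measurable G := by unfold G; fun_prop
  have hI := Ioi_intOn (t := t - 1) hμ hg hB
  have h1 : HasDerivAt (fun s => ∫ x in t - 1..s, G x) (G t) t := by
    apply intervalIntegral.integral_hasDerivAt_right
    · exact (intervalIntegrable_iff_integrableOn_Ioc_of_le (by linarith)).2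
        (hI.mono_set Set.Ioc_subset_Ioi_self)
    · exact ⟨Set.univ, univ_mem, hGm.aestronglyMeasurable⟩
    · unfold G; exact ContinuousAt.mul (by fun_prop) hc
  have h2 : HasDerivAt (fun s => exp (μ * s) * ((∫ x in Set.Ioi (t - 1), G x) -
      ∫ x in t - 1..s, G x)) (exp (μ * t) * (μ * 1) * ((∫ x in Set.Ioi (t - 1), G x) -
      ∫ x in t - 1..t, G x) + exp (μ * t) * (0 - G t)) t := by
    refine HasDerivAt.mul ?_ ?_
    · exact HasDerivAt.exp ((hasDerivAt_id t).const_mul μ)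
    · exact (hasDerivAt_const _ _).sub h1
  have h3 : ∀ s, t - 1 ≤ s → (∫ x in Set.Ioi (t - 1), G x) - ∫ x in t - 1..s, G x
      = ∫ x in Set.Ioi s, G x := by
    intro s hs
    have := intervalIntegral.integral_Ioi_sub_Ioi hI hs
    linarith
  have h4 : HasDerivAt (E 1 μ g) (exp (μ * t) * (μ * 1) * ((∫ x in Set.Ioi (t - 1), G x) -
      ∫ x in t - 1..t, G x) + exp (μ * t) * (0 - G t)) t := by
    apply h2.congr_of_eventuallyEq
    filter_upwards [lt_mem_nhds (show t - 1 < t by linarith)] with s hs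
    rw [h3 s hs.le, E_one_eq]
  convert h4 using 1
  rw [h3 t (by linarith), E_one_eq]
  have : exp (μ * t) * G t = g t := by
    unfold G; rw [← mul_assoc, ← exp_add]; simp
  linear_combination this

lemma E_neg_one_hasDeriv {μ B t : ℝ} {g : ℝ → ℝ} (hμ : 0 < μ) (hg : Measurable g)
    (hB : ∀ t, |g t| ≤ B) (hc : ContinuousAt g t) :
    HasDerivAt (E (-1) μ g) (g t - μ * E (-1) μ g t) t := by
  have hc' : ContinuousAt (fun s => g (-s)) (-t) := by
    have : ContinuousAt g (-(-t)) := by simpa using hc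
    exact this.comp continuous_neg.continuousAt
  have h := E_one_hasDeriv (t := -t) hμ (hg.comp measurable_neg) (fun t => hB (-t)) hc'
  have h2 := h.scomp t (hasDerivAt_neg t)
  have e : E (-1) μ g = (E 1 μ fun s => g (-s)) ∘ Neg.neg := by
    ext s; exact E_neg_one μ g s
  have h3 : HasDerivAt (E (-1) μ g) ((-1 : ℝ) • (μ * E 1 μ (g ∘ Neg.neg) (-t) - (g ∘ Neg.neg) (-t))) t := by
    rw [e]; exact h2
  refine h3.congr_deriv ?_
  rw [E_neg_one]
  simp [Function.comp_def]

lemma E_tendsto {ι : Type*} {l : Filter ι} [l.IsCountablyGenerated] {σ μ B c : ℝ} (hμ : 0 < μ)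
    (hσ : σ = 1 ∨ σ = -1)
    {g : ι → ℝ → ℝ} {g0 : ℝ → ℝ} {T : ι → ℝ} {T0 : ℝ} (hg : ∀ i, Measurable (g i))
    (hB : ∀ i t, |g i t| ≤ B)
    (h : ∀ x, T0 + σ * x ≠ c → Tendsto (fun i => g i (T i + σ * x)) l (𝓝 (g0 (T0 + σ * x)))) :
    Tendsto (fun i => E σ μ (g i) (T i)) l (𝓝 (E σ μ g0 T0)) := by
  apply tendsto_integral_filter_of_dominated_convergence (fun x => B * exp (-(μ * x)))
  · refine Eventually.of_forall fun i => ?_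
    have : Measurable fun x : ℝ => g i (T i + σ * x) := (hg i).comp (by fun_prop)
    exact Measurable.aestronglyMeasurable (by fun_prop)
  · refine Eventually.of_forall fun i => Eventually.of_forall fun x => ?_
    rw [Real.norm_eq_abs, abs_mul, abs_of_pos (exp_pos _), mul_comm]
    exact mul_le_mul_of_nonneg_right (hB _ _) (exp_pos _).le
  · exact (intOn_exp hμ 0).const_mul B
  · have : ∀ᵐ x : ℝ ∂(volume.restrict (Set.Ioi 0)), x ≠ σ * (c - T0) :=
      ae_restrict_of_ae (by simp [ae_iff])
    filter_upwards [this] with x hx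
    refine (h x ?_).const_mul _
    rintro rfl
    apply hx
    rcases hσ with rfl | rfl <;> ring

/-- Dominated convergence for iterated averages; one exceptional point is allowed. -/
lemma Es_tendsto {σ m0 B c : ℝ} (hm : 0 < m0) (hσ : σ = 1 ∨ σ = -1)
    {g : ℕ → ℝ → ℝ} {g0 : ℝ → ℝ} (hg : ∀ i, Measurable (g i))
    (hB : ∀ i t, |g i t| ≤ B) (h : ∀ t, t ≠ c → Tendsto (fun i => g i t) atTop (𝓝 (g0 t)))
    (m j : ℕ) (t : ℝ) (ht : t ≠ c ∨ m ≠ 0) :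
    Tendsto (fun i => Es σ m0 j m (g i) t) atTop (𝓝 (Es σ m0 j m g0 t)) := by
  induction m generalizing j t with
  | zero => exact h t (by simpa using ht)
  | succ m ih =>
    exact E_tendsto (B := B / m0 ^ m) (c := c) (T := fun _ => t) (by positivity) hσ
      (fun i => Es_meas (hg i) _ _)
      (fun i => Es_bdd hm (hB i) m (j + 1)) (fun x hx => ih _ _ (Or.inl hx))

/-- If `g` tends to `0` at `+∞`, so does each iterated average. -/
lemma Es_tendsto_zero {σ m0 B : ℝ} {g : ℝ → ℝ} (hm : 0 < m0)
    (hg : Measurable g) (hB : ∀ t, |g t| ≤ B) (h : Tendsto g atTop (𝓝 0)) (m j : ℕ) :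
    Tendsto (Es σ m0 j m g) atTop (𝓝 0) := by
  induction m generalizing j with
  | zero => exact h
  | succ m ih =>
    have : Tendsto (fun t : ℝ => E σ (m0 + 2 * j) (fun s => Es σ m0 (j + 1) m g s) t) atTop
        (𝓝 (∫ x in Set.Ioi (0 : ℝ), (0 : ℝ))) := by
      apply tendsto_integral_filter_of_dominated_convergence
        (fun x => B / m0 ^ m * exp (-((m0 + 2 * j) * x)))
      · refine Eventually.of_forall fun i => ?_
        have : Measurable fun x : ℝ => Es σ m0 (j + 1) m g (i + σ * x) :=
          (Es_meas hg _ _).comp (by fun_prop)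
        exact Measurable.aestronglyMeasurable (by fun_prop)
      · refine Eventually.of_forall fun i => Eventually.of_forall fun x => ?_
        rw [Real.norm_eq_abs, abs_mul, abs_of_pos (exp_pos _), mul_comm]
        exact mul_le_mul_of_nonneg_right (Es_bdd hm hB _ _ _) (exp_pos _).le
      · exact (intOn_exp (by positivity) 0).const_mul _
      · refine Eventually.of_forall fun x => ?_
        have h1 : Tendsto (fun t : ℝ => t + σ * x) atTop atTop :=
          tendsto_atTop_add_const_right _ _ tendsto_id
        simpa using ((ih (j + 1)).comp h1).const_mul (exp (-((m0 + 2 * j) * x)))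
    simpa [Es_succ] using this

/-! ### Variation diminishing -/

/-- The values of `f` at the increasing points `s 0 < ⋯ < s m` alternate strictly in sign,
starting with the sign of `ε`. -/
def AltAt (f : ℝ → ℝ) (m : ℕ) (ε : ℝ) (s : ℕ → ℝ) : Prop :=
  (∀ i < m, s i < s (i + 1)) ∧ ∀ i ≤ m, 0 < ε * (-1) ^ i * f (s i)

lemma exists_pos_of_int {S : Set ℝ} (hS : MeasurableSet S) {f : ℝ → ℝ} {μ a : ℝ}
    (h : 0 < a * ∫ x in S, exp (-(μ * x)) * f x) : ∃ x ∈ S, 0 < a * f x := by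
  by_contra! hc
  rw [← integral_const_mul] at h
  refine absurd (setIntegral_nonpos (μ := volume) hS fun x hx => ?_) (not_le.2 h)
  have := mul_nonpos_of_nonneg_of_nonpos (exp_pos (-(μ * x))).le (hc x hx)
  linarith

/-- Averaging to the right does not create sign changes. -/
lemma AltAt.of_E_one {μ B ε : ℝ} {g : ℝ → ℝ} {m : ℕ} {s : ℕ → ℝ} (hμ : 0 < μ)
    (hg : Measurable g) (hB : ∀ t, |g t| ≤ B) (h : AltAt (E 1 μ g) m ε s) :
    ∃ t, AltAt g m ε t ∧ ∀ i ≤ m, s i < t i := by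
  obtain ⟨hs, hp⟩ := h
  have key : ∀ i, ∃ x, i ≤ m → s i < x ∧ (i < m → x ≤ s (i + 1)) ∧ 0 < ε * (-1) ^ i * g x := by
    intro i
    rcases lt_trichotomy i m with hi | hi | hi
    · have h1 := hp i hi.le
      have h2 := hp (i + 1) hi
      have h3 := E_one_sub hμ hg hB (hs i hi).le
      have h4 : 0 < ε * (-1) ^ i * ∫ x in Set.Ioc (s i) (s (i + 1)), exp (-(μ * x)) * g x := by
        rw [← h3, mul_sub]
        have a1 : 0 < exp (-(μ * s i)) * (ε * (-1) ^ i * E 1 μ g (s i)) :=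
          mul_pos (exp_pos _) h1
        have a2 : 0 < exp (-(μ * s (i + 1))) * (ε * (-1) ^ (i + 1) * E 1 μ g (s (i + 1))) :=
          mul_pos (exp_pos _) h2
        rw [pow_succ] at a2
        linarith
      obtain ⟨x, hx, hx2⟩ := exists_pos_of_int measurableSet_Ioc h4
      exact ⟨x, fun _ => ⟨hx.1, fun _ => hx.2, hx2⟩⟩
    · subst hi
      have h1 := hp i le_rfl
      rw [E_one_eq] at h1
      have h4 : 0 < ε * (-1) ^ i * ∫ x in Set.Ioi (s i), exp (-(μ * x)) * g x := by
        have : 0 < exp (μ * s i) * (ε * (-1) ^ i * ∫ x in Set.Ioi (s i), exp (-(μ * x)) * g x) := by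
          linarith
        exact pos_of_mul_pos_right this (exp_pos _).le
      obtain ⟨x, hx, hx2⟩ := exists_pos_of_int measurableSet_Ioi h4
      exact ⟨x, fun _ => ⟨hx, fun h => absurd h (lt_irrefl _), hx2⟩⟩
    · exact ⟨0, fun h => absurd h (not_le.2 hi)⟩
  choose t ht using key
  refine ⟨t, ⟨fun i hi => ?_, fun i hi => (ht i hi).2.2⟩, fun i hi => (ht i hi).1⟩
  exact ((ht i hi.le).2.1 hi).trans_lt (ht (i + 1) hi).1

lemma neg_one_pow_sub {m i : ℕ} (h : i ≤ m) : (-1 : ℝ) ^ m * (-1) ^ i = (-1) ^ (m - i) := by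
  obtain ⟨d, rfl⟩ := Nat.exists_eq_add_of_le h
  rw [Nat.add_sub_cancel_left, pow_add]
  have : (-1 : ℝ) ^ i * (-1) ^ i = 1 := by rw [← mul_pow]; simp
  linear_combination (-1 : ℝ) ^ d * this

lemma AltAt.reflect {f : ℝ → ℝ} {m : ℕ} {ε : ℝ} {s : ℕ → ℝ} (h : AltAt f m ε s) :
    AltAt (fun x => f (-x)) m (ε * (-1) ^ m) (fun i => -s (m - i)) := by
  refine ⟨fun i hi => ?_, fun i hi => ?_⟩
  · have := h.1 (m - (i + 1)) (by omega)
    rw [show m - (i + 1) + 1 = m - i by omega] at this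
    simpa using this
  · have := h.2 (m - i) (by omega)
    beta_reduce
    rw [neg_neg, mul_assoc ε, neg_one_pow_sub hi]
    exact this

/-- Averaging to the left does not create sign changes. -/
lemma AltAt.of_E_neg_one {μ B ε : ℝ} {g : ℝ → ℝ} {m : ℕ} {s : ℕ → ℝ} (hμ : 0 < μ)
    (hg : Measurable g) (hB : ∀ t, |g t| ≤ B) (h : AltAt (E (-1) μ g) m ε s) :
    ∃ t, AltAt g m ε t := by
  have h1 := h.reflect
  have e : (fun x => E (-1) μ g (-x)) = E 1 μ (fun s => g (-s)) := by
    ext x; rw [E_neg_one]; simp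
  rw [e] at h1
  obtain ⟨t, ht, -⟩ := h1.of_E_one hμ (hg.comp measurable_neg) (fun t => hB (-t))
  have h2 := ht.reflect
  have e2 : ε * (-1) ^ m * (-1) ^ m = ε := by
    rw [mul_assoc, ← mul_pow]; simp
  rw [e2] at h2
  exact ⟨_, by simpa using h2⟩

lemma AltAt.of_Es_one {m0 B ε : ℝ} {g : ℝ → ℝ} {m : ℕ} (hm : 0 < m0)
    (hg : Measurable g) (hB : ∀ t, |g t| ≤ B) (p j : ℕ) {s : ℕ → ℝ}
    (h : AltAt (Es 1 m0 j p g) m ε s) : ∃ t, AltAt g m ε t ∧ ∀ i ≤ m, s i ≤ t i := by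
  induction p generalizing j s with
  | zero => exact ⟨s, h, fun _ _ => le_rfl⟩
  | succ p ih =>
    obtain ⟨t, ht, hst⟩ := AltAt.of_E_one (by positivity) (Es_meas hg _ _)
      (Es_bdd hm hB p (j + 1)) h
    obtain ⟨r, hr, htr⟩ := ih _ ht
    exact ⟨r, hr, fun i hi => (hst i hi).le.trans (htr i hi)⟩

lemma AltAt.of_Es_neg_one {m0 B ε : ℝ} {g : ℝ → ℝ} {m : ℕ} (hm : 0 < m0)
    (hg : Measurable g) (hB : ∀ t, |g t| ≤ B) (p j : ℕ) {s : ℕ → ℝ}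
    (h : AltAt (Es (-1) m0 j p g) m ε s) : ∃ t, AltAt g m ε t := by
  induction p generalizing j s with
  | zero => exact ⟨s, h⟩
  | succ p ih =>
    obtain ⟨t, ht⟩ := AltAt.of_E_neg_one (by positivity) (Es_meas hg _ _)
      (Es_bdd hm hB p (j + 1)) h
    exact ih _ ht

/-- If moreover the full tail integral over the domain `D` vanishes, the averaged function has
strictly fewer sign changes than `g`. -/
lemma AltAt.of_E_one_extra {μ B ε : ℝ} {g : ℝ → ℝ} {m : ℕ} {s : ℕ → ℝ} {D : Set ℝ} (hμ : 0 < μ)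
    (hg : Measurable g) (hB : ∀ t, |g t| ≤ B) (hD : MeasurableSet D) (hDu : IsUpperSet D)
    (hi : IntegrableOn (fun x => exp (-(μ * x)) * g x) D)
    (h0 : ∫ x in D, exp (-(μ * x)) * g x = 0)
    (hs : ∀ i ≤ m, s i ∈ D) (h : AltAt (E 1 μ g) m ε s) :
    ∃ t, AltAt g (m + 1) (-ε) t ∧ ∀ i ≤ m + 1, t i ∈ D := by
  obtain ⟨t, ht, hst⟩ := h.of_E_one hμ hg hB
  have h1 := h.2 0 (Nat.zero_le _)
  have hsub : Set.Ioi (s 0) ⊆ D := fun x hx => hDu (le_of_lt hx) (hs 0 (Nat.zero_le _))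
  -- The part of `D` to the left of `s 0` carries minus the tail integral at `s 0`, which forces a
  -- point there at which `g` has the opposite sign.
  have h2 : ∫ x in D \ Set.Ioi (s 0), exp (-(μ * x)) * g x
      = - ∫ x in Set.Ioi (s 0), exp (-(μ * x)) * g x := by
    rw [setIntegral_sdiff measurableSet_Ioi hi hsub, h0]; ring
  have h3 : 0 < -ε * ∫ x in D \ Set.Ioi (s 0), exp (-(μ * x)) * g x := by
    rw [h2]
    rw [E_one_eq] at h1
    have : 0 < exp (μ * s 0) * (ε * ∫ x in Set.Ioi (s 0), exp (-(μ * x)) * g x) := by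
      simp only [pow_zero, mul_one] at h1; linarith
    have := pos_of_mul_pos_right this (exp_pos _).le
    linarith
  obtain ⟨x, hx, hx2⟩ := exists_pos_of_int (hD.diff measurableSet_Ioi) h3
  have hxs : x ≤ s 0 := not_lt.1 hx.2
  refine ⟨fun i => Nat.casesOn i x t, ⟨?_, ?_⟩, ?_⟩
  · intro i hi
    cases i with
    | zero => exact hxs.trans_lt (hst 0 (Nat.zero_le _))
    | succ i => exact ht.1 i (by omega)
  · intro i hi
    cases i with
    | zero => simpa using hx2
    | succ i =>
      have := ht.2 i (by omega)
      simpa [pow_succ] using this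
  · intro i hi
    cases i with
    | zero => exact hx.1
    | succ i => exact hDu (hst i (by omega)).le (hs i (by omega))

/-! ### Zeros of solutions of first-order chains -/

/-- `f 0, …, f N` solve the triangular system `f j' = ρ j f j + f (j+1)` on `J`. -/
def Chain (N : ℕ) (f : ℕ → ℝ → ℝ) (ρ : ℕ → ℝ) (J : Set ℝ) : Prop :=
  ∀ j < N, ∀ t ∈ J, HasDerivAt (f j) (ρ j * f j t + f (j + 1) t) t

/-- Below every point of `J` there is a zero of `f` in `J`. -/
def LZ (f : ℝ → ℝ) (J : Set ℝ) : Prop := ∀ t ∈ J, ∃ t1 ∈ J, t1 < t ∧ f t1 = 0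

lemma exp_mul_hasDeriv {f : ℝ → ℝ} {ρ g t : ℝ} (h : HasDerivAt f (ρ * f t + g) t) :
    HasDerivAt (fun s => exp (-(ρ * s)) * f s) (exp (-(ρ * t)) * g) t := by
  have h1 : HasDerivAt (fun s : ℝ => exp (-(ρ * s))) (exp (-(ρ * t)) * -(ρ * 1)) t :=
    (((hasDerivAt_id t).const_mul ρ).neg).exp
  exact (h1.mul h).congr_deriv (by ring)

lemma LZ.rolle {f g : ℝ → ℝ} {ρ : ℝ} {J : Set ℝ} (hJ : J.OrdConnected)
    (hd : ∀ t ∈ J, HasDerivAt f (ρ * f t + g t) t) (h : LZ f J) : LZ g J := by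
  intro t ht
  obtain ⟨t1, h1, h1t, hz1⟩ := h t ht
  obtain ⟨t2, h2, h2t, hz2⟩ := h t1 h1
  have hsub : Set.Icc t2 t1 ⊆ J := hJ.out h2 h1
  obtain ⟨c, hc, hc0⟩ := exists_hasDerivAt_eq_zero (f := fun s => exp (-(ρ * s)) * f s)
    (f' := fun s => exp (-(ρ * s)) * g s) h2t
    (fun s hs => (exp_mul_hasDeriv (hd s (hsub hs))).continuousAt.continuousWithinAt)
    (by simp [hz1, hz2]) (fun s hs => exp_mul_hasDeriv (hd s (hsub (Set.Ioo_subset_Icc_self hs))))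
  refine ⟨c, hsub (Set.Ioo_subset_Icc_self hc), hc.2.trans h1t, ?_⟩
  exact (mul_eq_zero.1 hc0).resolve_left (exp_pos _).ne'

lemma decay_step_le {f g : ℝ → ℝ} {ρ β C : ℝ} {J : Set ℝ} (hJ : J.OrdConnected)
    (hd : ∀ t ∈ J, HasDerivAt f (ρ * f t + g t) t) (h : LZ f J) (hβ : ρ < β) (hC : 0 ≤ C)
    (hg : ∀ t ∈ J, |g t| ≤ C * exp (β * t)) :
    ∀ t ∈ J, f t ≤ C / (β - ρ) * exp (β * t) := by
  intro t ht
  obtain ⟨t1, h1, h1t, hz1⟩ := h t ht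
  have hsub : Set.Icc t1 t ⊆ J := hJ.out h1 ht
  have hβ' : 0 < β - ρ := by linarith
  set P : ℝ → ℝ := fun s => C / (β - ρ) * exp ((β - ρ) * s) - exp (-(ρ * s)) * f s with hP
  have hPd : ∀ s ∈ Set.Icc t1 t, HasDerivAt P
      (C * exp ((β - ρ) * s) - exp (-(ρ * s)) * g s) s := by
    intro s hs
    have h2 : HasDerivAt (fun s : ℝ => C / (β - ρ) * exp ((β - ρ) * s))
        (C / (β - ρ) * (exp ((β - ρ) * s) * ((β - ρ) * 1))) s :=
      (((hasDerivAt_id s).const_mul (β - ρ)).exp).const_mul _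
    refine (h2.sub (exp_mul_hasDeriv (hd s (hsub hs)))).congr_deriv ?_
    field_simp
  have hmono : MonotoneOn P (Set.Icc t1 t) := by
    apply monotoneOn_of_deriv_nonneg (convex_Icc _ _)
    · exact fun s hs => (hPd s hs).continuousAt.continuousWithinAt
    · intro s hs
      exact (hPd s (interior_subset hs)).differentiableAt.differentiableWithinAt
    · intro s hs
      have hs' := interior_subset hs
      rw [(hPd s hs').deriv]
      have h3 := (le_abs_self _).trans (hg s (hsub hs'))
      have h4 : exp (-(ρ * s)) * g s ≤ exp (-(ρ * s)) * (C * exp (β * s)) := by gcongr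
      have h5 : exp (-(ρ * s)) * (C * exp (β * s)) = C * exp ((β - ρ) * s) := by
        rw [mul_left_comm, ← exp_add]; congr 2; ring
      linarith
  have h6 := hmono (Set.left_mem_Icc.2 h1t.le) (Set.right_mem_Icc.2 h1t.le) h1t.le
  have h7 : 0 ≤ P t1 := by
    simp only [hP, hz1, mul_zero, sub_zero]; positivity
  have h8 : exp (-(ρ * t)) * f t ≤ C / (β - ρ) * exp ((β - ρ) * t) := by
    have := h7.trans h6
    simp only [hP] at this; linarith
  have h9 : exp (ρ * t) * (exp (-(ρ * t)) * f t) ≤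
      exp (ρ * t) * (C / (β - ρ) * exp ((β - ρ) * t)) := by gcongr
  rw [← mul_assoc, ← exp_add, mul_left_comm, ← exp_add] at h9
  simp only [add_neg_cancel, exp_zero, one_mul] at h9
  convert h9 using 3
  ring

lemma decay_step {f g : ℝ → ℝ} {ρ β C : ℝ} {J : Set ℝ} (hJ : J.OrdConnected)
    (hd : ∀ t ∈ J, HasDerivAt f (ρ * f t + g t) t) (h : LZ f J) (hβ : ρ < β) (hC : 0 ≤ C)
    (hg : ∀ t ∈ J, |g t| ≤ C * exp (β * t)) :
    ∀ t ∈ J, |f t| ≤ C / (β - ρ) * exp (β * t) := by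
  intro t ht
  rw [abs_le']
  refine ⟨decay_step_le hJ hd h hβ hC hg t ht, ?_⟩
  refine decay_step_le (f := fun t => -f t) (g := fun t => -g t) hJ (fun t ht => ?_) ?_ hβ hC
    (by simpa using hg) t ht
  · exact (hd t ht).neg.congr_deriv (by ring)
  · intro t ht
    obtain ⟨t1, h1, h2, h3⟩ := h t ht
    exact ⟨t1, h1, h2, by simp [h3]⟩

/-- Exponential bounds propagate from the end of a chain to its beginning. -/
lemma Chain.bound {N : ℕ} {f : ℕ → ℝ → ℝ} {ρ : ℕ → ℝ} {J : Set ℝ} {β c C : ℝ}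
    (hJ : J.OrdConnected) (hf : Chain N f ρ J) (h : LZ (f 0) J) (hc : 0 < c)
    (hρ : ∀ j < N, ρ j + c ≤ β) (hC : 0 ≤ C) (hN : ∀ t ∈ J, |f N t| ≤ C * exp (β * t)) :
    ∀ t ∈ J, |f 0 t| ≤ C / c ^ N * exp (β * t) := by
  induction N generalizing f ρ with
  | zero => simpa using hN
  | succ N ih =>
    have h0 : ∀ t ∈ J, HasDerivAt (f 0) (ρ 0 * f 0 t + f 1 t) t := hf 0 (Nat.succ_pos _)
    have h1 := ih (f := fun j => f (j + 1)) (ρ := fun j => ρ (j + 1))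
      (fun j hj => hf (j + 1) (by omega)) (h.rolle hJ h0) (fun j hj => hρ (j + 1) (by omega)) hN
    intro t ht
    have hρ0 := hρ 0 (Nat.succ_pos _)
    have h2 := decay_step hJ h0 h (β := β) (C := C / c ^ N) (by linarith) (by positivity) h1 t ht
    refine h2.trans (mul_le_mul_of_nonneg_right ?_ (exp_pos _).le)
    rw [pow_succ, ← div_div]
    exact div_le_div_of_nonneg_left (by positivity) hc (by linarith)

/-- Contraction: feeding `|f N| ≤ Q |f 0|` back into `Chain.bound` halves the bound on `f 0`, and this
can be iterated. -/
lemma Chain.zero {N : ℕ} {f : ℕ → ℝ → ℝ} {ρ : ℕ → ℝ} {J : Set ℝ} {β c B Q : ℝ}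
    (hJ : J.OrdConnected) (hf : Chain N f ρ J) (h : LZ (f 0) J) (hc : 0 < c)
    (hρ : ∀ j < N, ρ j + c ≤ β) (hB : 0 ≤ B) (hQ0 : 0 ≤ Q) (hQ : Q / c ^ N ≤ 1 / 2)
    (hN : ∀ t ∈ J, |f N t| ≤ Q * |f 0 t|) (h0 : ∀ t ∈ J, |f 0 t| ≤ B * exp (β * t)) :
    ∀ t ∈ J, f 0 t = 0 := by
  have key : ∀ i : ℕ, ∀ t ∈ J, |f 0 t| ≤ B * (1 / 2) ^ i * exp (β * t) := by
    intro i
    induction i with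
    | zero => simpa using h0
    | succ i ih =>
      have h1 := hf.bound hJ h hc hρ (C := Q * (B * (1 / 2) ^ i)) (by positivity) (fun t ht =>
        (hN t ht).trans (by rw [mul_assoc]; exact mul_le_mul_of_nonneg_left (ih t ht) hQ0))
      intro t ht
      refine (h1 t ht).trans ?_
      gcongr
      calc Q * (B * (1 / 2) ^ i) / c ^ N = (Q / c ^ N) * (B * (1 / 2) ^ i) := by ring
        _ ≤ 1 / 2 * (B * (1 / 2) ^ i) := by gcongr
        _ = _ := by rw [pow_succ]; ring
  intro t ht
  have h1 : Tendsto (fun i : ℕ => B * (1 / 2 : ℝ) ^ i * exp (β * t)) atTop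
      (𝓝 (B * 0 * exp (β * t))) :=
    ((tendsto_pow_atTop_nhds_zero_of_lt_one (by norm_num) (by norm_num)).const_mul _).mul_const _
  have h2 := ge_of_tendsto' h1 (fun i => key i t ht)
  simpa using h2

/-- Zeros accumulating at a finite left endpoint force `f 0 = 0`. -/
lemma Chain.zero_of_bddBelow {N : ℕ} {f : ℕ → ℝ → ℝ} {ρ : ℕ → ℝ} {J : Set ℝ} {R Q C x : ℝ}
    (hJ : J.OrdConnected) (hf : Chain N f ρ J) (h : LZ (f 0) J) (hN0 : N ≠ 0) (hR : 0 ≤ R)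
    (hρ : ∀ j < N, ρ j ≤ R) (hQ0 : 0 ≤ Q) (hC : 0 ≤ C)
    (hN : ∀ t ∈ J, |f N t| ≤ Q * |f 0 t|) (h0 : ∀ t ∈ J, |f 0 t| ≤ C) (hx : ∀ t ∈ J, x ≤ t) :
    ∀ t ∈ J, f 0 t = 0 := by
  -- The gap `c` is so large that the contraction factor `Q / c ^ N` is at most `1 / 2`.
  have hc1 : (1 : ℝ) ≤ max 1 (2 * Q) := le_max_left _ _
  have hc2 : 2 * Q ≤ max 1 (2 * Q) := le_max_right _ _
  set c := max 1 (2 * Q)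
  have hcN : c ≤ c ^ N := by simpa using pow_le_pow_right₀ hc1 (Nat.one_le_iff_ne_zero.2 hN0)
  refine hf.zero hJ h (c := c) (β := R + c) (B := C * exp (-((R + c) * x))) (Q := Q)
    (by linarith) (fun j hj => by linarith [hρ j hj]) (by positivity) hQ0 ?_ hN ?_
  · rw [div_le_iff₀ (by positivity)]; linarith
  · intro t ht
    rw [mul_assoc, ← exp_add]
    refine (h0 t ht).trans (le_mul_of_one_le_right hC (one_le_exp ?_))
    nlinarith [hx t ht]

/-- Zeros accumulating at `-∞` force `f 0 = 0` near `-∞`, for a superlinear right-hand side and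
exponential decay at a rate `α` with `R + 1 ≤ α (q + 1)`. -/
lemma Chain.zero_of_unbdd {N : ℕ} {f : ℕ → ℝ → ℝ} {ρ : ℕ → ℝ} {J : Set ℝ} {R q C α : ℝ}
    (hJ : J.OrdConnected) (hf : Chain N f ρ J) (h : LZ (f 0) J)
    (hρ : ∀ j < N, ρ j ≤ R) (hC : 0 < C) (hq : 0 < q) (hα : 0 < α) (hα2 : R + 1 ≤ α * (q + 1))
    (hN : ∀ t ∈ J, |f N t| ≤ |f 0 t| ^ q * |f 0 t|)
    (h0 : ∀ t ∈ J, |f 0 t| ≤ C * exp (α * t)) :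
    ∃ T, ∀ t ∈ J, t < T → f 0 t = 0 := by
  have h1 : ∀ t ∈ J, |f N t| ≤ C ^ (q + 1) * exp (α * (q + 1) * t) := by
    intro t ht
    refine (hN t ht).trans ?_
    have e : |f 0 t| ^ q * |f 0 t| = |f 0 t| ^ (q + 1) := by
      rw [rpow_add_one' (abs_nonneg _) (by positivity)]
    rw [e]
    refine (rpow_le_rpow (abs_nonneg _) (h0 t ht) (by positivity)).trans (le_of_eq ?_)
    rw [mul_rpow hC.le (exp_pos _).le, ← exp_mul]
    congr 2; ring
  -- The superlinearity improves the decay rate from `α` to `α (q + 1)`, which beats every `ρ j`.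
  have h2 := hf.bound hJ h one_pos (β := α * (q + 1)) (fun j hj => by linarith [hρ j hj])
    (C := C ^ (q + 1)) (by positivity) h1
  have h3 : Tendsto (fun t : ℝ => C * exp (α * t)) atBot (𝓝 0) := by
    have : Tendsto (fun t : ℝ => α * t) atBot atBot := tendsto_id.const_mul_atBot hα
    simpa using (tendsto_exp_atBot.comp this).const_mul C
  have h4 : ∀ᶠ t in atBot, C * exp (α * t) ≤ (1 / 2 : ℝ) ^ (1 / q) :=
    h3.eventually_le_const (by positivity)
  obtain ⟨T, hT⟩ := eventually_atBot.1 h4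
  refine ⟨T, fun t ht htT => ?_⟩
  refine Chain.zero (J := J ∩ Set.Iio T) (hJ.inter Set.ordConnected_Iio)
    (fun j hj s hs => hf j hj s hs.1) ?_ one_pos (β := α * (q + 1))
    (fun j hj => by linarith [hρ j hj]) (B := C ^ (q + 1)) (by positivity) (Q := 1 / 2)
    (by norm_num) (by simp) ?_ (fun s hs => by simpa using h2 s hs.1) t ⟨ht, htT⟩
  · intro s hs
    obtain ⟨t1, a, b, c⟩ := h s hs.1
    exact ⟨t1, ⟨a, b.trans hs.2⟩, b, c⟩
  · intro s hs
    refine (hN s hs.1).trans ?_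
    gcongr
    calc |f 0 s| ^ q ≤ ((1 / 2 : ℝ) ^ (1 / q)) ^ q := by
          gcongr; exact (h0 s hs.1).trans (hT s hs.2.le)
      _ = 1 / 2 := by rw [← rpow_mul (by norm_num)]; field_simp; simp

lemma Chain.reflect {N : ℕ} {f : ℕ → ℝ → ℝ} {ρ : ℕ → ℝ} {J : Set ℝ} (hf : Chain N f ρ J) :
    Chain N (fun j t => (-1) ^ j * f j (-t)) (fun j => -ρ j) (Neg.neg ⁻¹' J) := by
  intro j hj t ht
  have h1 := (hf j hj (-t) ht).scomp t (hasDerivAt_neg t)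
  have h2 := h1.const_mul ((-1 : ℝ) ^ j)
  refine HasDerivAt.congr_deriv (f := fun t => (-1) ^ j * f j (-t)) h2 ?_
  simp only [smul_eq_mul, pow_succ]; ring

lemma LZ.of_unbdd {f : ℝ → ℝ} {J : Set ℝ} (h : ∀ T, ∃ t ∈ J, t < T ∧ f t = 0) : LZ f J :=
  fun t _ => h t

/-- A solution of the chain with infinitely many zeros in `D` vanishes identically. -/
theorem Chain.rigid {N : ℕ} {f : ℕ → ℝ → ℝ} {ρ : ℕ → ℝ} {D : Set ℝ} {R q C α : ℝ}
    (hD : IsUpperSet D) (hf : Chain N f ρ D) (hN0 : N ≠ 0) (hR : 0 ≤ R)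
    (hρ : ∀ j < N, |ρ j| ≤ R) (hC : 0 < C) (hq : 0 < q) (hα : 0 < α)
    (hα2 : R + 1 ≤ α * (q + 1)) (hN : ∀ t ∈ D, |f N t| ≤ |f 0 t| ^ q * |f 0 t|)
    (hb0 : ∀ t ∈ D, |f 0 t| ≤ C) (hb1 : ∀ t ∈ D, |f 0 t| ≤ C * exp (α * t))
    (hb2 : ∀ t ∈ D, |f 0 t| ≤ C * exp (-(α * t)))
    (hz : {t | t ∈ D ∧ f 0 t = 0}.Infinite) : ∀ t ∈ D, f 0 t = 0 := by
  have hDo : D.OrdConnected := hD.ordConnected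
  have hDo' : (Neg.neg ⁻¹' D).OrdConnected :=
    ⟨fun a ha b hb x hx => hDo.out hb ha ⟨neg_le_neg hx.2, neg_le_neg hx.1⟩⟩
  have hN' : ∀ t ∈ D, |f N t| ≤ C ^ q * |f 0 t| := fun t ht => (hN t ht).trans (by
    gcongr; exact hb0 t ht)
  have hfr := hf.reflect
  have right : ∀ x, Set.Ioi x ⊆ D → LZ (f 0) (Set.Ioi x) → ∀ t, x < t → f 0 t = 0 := by
    intro x hx hlz t ht
    exact Chain.zero_of_bddBelow (x := x) Set.ordConnected_Ioi (fun j hj s hs => hf j hj s (hx hs))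
      hlz hN0 hR (fun j hj => (le_abs_self _).trans (hρ j hj)) (Q := C ^ q) (by positivity) hC.le
      (fun t ht => hN' t (hx ht)) (fun t ht => hb0 t (hx ht)) (fun s hs => le_of_lt hs) t ht
  have left : ∀ x, (∀ t ∈ D, t < x → ∃ t1, t < t1 ∧ t1 < x ∧ f 0 t1 = 0) →
      ∀ t ∈ D, t < x → f 0 t = 0 := by
    intro x hx t ht htx
    have := Chain.zero_of_bddBelow (x := -x) (J := Neg.neg ⁻¹' D ∩ Set.Ioi (-x))
      (hDo'.inter Set.ordConnected_Ioi)
      (fun j hj s hs => hfr j hj s hs.1) ?_ hN0 hR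
      (fun j hj => (neg_le_abs _).trans (hρ j hj)) (Q := C ^ q) (by positivity) hC.le
      (fun t ht => by simpa [abs_mul] using hN' (-t) ht.1)
      (fun t ht => by simpa [abs_mul] using hb0 (-t) ht.1) (fun s hs => le_of_lt hs.2) (-t)
      ⟨by simpa using ht, by simpa using htx⟩
    · simpa using this
    · intro s hs
      obtain ⟨t1, a, b, c⟩ := hx (-s) hs.1 (by have := hs.2; simp at this; linarith)
      refine ⟨-t1, ⟨?_, by simpa using b⟩, by linarith, by simpa using c⟩
      simpa using hD a.le hs.1
  -- A solution vanishing on an interval vanishes on both sides of it.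
  have stepA : ∀ a b, a < b → (∀ t ∈ Set.Ioo a b, t ∈ D ∧ f 0 t = 0) → ∀ t ∈ D, f 0 t = 0 := by
    intro a b hab hz t ht
    set x := (a + b) / 2
    have hxa : a < x := by simp only [x]; linarith
    have hxb : x < b := by simp only [x]; linarith
    have hxD := (hz x ⟨hxa, hxb⟩)
    rcases lt_trichotomy t x with h | h | h
    · refine left x (fun s hs hsx => ?_) t ht h
      obtain ⟨y, h1, h2⟩ := exists_between (max_lt hxa hsx)
      exact ⟨y, (le_max_right _ _).trans_lt h1, h2,
        (hz y ⟨(le_max_left _ _).trans_lt h1, h2.trans hxb⟩).2⟩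
    · rw [h]; exact hxD.2
    · refine right x (fun y hy => hD (le_of_lt hy) hxD.1) (fun s hs => ?_) t h
      obtain ⟨y, h1, h2⟩ := exists_between (lt_min hxb hs)
      exact ⟨y, h1, h2.trans_le (min_le_right _ _),
        (hz y ⟨hxa.trans h1, h2.trans_le (min_le_left _ _)⟩).2⟩
  set Z := {t | t ∈ D ∧ f 0 t = 0} with hZ
  by_cases hbb : BddBelow Z
  swap
  · have hun : ∀ T, ∃ t ∈ D, t < T ∧ f 0 t = 0 := by
      intro T
      obtain ⟨t, ht, htT⟩ := not_bddBelow_iff.1 hbb T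
      exact ⟨t, ht.1, htT, ht.2⟩
    have hDu : ∀ t, t ∈ D := fun t => by
      obtain ⟨s, hs, hst, -⟩ := hun t
      exact hD hst.le hs
    obtain ⟨T, hT⟩ := hf.zero_of_unbdd hDo (LZ.of_unbdd hun)
      (fun j hj => (le_abs_self _).trans (hρ j hj)) hC hq hα hα2 hN hb1
    exact stepA (T - 1) T (by linarith) fun t ht => ⟨hDu t, hT t (hDu t) ht.2⟩
  by_cases hba : BddAbove Z
  swap
  · have hun : ∀ T, ∃ t ∈ D, T < t ∧ f 0 t = 0 := by
      intro T
      obtain ⟨t, ht, htT⟩ := not_bddAbove_iff.1 hba T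
      exact ⟨t, ht.1, htT, ht.2⟩
    have hun' : ∀ T, ∃ t ∈ Neg.neg ⁻¹' D, t < T ∧ (-1 : ℝ) ^ 0 * f 0 (-t) = 0 := by
      intro T
      obtain ⟨t, a, b, c⟩ := hun (-T)
      exact ⟨-t, by simpa using a, by linarith, by simpa using c⟩
    obtain ⟨T, hT⟩ := hfr.zero_of_unbdd hDo' (LZ.of_unbdd hun')
      (fun j hj => (neg_le_abs _).trans (hρ j hj)) hC hq hα hα2
      (fun t ht => by simpa [abs_mul] using hN (-t) ht)
      (fun t ht => by simpa [abs_mul] using hb2 (-t) ht)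
    obtain ⟨s, hs, hsT, -⟩ := hun (-T)
    refine stepA s (s + 1) (by linarith) fun t ht => ?_
    have htD : t ∈ D := hD ht.1.le hs
    refine ⟨htD, ?_⟩
    have := hT (-t) (by simpa using htD) (by linarith [ht.1])
    simpa using this
  obtain ⟨a, ha⟩ := hbb
  obtain ⟨b, hb⟩ := hba
  obtain ⟨x, -, hx⟩ := hz.exists_accPt_of_subset_isCompact (isCompact_Icc (a := a) (b := b))
    (fun t ht => ⟨ha ht, hb ht⟩)
  rw [accPt_iff_frequently_nhdsNE] at hx
  rw [← nhdsLT_sup_nhdsGT, frequently_sup] at hx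
  rcases hx with hx | hx
  · have hl : ∀ t, t < x → ∃ t1, t < t1 ∧ t1 < x ∧ t1 ∈ Z := by
      intro t ht
      obtain ⟨y, hy, hy2⟩ := (hx.and_eventually (Ioo_mem_nhdsLT ht)).exists
      exact ⟨y, hy2.1, hy2.2, hy⟩
    obtain ⟨z, -, hz1, hz2⟩ := hl (x - 1) (by linarith)
    refine stepA z x hz1 fun t ht => ?_
    have htD : t ∈ D := hD ht.1.le hz2.1
    refine ⟨htD, left x (fun s _ hsx => ?_) t htD ht.2⟩
    obtain ⟨t1, h1, h2, h3⟩ := hl s hsx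
    exact ⟨t1, h1, h2, h3.2⟩
  · have hr : ∀ t, x < t → ∃ t1, x < t1 ∧ t1 < t ∧ t1 ∈ Z := by
      intro t ht
      obtain ⟨y, hy, hy2⟩ := (hx.and_eventually (Ioo_mem_nhdsGT ht)).exists
      exact ⟨y, hy2.1, hy2.2, hy⟩
    have hsub : Set.Ioi x ⊆ D := fun y hy => by
      obtain ⟨t1, -, h2, h3⟩ := hr y hy
      exact hD h2.le h3.1
    refine stepA x (x + 1) (by linarith) fun t ht => ⟨hsub ht.1, right x hsub (fun s hs => ?_) t ht.1⟩
    obtain ⟨t1, h1, h2, h3⟩ := hr s hs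
    exact ⟨t1, h1, h2, h3.2⟩

/-! ### Rigidity of the limit equation -/

lemma abs_indicator_le {D : Set ℝ} {f : ℝ → ℝ} {t B : ℝ} (hB : 0 ≤ B) (h : t ∈ D → |f t| ≤ B) :
    |D.indicator f t| ≤ B := by
  by_cases ht : t ∈ D
  · rw [Set.indicator_of_mem ht]; exact h ht
  · rw [Set.indicator_of_notMem ht]; simpa using hB

/-- The nonlinearity `|v|^q v`. -/
def nl (q : ℝ) (v : ℝ → ℝ) : ℝ → ℝ := fun t => |v t| ^ q * v t

lemma abs_nl {q : ℝ} (v : ℝ → ℝ) (t : ℝ) : |nl q v t| = |v t| ^ q * |v t| := by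
  unfold nl
  rw [abs_mul, abs_of_nonneg (rpow_nonneg (abs_nonneg _) _)]

lemma abs_nl_le {q C : ℝ} {v : ℝ → ℝ} {t : ℝ} (hq : 0 < q) (h : |v t| ≤ C) :
    |nl q v t| ≤ C ^ q * C := by
  rw [abs_nl]
  have := (abs_nonneg _).trans h
  gcongr

lemma nl_meas {q : ℝ} {v : ℝ → ℝ} (hv : Measurable v) : Measurable (nl q v) :=
  ((hv.abs.pow_const q).mul hv)

lemma nl_cont {q : ℝ} {v : ℝ → ℝ} (hq : 0 < q) (hv : Continuous v) : Continuous (nl q v) :=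
  ((hv.abs.rpow_const fun _ => Or.inr hq.le).mul hv)

lemma S_one {S : Set ℝ} (hS : IsUpperSet S) : ∀ t ∈ S, ∀ x : ℝ, 0 ≤ x → t + 1 * x ∈ S :=
  fun _ ht x hx => hS (by linarith) ht

lemma S_neg_one {S : Set ℝ} (hS : IsLowerSet S) : ∀ t ∈ S, ∀ x : ℝ, 0 ≤ x → t + -1 * x ∈ S :=
  fun _ ht x hx => hS (by linarith) ht

lemma Es_neg_indicator_zero {m0 : ℝ} {D : Set ℝ} (hm : 0 < m0) (hD : IsUpperSet D) (g : ℝ → ℝ)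
    (k j : ℕ) {t : ℝ} (ht : t ∉ D) : Es (-1) m0 j k (D.indicator g) t = 0 := by
  have := Es_bound (σ := -1) (m0 := m0) (α := 0) (B := 0) (c := m0) (g := D.indicator g)
    (ρ := fun _ => 1) (S := Dᶜ) hm le_rfl (S_neg_one hD.compl) (by simp) (by simp)
    (by
      intro s hs
      rw [Set.indicator_of_notMem hs]; simp) k j (by simp) t ht
  simpa using this

lemma int_shift (f : ℝ → ℝ) (t : ℝ) :
    ∫ x in Set.Ioi (0 : ℝ), f (t + x) = ∫ s in Set.Ioi t, f s := by
  have h := (measurePreserving_add_left volume t).setIntegral_preimage_emb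
    (MeasurableEquiv.addLeft t).measurableEmbedding f (Set.Ioi t)
  have h2 : (fun x => t + x) ⁻¹' Set.Ioi t = Set.Ioi 0 := by ext x; simp
  rwa [h2] at h

/-- If `|v|^(q+2)` is integrable near `+∞`, the averages of `|v|^q v` tend to `0` there. -/
lemma E_nl_tendsto {μ q : ℝ} {v : ℝ → ℝ} (hμ : 0 < μ) (hq : 0 < q)
    (hI : Integrable fun t => |v t| ^ (q + 2)) :
    Tendsto (E 1 μ (nl q v)) atTop (𝓝 0) := by
  rw [NormedAddGroup.tendsto_nhds_zero]
  intro ε hε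
  obtain ⟨η, hη, hη1⟩ : ∃ η : ℝ, 0 < η ∧ η ^ q * η / μ < ε / 2 := by
    refine ⟨min 1 (ε * μ / 3), by positivity, ?_⟩
    have h0 : (0 : ℝ) < min 1 (ε * μ / 3) := by positivity
    have h1 : (min 1 (ε * μ / 3)) ^ q ≤ 1 := rpow_le_one h0.le (min_le_left _ _) hq.le
    have h2 : (min 1 (ε * μ / 3)) ^ q * min 1 (ε * μ / 3) ≤ 1 * (ε * μ / 3) :=
      mul_le_mul h1 (min_le_right _ _) h0.le zero_le_one
    rw [div_lt_iff₀ hμ]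
    nlinarith [mul_pos hε hμ]
  have hpt : ∀ t, |nl q v t| ≤ η ^ q * η + η⁻¹ * |v t| ^ (q + 2) := by
    intro t
    rw [abs_nl]
    have h0 : 0 ≤ |v t| := abs_nonneg _
    rcases le_total (|v t|) η with h | h
    · have : |v t| ^ q * |v t| ≤ η ^ q * η := by gcongr
      have h2 : 0 ≤ η⁻¹ * |v t| ^ (q + 2) := by positivity
      linarith
    · have hp : 0 < |v t| := hη.trans_le h
      have e : |v t| ^ (q + 2) = |v t| ^ q * |v t| * |v t| := by
        rw [rpow_add hp, rpow_two]; ring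
      have h1 : 1 ≤ η⁻¹ * |v t| := by
        rw [inv_mul_eq_div, one_le_div hη]; exact h
      have h2 : 0 ≤ |v t| ^ q * |v t| := by positivity
      have h3 : 0 ≤ η ^ q * η := by positivity
      rw [e]
      nlinarith
  have htail : Tendsto (fun t : ℝ => η⁻¹ * ∫ s in Set.Ioi t, |v s| ^ (q + 2)) atTop (𝓝 0) := by
    have : Tendsto (fun t : ℝ => ∫ s in Set.Ioi t, |v s| ^ (q + 2)) atTop (𝓝 0) :=
      tendsto_integral_Ioi_zero tendsto_id
    simpa using this.const_mul η⁻¹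
  filter_upwards [htail.eventually_lt_const (show 0 < ε / 2 by linarith)] with t ht
  have hsh := int_shift (fun s => |v s| ^ (q + 2)) t
  have hIt : IntegrableOn (fun x => |v (t + x)| ^ (q + 2)) (Set.Ioi 0) :=
    (hI.comp_add_left t).integrableOn
  have h1 : ‖E 1 μ (nl q v) t‖ ≤ ∫ x in Set.Ioi (0 : ℝ),
      (η ^ q * η * exp (-(μ * x)) + η⁻¹ * |v (t + x)| ^ (q + 2)) := by
    apply norm_integral_le_of_norm_le
    · exact ((intOn_exp hμ 0).const_mul _).add (hIt.const_mul _)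
    · filter_upwards [ae_restrict_mem measurableSet_Ioi] with x hx
      have hx0 : (0 : ℝ) < x := hx
      rw [Real.norm_eq_abs, abs_mul, abs_of_pos (exp_pos _), one_mul]
      have e1 : exp (-(μ * x)) ≤ 1 := exp_le_one_iff.2 (by nlinarith)
      have e2 : 0 ≤ η⁻¹ * |v (t + x)| ^ (q + 2) := by positivity
      nlinarith [mul_le_mul_of_nonneg_left (hpt (t + x)) (exp_pos (-(μ * x))).le]
  rw [integral_add ((intOn_exp hμ 0).const_mul _) (hIt.const_mul _), integral_const_mul,
    int_exp hμ, integral_const_mul, hsh] at h1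
  have : η ^ q * η * (1 / μ) = η ^ q * η / μ := by ring
  linarith

lemma Es_nl_tendsto {m0 q C : ℝ} {v : ℝ → ℝ} (hm : 0 < m0) (hq : 0 < q) (hv : Measurable v)
    (hC : ∀ t, |v t| ≤ C) (hI : Integrable fun t => |v t| ^ (q + 2)) (p : ℕ) :
    Tendsto (Es 1 m0 0 (p + 1) (nl q v)) atTop (𝓝 0) := by
  rw [Es_succ']
  exact Es_tendsto_zero hm (E_meas (nl_meas hv))
    (E_bdd (by positivity) fun t => abs_nl_le hq (hC t)) (E_nl_tendsto (by positivity) hq hI)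
    p 0

/-- A solution of the fixed-point equation tending to `0` at `+∞` decays exponentially. -/
lemma exp_decay {m0 q C α : ℝ} {v : ℝ → ℝ} {D : Set ℝ} {k : ℕ} (hq : 0 < q)
    (hC : ∀ t, |v t| ≤ C) (hα : 0 < α) (hαm : α < m0)
    (heq : ∀ t, v t = Es (-1) m0 0 k (D.indicator (Es 1 m0 0 k (nl q v))) t)
    (h0 : Tendsto v atTop (𝓝 0)) : ∃ K : ℝ, 0 ≤ K ∧ ∀ t, |v t| ≤ K * exp (-(α * t)) := by
  have hC0 : 0 ≤ C := (abs_nonneg _).trans (hC 0)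
  set c := m0 - α with hc
  have hc0 : 0 < c := by simp only [hc]; linarith
  obtain ⟨ε, hε, hε2⟩ : ∃ ε : ℝ, 0 < ε ∧ ε / c ^ k / c ^ k ≤ 1 / 2 := by
    refine ⟨c ^ k * c ^ k / 2, by positivity, le_of_eq ?_⟩
    field_simp
  have h1 : Tendsto (fun t => |v t| ^ q) atTop (𝓝 0) := by
    have := (h0.abs).rpow_const (p := q) (Or.inr hq.le)
    simpa [hq.ne'] using this
  obtain ⟨T, hT⟩ := eventually_atTop.1 (h1.eventually_le_const hε)
  set C1 := C ^ q * C * exp (α * T) with hC1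
  have hC10 : 0 ≤ C1 := by positivity
  -- One pass through the fixed-point equation; near `+∞` the nonlinearity has small slope.
  have pass : ∀ η : ℝ, 0 < η → ∀ K : ℝ, 0 ≤ K → (∀ t, |v t| ≤ K * max (exp (-(α * t))) η) →
      ∀ t, |v t| ≤ (C1 / c ^ k / c ^ k + K / 2) * max (exp (-(α * t))) η := by
    intro η hη K hK hb
    set ρ : ℝ → ℝ := fun t => max (exp (-(α * t))) η with hρ
    have hρ0 : ∀ t, 0 < ρ t := fun t => lt_max_of_lt_right hη
    have hH : ∀ t, |nl q v t| ≤ (C1 + ε * K) * ρ t := by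
      intro t
      rcases le_total T t with h | h
      · rw [abs_nl]
        have : |v t| ^ q * |v t| ≤ ε * (K * ρ t) :=
          mul_le_mul (hT t h) (hb t) (abs_nonneg _) hε.le
        have h3 : 0 ≤ C1 * ρ t := mul_nonneg hC10 (hρ0 t).le
        linarith
      · have h2 : |nl q v t| ≤ C ^ q * C := abs_nl_le hq (hC t)
        have h3 : C ^ q * C ≤ C1 * exp (-(α * t)) := by
          rw [hC1, mul_assoc, ← exp_add]
          exact le_mul_of_one_le_right (by positivity) (one_le_exp (by nlinarith))
        have h4 : C1 * exp (-(α * t)) ≤ C1 * ρ t :=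
          mul_le_mul_of_nonneg_left (le_max_left _ _) hC10
        have h5 : 0 ≤ ε * K * ρ t := mul_nonneg (by positivity) (hρ0 t).le
        linarith
    have gr : ∀ σ : ℝ, (σ = 1 ∨ σ = -1) → ∀ t ∈ Set.univ, ∀ x, 0 ≤ x →
        ρ (t + σ * x) ≤ exp (α * x) * ρ t := by
      intro σ hσ t _ x hx
      have e1 : 1 ≤ exp (α * x) := one_le_exp (by positivity)
      apply max_le
      · have : exp (-(α * (t + σ * x))) ≤ exp (α * x) * exp (-(α * t)) := by
          rw [← exp_add, exp_le_exp]
          rcases hσ with rfl | rfl <;> nlinarith [mul_nonneg hα.le hx]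
        exact this.trans (mul_le_mul_of_nonneg_left (le_max_left _ _) (exp_pos _).le)
      · exact (le_max_right _ _).trans (le_mul_of_one_le_left (hρ0 t).le e1)
    have hW := Es_bound (σ := 1) (m0 := m0) (S := Set.univ) hc0 (by positivity) (fun _ _ _ _ => trivial)
      (gr 1 (Or.inl rfl)) (fun t _ => (hρ0 t).le) (fun t _ => hH t) k 0 (by simp [hc])
    have hV := Es_bound (σ := -1) (m0 := m0) (S := Set.univ) hc0 (by positivity) (fun _ _ _ _ => trivial)
      (gr (-1) (Or.inr rfl)) (fun t _ => (hρ0 t).le)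
      (g := D.indicator (Es 1 m0 0 k (nl q v))) (B := (C1 + ε * K) / c ^ k)
      (fun t _ => abs_indicator_le (mul_nonneg (by positivity) (hρ0 t).le)
        fun _ => hW t trivial) k 0 (by simp [hc])
    intro t
    rw [heq t]
    refine (hV t trivial).trans (mul_le_mul_of_nonneg_right ?_ (hρ0 t).le)
    have : (C1 + ε * K) / c ^ k / c ^ k = C1 / c ^ k / c ^ k + ε / c ^ k / c ^ k * K := by ring
    rw [this]
    nlinarith
  set K1 := C1 / c ^ k / c ^ k
  refine ⟨2 * K1, by positivity, fun t => ?_⟩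
  set η := exp (-(α * t)) with hη
  have hη0 : 0 < η := exp_pos _
  have key : ∀ i : ℕ, ∀ s, |v s| ≤ (2 * K1 + C / η * (1 / 2) ^ i) * max (exp (-(α * s))) η := by
    intro i
    induction i with
    | zero =>
      intro s
      have h3 : 0 ≤ 2 * K1 * max (exp (-(α * s))) η := by positivity
      have h4 : C ≤ C / η * max (exp (-(α * s))) η := by
        calc C = C / η * η := by field_simp
          _ ≤ _ := by gcongr; exact le_max_right _ _
      simp only [pow_zero, mul_one]
      linarith [hC s]
    | succ i ih =>
      intro s
      refine (pass η hη0 _ (by positivity) ih s).trans (le_of_eq ?_)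
      rw [pow_succ]; ring
  have hlim : Tendsto (fun i : ℕ => (2 * K1 + C / η * (1 / 2 : ℝ) ^ i) * max (exp (-(α * t))) η)
      atTop (𝓝 ((2 * K1 + C / η * 0) * max (exp (-(α * t))) η)) :=
    (((tendsto_pow_atTop_nhds_zero_of_lt_one (by norm_num) (by norm_num)).const_mul _).const_add
      _).mul_const _
  have := ge_of_tendsto' hlim (fun i => key i t)
  simpa [← hη] using this

lemma AltAt.strictMono {f : ℝ → ℝ} {m : ℕ} {ε : ℝ} {s : ℕ → ℝ} (h : AltAt f m ε s) {i j : ℕ}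
    (hij : i < j) (hj : j ≤ m) : s i < s j := by
  induction j with
  | zero => omega
  | succ j ih =>
    rcases Nat.lt_or_ge i j with h1 | h1
    · exact (ih h1 (by omega)).trans (h.1 j (by omega))
    · have : i = j := by omega
      subst this; exact h.1 i (by omega)

/-- Arbitrarily long sign alternation produces infinitely many zeros. -/
lemma infinite_zeros {f : ℝ → ℝ} {D : Set ℝ} (hD : IsUpperSet D) (hf : Continuous f)
    (hfD : ∀ t, f t ≠ 0 → t ∈ D) (h : ∀ m, ∃ ε s, AltAt f m ε s) :
    {t | t ∈ D ∧ f t = 0}.Infinite := by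
  intro hfin
  obtain ⟨ε, s, hs⟩ := h (hfin.toFinset.card + 1)
  set m := hfin.toFinset.card + 1
  have hz : ∀ i, ∃ z, i < m → s i < z ∧ z < s (i + 1) ∧ z ∈ D ∧ f z = 0 := by
    intro i
    by_cases hi : i < m
    swap
    · exact ⟨0, fun h => absurd h hi⟩
    have h1 := hs.2 i hi.le
    have h2 := hs.2 (i + 1) hi
    have hsi := hs.1 i hi
    rw [pow_succ] at h2
    obtain ⟨z, hz, hz0⟩ : (0 : ℝ) ∈ (fun t => ε * (-1) ^ i * f t) '' Set.Ioo (s i) (s (i + 1)) := by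
      apply intermediate_value_Ioo' hsi.le (by fun_prop)
      exact ⟨by linarith, h1⟩
    have hne : ε * (-1) ^ i ≠ 0 := by
      intro h0; rw [h0] at h1; simp at h1
    have hfi : f (s i) ≠ 0 := by
      intro h0; rw [h0] at h1; simp at h1
    exact ⟨z, fun _ => ⟨hz.1, hz.2, hD hz.1.le (hfD _ hfi), (mul_eq_zero.1 hz0).resolve_left hne⟩⟩
  choose z hz using hz
  have hmono : ∀ i j, i < j → j < m → z i < z j := by
    intro i j hij hj
    have h1 := (hz i (hij.trans hj)).2.1
    have h2 := (hz j hj).1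
    rcases Nat.lt_or_ge (i + 1) j with h3 | h3
    · exact (h1.trans (hs.strictMono h3 hj.le)).trans h2
    · have : i + 1 = j := by omega
      subst this; exact h1.trans h2
  have hcard : (Finset.range m).card ≤ hfin.toFinset.card := by
    apply Finset.card_le_card_of_injOn z
    · intro i hi
      have := hz i (by simpa using hi)
      simpa using this.2.2
    · intro i hi j hj hij
      simp only [Finset.coe_range, Set.mem_Iio] at hi hj
      rcases lt_trichotomy i j with h | h | h
      · exact absurd hij (hmono i j h hj).ne
      · exact h
      · exact absurd hij (hmono j i h hi).ne'
  rw [Finset.card_range] at hcard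
  omega

/-- A solution of the limit equation `v = Es₋(1_D Es₊(|v|^q v))` has the derivative structure of
a chain of length `2k` ending with `± |v|^q v`. -/
lemma chain_of_eq {m0 q C : ℝ} {v : ℝ → ℝ} {D : Set ℝ} {p : ℕ} (hm : 0 < m0) (hq : 0 < q)
    (hDo : IsOpen D) (hv : Continuous v) (hC : ∀ t, |v t| ≤ C)
    (heq : ∀ t, v t = Es (-1) m0 0 (p + 1) (D.indicator (Es 1 m0 0 (p + 1) (nl q v))) t) :
    ∃ (f : ℕ → ℝ → ℝ) (ρ : ℕ → ℝ), Chain (2 * (p + 1)) f ρ D ∧ f 0 = v ∧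
      (∀ t, |f (2 * (p + 1)) t| = |v t| ^ q * |v t|) ∧
      ∀ j < 2 * (p + 1), |ρ j| ≤ m0 + 2 * p := by
  set W := Es 1 m0 0 (p + 1) (nl q v) with hW
  have hC0 : 0 ≤ C := (abs_nonneg _).trans (hC 0)
  have hHm : Measurable (nl q v) := nl_meas hv.measurable
  have hHc : Continuous (nl q v) := nl_cont hq hv
  have hHb : ∀ t, |nl q v t| ≤ C ^ q * C := fun t => abs_nl_le hq (hC t)
  have hWc : Continuous W := Es_cont (Or.inl rfl) hm hHm hHb p 0
  have hWb : ∀ t, |W t| ≤ C ^ q * C / m0 ^ (p + 1) := Es_bdd hm hHb (p + 1) 0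
  have hGm : Measurable (D.indicator W) := hWc.measurable.indicator hDo.measurableSet
  have hGb : ∀ t, |D.indicator W t| ≤ C ^ q * C / m0 ^ (p + 1) :=
    fun t => abs_indicator_le (by positivity) fun _ => hWb t
  refine ⟨fun j => if j < p + 1 then Es (-1) m0 j (p + 1 - j) (D.indicator W) else
      fun t => (-1) ^ (j - (p + 1)) * Es 1 m0 (j - (p + 1)) (2 * (p + 1) - j) (nl q v) t,
    fun j => if j < p + 1 then -(m0 + 2 * (j : ℝ)) else m0 + 2 * ((j - (p + 1) : ℕ) : ℝ),
    ?_, ?_, ?_, ?_⟩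
  · intro j hj t ht
    by_cases hjk : j < p + 1
    · obtain ⟨r, hr⟩ : ∃ r, p + 1 - j = r + 1 := ⟨p - j, by omega⟩
      simp only [hjk, if_true]
      rw [hr, Es_succ]
      have hcont : ContinuousAt (Es (-1) m0 (j + 1) r (D.indicator W)) t := by
        cases r with
        | zero =>
          refine hWc.continuousAt.congr ?_
          filter_upwards [hDo.mem_nhds ht] with s hs
          rw [Es_zero, Set.indicator_of_mem hs]
        | succ r => exact (Es_cont (Or.inr rfl) hm hGm hGb r _).continuousAt
      refine (E_neg_one_hasDeriv (by positivity) (Es_meas hGm _ _) (Es_bdd hm hGb _ _)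
        hcont).congr_deriv ?_
      have : (if j + 1 < p + 1 then Es (-1) m0 (j + 1) (p + 1 - (j + 1)) (D.indicator W) else
          fun t => (-1) ^ (j + 1 - (p + 1)) * Es 1 m0 (j + 1 - (p + 1)) (2 * (p + 1) - (j + 1))
            (nl q v) t) t = Es (-1) m0 (j + 1) r (D.indicator W) t := by
        split_ifs with h
        · rw [show p + 1 - (j + 1) = r by omega]
        · have hj : j = p := by omega
          subst hj
          have hr0 : r = 0 := by omega
          subst hr0
          simp only [Nat.sub_self, pow_zero, one_mul]
          rw [Es_zero, Set.indicator_of_mem ht, hW, show 2 * (j + 1) - (j + 1) = j + 1 by omega]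
      rw [this]; ring
    · obtain ⟨i, rfl⟩ : ∃ i, j = i + (p + 1) := ⟨j - (p + 1), by omega⟩
      obtain ⟨r, hr⟩ : ∃ r, 2 * (p + 1) - (i + (p + 1)) = r + 1 := ⟨p - i, by omega⟩
      have h2 : ¬ (i + (p + 1) + 1 < p + 1) := by omega
      simp only [hjk, h2, if_false]
      rw [hr, Nat.add_sub_cancel, show i + (p + 1) + 1 - (p + 1) = i + 1 by omega,
        show 2 * (p + 1) - (i + (p + 1) + 1) = r by omega]
      have hcont : ContinuousAt (Es 1 m0 (i + 1) r (nl q v)) t := by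
        cases r with
        | zero => exact hHc.continuousAt
        | succ r => exact (Es_cont (Or.inl rfl) hm hHm hHb r _).continuousAt
      have := (E_one_hasDeriv (μ := m0 + 2 * i) (by positivity) (Es_meas hHm _ _)
        (Es_bdd hm hHb _ _) hcont).const_mul ((-1 : ℝ) ^ i)
      refine this.congr_deriv ?_
      rw [Es_succ, pow_succ]; ring
  · ext t
    simp only [Nat.succ_pos, if_true]
    rw [heq t]; rfl
  · intro t
    have h2 : ¬ (2 * (p + 1) < p + 1) := by omega
    simp only [h2, if_false, Nat.sub_self, Es_zero]
    rw [abs_mul, abs_nl]; simp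
  · intro j hj
    beta_reduce
    split_ifs with h
    · rw [abs_neg, abs_of_nonneg (by positivity)]
      have : (j : ℝ) ≤ p := by exact_mod_cast Nat.lt_succ_iff.1 h
      linarith
    · rw [abs_of_nonneg (by positivity)]
      have : ((j - (p + 1) : ℕ) : ℝ) ≤ p := by exact_mod_cast (by omega : j - (p + 1) ≤ p)
      linarith

/-- The limit problem has no nontrivial solution with vanishing moment over `D`. -/
theorem no_limit {m0 q C : ℝ} {v : ℝ → ℝ} {D : Set ℝ} {p : ℕ} (hm : 0 < m0) (hq : 0 < q)
    (hqm : m0 * q = 2 * (p + 1)) (hDo : IsOpen D) (hD : IsUpperSet D) (hv : Continuous v)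
    (hC : ∀ t, |v t| ≤ C) (hC2 : ∀ t, |v t| ≤ C * exp (m0 * t))
    (hI : Integrable fun t => |v t| ^ (q + 2))
    (heq : ∀ t, v t = Es (-1) m0 0 (p + 1) (D.indicator (Es 1 m0 0 (p + 1) (nl q v))) t)
    (hInt : IntegrableOn (fun s => exp (-(m0 * s)) * Es 1 m0 1 p (nl q v) s) D)
    (hzero : ∫ s in D, exp (-(m0 * s)) * Es 1 m0 1 p (nl q v) s = 0) : ∀ t, v t = 0 := by
  by_contra! hne
  obtain ⟨t0, ht0⟩ := hne
  have hC0 : 0 < C := (abs_pos.2 ht0).trans_le (hC t0)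
  have hvm := hv.measurable
  have hHm : Measurable (nl q v) := nl_meas hvm
  have hHb : ∀ t, |nl q v t| ≤ C ^ q * C := fun t => abs_nl_le hq (hC t)
  set W := Es 1 m0 0 (p + 1) (nl q v) with hW
  have hWc : Continuous W := Es_cont (Or.inl rfl) hm hHm hHb p 0
  have hWb : ∀ t, |W t| ≤ C ^ q * C / m0 ^ (p + 1) := Es_bdd hm hHb (p + 1) 0
  have hGm : Measurable (D.indicator W) := hWc.measurable.indicator hDo.measurableSet
  have hGb : ∀ t, |D.indicator W t| ≤ C ^ q * C / m0 ^ (p + 1) :=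
    fun t => abs_indicator_le (by positivity) fun _ => hWb t
  have hvD : ∀ t, v t ≠ 0 → t ∈ D := by
    intro t ht
    by_contra hc
    exact ht (by rw [heq t]; exact Es_neg_indicator_zero hm hD _ _ _ hc)
  -- Going once around the fixed-point equation gains one sign change, by the vanishing moment.
  have halt : ∀ m, ∃ ε s, AltAt v m ε s := by
    intro m
    induction m with
    | zero =>
      refine ⟨v t0, fun _ => t0, by simp, fun i hi => ?_⟩
      have : i = 0 := by omega
      subst this
      simpa using mul_self_pos.2 ht0
    | succ m ih =>
      obtain ⟨ε, s, hs⟩ := ih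
      rw [show v = Es (-1) m0 0 (p + 1) (D.indicator W) from funext heq] at hs
      obtain ⟨t, ht⟩ := hs.of_Es_neg_one hm hGm hGb
      have htD : ∀ i ≤ m, t i ∈ D := by
        intro i hi
        by_contra hc
        have := ht.2 i hi
        rw [Set.indicator_of_notMem hc] at this
        simp at this
      have ht2 : AltAt (E 1 m0 (Es 1 m0 1 p (nl q v))) m ε t := by
        refine ⟨ht.1, fun i hi => ?_⟩
        have := ht.2 i hi
        rw [Set.indicator_of_mem (htD i hi), hW, Es_succ] at this
        simpa using this
      obtain ⟨r, hr, hrD⟩ := ht2.of_E_one_extra hm (Es_meas hHm _ _) (Es_bdd hm hHb _ _)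
        hDo.measurableSet hD hInt hzero htD
      obtain ⟨x, hx, -⟩ := hr.of_Es_one hm hHm hHb
      refine ⟨-ε, x, hx.1, fun i hi => ?_⟩
      have h1 := hx.2 i hi
      unfold nl at h1
      have h2 : 0 < |v (x i)| ^ q * (-ε * (-1) ^ i * v (x i)) := by linarith
      exact pos_of_mul_pos_right h2 (by positivity)
  have hinf := infinite_zeros hD hv hvD halt
  have hv0 : Tendsto v atTop (𝓝 0) := by
    have h1 := Es_nl_tendsto hm hq hvm hC hI p
    have h2 : Tendsto (D.indicator W) atTop (𝓝 0) := by
      refine squeeze_zero_norm (a := fun t => |W t|) (fun t => ?_) (by simpa using h1.abs)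
      exact abs_indicator_le (abs_nonneg _) fun _ => le_rfl
    rw [show v = Es (-1) m0 0 (p + 1) (D.indicator W) from funext heq]
    exact Es_tendsto_zero hm hGm hGb h2 _ _
  set R := m0 + 2 * (p : ℝ) with hR
  have hR0 : 0 ≤ R := by positivity
  -- `α` is the smallest decay rate admitted by `Chain.rigid`; it is below `m₀` as `m₀ q = 2 (p + 1)`.
  set α := (R + 1) / (q + 1) with hα
  have hα0 : 0 < α := by positivity
  have hαm : α < m0 := by
    rw [hα, div_lt_iff₀ (by positivity), mul_add, hqm, hR]; linarith
  obtain ⟨K, hK0, hK⟩ := exp_decay hq hC hα0 hαm heq hv0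
  obtain ⟨f, ρ, hch, hf0, hfN, hρ⟩ := chain_of_eq hm hq hDo hv hC heq
  have hfin := hch.rigid hD (by omega) hR0 hρ (C := C + K) (by linarith) hq hα0
    (le_of_eq (by rw [hα]; field_simp)) (fun t _ => by rw [hfN, hf0])
    (fun t _ => by rw [hf0]; linarith [hC t]) (fun t _ => ?_) (fun t _ => ?_) (by rwa [hf0])
  · exact ht0 (by rw [← hf0]; exact hfin t0 (hvD t0 ht0))
  · rw [hf0]
    have h3 : C * exp (α * t) ≤ (C + K) * exp (α * t) := by gcongr; linarith
    refine le_trans ?_ h3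
    rcases le_total 0 t with h | h
    · exact (hC t).trans (le_mul_of_one_le_right hC0.le (one_le_exp (by positivity)))
    · refine (hC2 t).trans (mul_le_mul_of_nonneg_left (exp_le_exp.2 ?_) hC0.le)
      nlinarith
  · rw [hf0]
    refine (hK t).trans ?_
    gcongr; linarith

/-! ### Compactness of rescaled solutions -/

lemma exists_subseq {C L : ℝ} {V : ℕ → ℝ → ℝ} {b : ℕ → ℝ} (hV : ∀ i t, |V i t| ≤ C)
    (hL : ∀ i s t, |V i s - V i t| ≤ L * |s - t|) (hb : ∀ i, b i ∈ Set.Icc 0 C) :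
    ∃ φ : ℕ → ℕ, StrictMono φ ∧ ∃ V0 : ℝ → ℝ, ∃ b0 : ℝ,
      (∀ t, Tendsto (fun i => V (φ i) t) atTop (𝓝 (V0 t))) ∧
      Tendsto (fun i => b (φ i)) atTop (𝓝 b0) := by
  have hK : IsCompact ((Set.univ.pi fun _ : ℚ => Set.Icc (-C) C) ×ˢ Set.Icc 0 C) :=
    (isCompact_univ_pi fun _ => isCompact_Icc).prod isCompact_Icc
  obtain ⟨⟨f, b0⟩, -, φ, hφ, hlim⟩ := hK.tendsto_subseq
    (x := fun i => ((fun r : ℚ => V i r), b i))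
    (fun i => ⟨fun r _ => abs_le.1 (hV i r), hb i⟩)
  have h1 := (tendsto_pi_nhds.1 ((continuous_fst.tendsto _).comp hlim))
  have h2 := (continuous_snd.tendsto _).comp hlim
  have hC : ∀ t, CauchySeq fun i => V (φ i) t := by
    intro t
    rw [Metric.cauchySeq_iff]
    intro ε hε
    obtain ⟨δ, hδ, hδL⟩ : ∃ δ > 0, |L| * δ < ε / 3 := by
      refine ⟨ε / 3 / (|L| + 1), by positivity, ?_⟩
      rw [mul_div_assoc', div_lt_iff₀ (by positivity)]
      nlinarith [abs_nonneg L]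
    obtain ⟨r, hr1, hr2⟩ := exists_rat_btwn (show t < t + δ by linarith)
    have hr : ∀ i, |V (φ i) t - V (φ i) r| < ε / 3 := by
      intro i
      refine (hL _ _ _).trans_lt (lt_of_le_of_lt ?_ hδL)
      refine mul_le_mul (le_abs_self _) ?_ (abs_nonneg _) (abs_nonneg _)
      rw [abs_le]; constructor <;> linarith
    obtain ⟨N, hN⟩ := (Metric.cauchySeq_iff.1 (h1 r).cauchySeq) (ε / 3) (by positivity)
    refine ⟨N, fun i hi j hj => ?_⟩
    have h3 := hN i hi j hj
    have h4 := hr i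
    have h5 := hr j
    rw [Real.dist_eq] at h3 ⊢
    simp only [Function.comp] at h3
    rw [abs_lt] at *
    constructor <;> linarith [h3.1, h3.2, h4.1, h4.2, h5.1, h5.2]
  choose V0 hV0 using fun t => cauchySeq_tendsto_of_complete (hC t)
  exact ⟨φ, hφ, V0, b0, hV0, h2⟩

lemma ind_tendsto {a : ℕ → ℝ} {b t : ℝ} {F : ℕ → ℝ → ℝ} {F0 : ℝ → ℝ}
    (ha : Tendsto (fun i => exp (a i)) atTop (𝓝 b)) (ht : exp t ≠ b)
    (hF : Tendsto (fun i => F i t) atTop (𝓝 (F0 t))) :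
    Tendsto (fun i => (Set.Ioi (a i)).indicator (F i) t) atTop
      (𝓝 ({s | b < exp s}.indicator F0 t)) := by
  rcases lt_or_gt_of_ne ht with h | h
  · rw [Set.indicator_of_notMem (by simpa using h.le)]
    refine tendsto_const_nhds.congr' ?_
    filter_upwards [ha.eventually (lt_mem_nhds h)] with i hi
    rw [Set.indicator_of_notMem]
    simpa using (exp_lt_exp.1 hi).le
  · rw [Set.indicator_of_mem (by simpa using h)]
    refine hF.congr' ?_
    filter_upwards [ha.eventually (gt_mem_nhds h)] with i hi
    rw [Set.indicator_of_mem]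
    simpa using (exp_lt_exp.1 hi)

lemma exp_ne_of_ne_log {b t : ℝ} (h : t ≠ log b) : exp t ≠ b := by
  rintro rfl
  simp at h

lemma integrable_exp_neg_abs {c : ℝ} (hc : 0 < c) : Integrable fun s : ℝ => exp (-(c * |s|)) := by
  have h1 : IntegrableOn (fun s : ℝ => exp (-(c * |s|))) (Set.Ioi 0) :=
    (intOn_exp hc 0).congr_fun (fun s hs => by
      beta_reduce
      rw [abs_of_pos (Set.mem_Ioi.1 hs)]) measurableSet_Ioi
  have h2 : IntegrableOn (fun s : ℝ => exp (-(c * |s|))) (Set.Iic 0) :=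
    (integrableOn_exp_mul_Iic hc 0).congr_fun (fun s hs => by
      beta_reduce
      rw [abs_of_nonpos (Set.mem_Iic.1 hs)]; congr 1; ring) measurableSet_Iic
  have := h2.union h1
  rwa [Set.Iic_union_Ioi, integrableOn_univ] at this

/-- Passage to the limit in the moments `∫_{s > aᵢ} e^{-m₀s} Es(hᵢ + eᵢ)(s) ds` when `hᵢ → h₀` under
an exponential envelope and the errors `eᵢ` have size `λᵢ → 0`. -/
lemma moment_tendsto {m0 κ c C1 C2 b B : ℝ} {p : ℕ} {h e : ℕ → ℝ → ℝ} {h0 : ℝ → ℝ}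
    {a lam : ℕ → ℝ} (hm : 0 < m0) (hκ : 0 < κ) (hc : 0 < c) (hc1 : c ≤ 1)
    (hC1 : 0 ≤ C1) (hC2 : 0 ≤ C2)
    (hhm : ∀ i, Measurable (h i)) (hem : ∀ i, Measurable (e i))
    (hhb : ∀ i t, |h i t| ≤ B) (heb : ∀ i t, |e i t| ≤ B)
    (hh : ∀ i t, |h i t| ≤ C1 * exp (m0 * t - c * |t|)) (hl : ∀ i, 0 ≤ lam i)
    (he : ∀ i, ∀ t, a i < t → |e i t| ≤ lam i * C2 * exp (m0 * t - κ * (t - a i)))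
    (hlam : Tendsto lam atTop (𝓝 0)) (hh0 : ∀ t, Tendsto (fun i => h i t) atTop (𝓝 (h0 t)))
    (ha : Tendsto (fun i => exp (a i)) atTop (𝓝 b)) :
    IntegrableOn (fun s => exp (-(m0 * s)) * Es 1 m0 1 p h0 s) {s | b < exp s} ∧
    Tendsto (fun i => ∫ s in Set.Ioi (a i),
        exp (-(m0 * s)) * Es 1 m0 1 p (fun s => h i s + e i s) s) atTop
      (𝓝 (∫ s in {s | b < exp s}, exp (-(m0 * s)) * Es 1 m0 1 p h0 s)) := by
  have hDm : MeasurableSet {s : ℝ | b < exp s} :=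
    measurableSet_lt measurable_const measurable_exp
  have key : ∀ g : ℝ → ℝ, (∀ t, |g t| ≤ C1 * exp (m0 * t - c * |t|)) → ∀ t,
      |exp (-(m0 * t)) * Es 1 m0 1 p g t| ≤ C1 * exp (-(c * |t|)) := by
    intro g hg t
    have := Es_bound (σ := 1) (m0 := m0) (α := m0 + c) (c := 1)
      (ρ := fun t => exp (m0 * t - c * |t|)) (S := Set.univ) one_pos hC1 (fun _ _ _ _ => trivial)
      (fun t _ x hx => by
        rw [← exp_add]
        refine exp_le_exp.2 ?_
        have h1 : |t| ≤ |t + 1 * x| + x := by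
          calc |t| = |(t + 1 * x) - x| := by congr 1; ring
            _ ≤ |t + 1 * x| + |x| := abs_sub _ _
            _ = _ := by rw [abs_of_nonneg hx]
        nlinarith) (fun t _ => (exp_pos _).le) (fun t _ => hg t) p 1
      (by push_cast; linarith) t trivial
    rw [abs_mul, abs_of_pos (exp_pos _)]
    calc _ ≤ exp (-(m0 * t)) * (C1 / 1 ^ p * exp (m0 * t - c * |t|)) := by gcongr
      _ = C1 * (exp (-(m0 * t)) * exp (m0 * t - c * |t|)) := by simp; ring
      _ = _ := by rw [← exp_add]; congr 2; ring
  have hexpm : Measurable fun s : ℝ => exp (-(m0 * s)) := by fun_prop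
  have hlimF : ∀ t, Tendsto (fun i => exp (-(m0 * t)) * Es 1 m0 1 p (h i) t) atTop
      (𝓝 (exp (-(m0 * t)) * Es 1 m0 1 p h0 t)) := fun t =>
    (Es_tendsto (c := t + 1) hm (Or.inl rfl) hhm hhb (fun t _ => hh0 t) p 1 t
      (Or.inl (by simp))).const_mul _
  have hh0m : Measurable h0 := measurable_of_tendsto_metrizable hhm (tendsto_pi_nhds.2 hh0)
  have hh0b : ∀ t, |h0 t| ≤ C1 * exp (m0 * t - c * |t|) := fun t =>
    le_of_tendsto (hh0 t).abs (Eventually.of_forall fun i => hh i t)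
  have hint0 : Integrable (fun s => exp (-(m0 * s)) * Es 1 m0 1 p h0 s) :=
    ((integrable_exp_neg_abs hc).const_mul C1).mono'
      (hexpm.mul (Es_meas hh0m _ _)).aestronglyMeasurable (Eventually.of_forall fun t => key h0 hh0b t)
  have hintF : ∀ i, Integrable (fun s => exp (-(m0 * s)) * Es 1 m0 1 p (h i) s) := fun i =>
    ((integrable_exp_neg_abs hc).const_mul C1).mono'
      (hexpm.mul (Es_meas (hhm i) _ _)).aestronglyMeasurable
      (Eventually.of_forall fun t => key (h i) (hh i) t)
  refine ⟨hint0.integrableOn, ?_⟩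
  have keyE : ∀ i, ∀ t ∈ Set.Ioi (a i),
      |exp (-(m0 * t)) * Es 1 m0 1 p (e i) t| ≤ lam i * C2 * exp (κ * a i) * exp (-(κ * t)) := by
    intro i t ht
    have := Es_bound (σ := 1) (m0 := m0) (α := m0 - κ) (c := 1)
      (ρ := fun t => exp (m0 * t - κ * (t - a i))) (S := Set.Ioi (a i)) one_pos
      (mul_nonneg (hl i) hC2) (S_one (isUpperSet_Ioi _))
      (fun t _ x hx => by
        rw [← exp_add]
        refine exp_le_exp.2 (le_of_eq (by ring))) (fun t _ => (exp_pos _).le) (he i) p 1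
      (by push_cast; linarith) t ht
    rw [abs_mul, abs_of_pos (exp_pos _)]
    calc _ ≤ exp (-(m0 * t)) * (lam i * C2 / 1 ^ p * exp (m0 * t - κ * (t - a i))) := by gcongr
      _ = lam i * C2 * (exp (-(m0 * t)) * exp (m0 * t - κ * (t - a i))) := by simp; ring
      _ = _ := by rw [mul_assoc (lam i * C2), ← exp_add, ← exp_add]; congr 2; ring
  have hintE : ∀ i, IntegrableOn (fun s => exp (-(m0 * s)) * Es 1 m0 1 p (e i) s)
      (Set.Ioi (a i)) := fun i =>
    ((intOn_exp hκ (a i)).const_mul _).mono'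
      (hexpm.mul (Es_meas (hem i) _ _)).aestronglyMeasurable
      (by filter_upwards [ae_restrict_mem measurableSet_Ioi] with t ht using keyE i t ht)
  have hsplit : ∀ i, ∫ s in Set.Ioi (a i),
        exp (-(m0 * s)) * Es 1 m0 1 p (fun s => h i s + e i s) s =
      (∫ s, (Set.Ioi (a i)).indicator (fun s => exp (-(m0 * s)) * Es 1 m0 1 p (h i) s) s) +
        ∫ s in Set.Ioi (a i), exp (-(m0 * s)) * Es 1 m0 1 p (e i) s := by
    intro i
    rw [integral_indicator measurableSet_Ioi, ← integral_add (hintF i).integrableOn (hintE i)]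
    congr 1
    ext s
    rw [Es_add hm (hhm i) (hem i) (hhb i) (heb i)]
    ring
  simp_rw [hsplit]
  rw [← add_zero (∫ s in _, _)]
  refine Tendsto.add ?_ ?_
  · rw [← integral_indicator hDm]
    refine tendsto_integral_of_dominated_convergence (fun t => C1 * exp (-(c * |t|)))
      (fun i => ((hexpm.mul (Es_meas (hhm i) _ _)).indicator measurableSet_Ioi).aestronglyMeasurable)
      ((integrable_exp_neg_abs hc).const_mul C1)
      (fun i => Eventually.of_forall fun t =>
        abs_indicator_le (by positivity) fun _ => key _ (hh i) t) ?_
    have : ∀ᵐ t : ℝ, t ≠ log b := by simp [ae_iff]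
    filter_upwards [this] with t ht
    exact ind_tendsto ha (exp_ne_of_ne_log ht) (hlimF t)
  · refine squeeze_zero_norm (a := fun i => lam i * (C2 / κ)) (fun i => ?_)
      (by simpa using hlam.mul_const (C2 / κ))
    have h1 : ∫ s in Set.Ioi (a i), lam i * C2 * exp (κ * a i) * exp (-(κ * s)) =
        lam i * (C2 / κ) := by
      have := integral_exp_mul_Ioi (a := -κ) (by linarith) (a i)
      simp only [neg_mul] at this
      rw [integral_const_mul, this]
      have h2 : exp (κ * a i) * exp (-(κ * a i)) = 1 := by rw [← exp_add]; simp
      field_simp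
      linear_combination (lam i * C2 ) * h2
    rw [← h1]
    refine norm_integral_le_of_norm_le ((intOn_exp hκ (a i)).const_mul _) ?_
    filter_upwards [ae_restrict_mem measurableSet_Ioi] with t ht using keyE i t ht

/-- The linear term of the equation in logarithmic coordinates, translated by `a`. -/
def er (κ lam a : ℝ) (V : ℝ → ℝ) : ℝ → ℝ :=
  (Set.Ioi a).indicator fun s => lam * exp (-(κ * (s - a))) * V s

/-- A nontrivial radial solution in logarithmic coordinates `t = log (1/|x|) + a`, written as an
integral equation and translated so that the weighted mass of the right-hand side at the
boundary point `t = a` is exactly `e^{m₀ a}`. The field `poho` is the bound coming from the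
Pohozaev identity. -/
structure Sol (m0 q C : ℝ) (p : ℕ) (lam a : ℝ) (V : ℝ → ℝ) : Prop where
  meas : Measurable V
  bdd : ∀ t, |V t| ≤ C
  grow : ∀ t, |V t| ≤ C * exp (m0 * t)
  eq : ∀ t, V t = Es (-1) m0 0 (p + 1) ((Set.Ioi a).indicator
    (Es 1 m0 0 (p + 1) fun s => nl q V s + er (m0 * q) lam a V s)) t
  norm : Es 1 m0 0 (p + 1) (fun s => |nl q V s + er (m0 * q) lam a V s|) a = exp (m0 * a)
  poho : |Es 1 m0 0 (p + 1) (fun s => nl q V s + er (m0 * q) lam a V s) a| ≤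
    C * √lam * exp (m0 * a)
  int : Integrable fun t => |V t| ^ (q + 2)
  int_le : ∫ t, |V t| ^ (q + 2) ≤ C
  exp_le : exp a ≤ C

lemma abs_er_le {κ lam a C : ℝ} {V : ℝ → ℝ} (hκ : 0 ≤ κ) (hl : 0 ≤ lam) (hV : ∀ t, |V t| ≤ C)
    (hC : 0 ≤ C) (t : ℝ) : |er κ lam a V t| ≤ lam * C := by
  refine abs_indicator_le (by positivity) fun ht => ?_
  have ht' : a < t := ht
  rw [abs_mul, abs_mul, abs_of_nonneg hl, abs_of_pos (exp_pos _)]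
  have : exp (-(κ * (t - a))) ≤ 1 := by
    rw [exp_le_one_iff]; nlinarith
  calc lam * exp (-(κ * (t - a))) * |V t| ≤ lam * 1 * C := by gcongr; exact hV t
    _ = _ := by ring

lemma er_meas {κ lam a : ℝ} {V : ℝ → ℝ} (hV : Measurable V) : Measurable (er κ lam a V) :=
  Measurable.indicator (by fun_prop) measurableSet_Ioi

/-- Rescaled solutions cannot persist as `λ → 0`. -/
theorem no_seq {m0 q C : ℝ} {p : ℕ} (hm : 0 < m0) (hq : 0 < q) (hqm : m0 * q = 2 * (p + 1))
    {lam a : ℕ → ℝ} {V : ℕ → ℝ → ℝ} (hl : ∀ i, 0 < lam i) (hl1 : ∀ i, lam i ≤ 1)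
    (hlim : Tendsto lam atTop (𝓝 0)) (hV : ∀ i, Sol m0 q C p (lam i) (a i) (V i)) : False := by
  have hC : 0 < C := (exp_pos _).trans_le (hV 0).exp_le
  have hκ : 0 < m0 * q := by positivity
  set K := C ^ q * C + C with hK
  have hnlm : ∀ i, Measurable (nl q (V i)) := fun i => nl_meas (hV i).meas
  have herm : ∀ i, Measurable (er (m0 * q) (lam i) (a i) (V i)) := fun i => er_meas (hV i).meas
  have hnlb' : ∀ i t, |nl q (V i) t| ≤ C ^ q * C := fun i t => abs_nl_le hq ((hV i).bdd t)
  have herb' : ∀ i t, |er (m0 * q) (lam i) (a i) (V i) t| ≤ lam i * C := fun i t =>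
    abs_er_le hκ.le (hl i).le (hV i).bdd hC.le t
  have hnlb : ∀ i t, |nl q (V i) t| ≤ K := fun i t =>
    (hnlb' i t).trans (by rw [hK]; linarith)
  have herb : ∀ i t, |er (m0 * q) (lam i) (a i) (V i) t| ≤ K := fun i t =>
    (herb' i t).trans (by
      have : 0 ≤ C ^ q * C := by positivity
      nlinarith [hl1 i])
  have hHm : ∀ i, Measurable fun s => nl q (V i) s + er (m0 * q) (lam i) (a i) (V i) s :=
    fun i => (hnlm i).add (herm i)
  have hHb : ∀ i t, |nl q (V i) t + er (m0 * q) (lam i) (a i) (V i) t| ≤ K := fun i t =>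
    (abs_add_le _ _).trans (by rw [hK]; nlinarith [hnlb' i t, herb' i t, hl1 i])
  have hK0 : 0 ≤ K := by positivity
  -- Uniform Lipschitz bounds give a convergent subsequence.
  have hGb : ∀ i t, |(Set.Ioi (a i)).indicator (Es 1 m0 0 (p + 1) fun s => nl q (V i) s +
      er (m0 * q) (lam i) (a i) (V i) s) t| ≤ K / m0 ^ (p + 1) := fun i t =>
    abs_indicator_le (by positivity) fun _ => Es_bdd hm (hHb i) _ _ t
  have hGm : ∀ i, Measurable ((Set.Ioi (a i)).indicator (Es 1 m0 0 (p + 1) fun s => nl q (V i) s +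
      er (m0 * q) (lam i) (a i) (V i) s)) := fun i => (Es_meas (hHm i) _ _).indicator measurableSet_Ioi
  have hLip : ∀ i s t, |V i s - V i t| ≤ 2 * (K / m0 ^ (p + 1) / m0 ^ p) * |s - t| := by
    intro i s t
    rw [(hV i).eq s, (hV i).eq t, Es_succ]
    refine E_lip (Or.inr rfl) (by positivity) (Es_meas (hGm i) _ _) (Es_bdd hm (hGb i) _ _) s t
  obtain ⟨φ, hφ, V0, b, hV0, hb⟩ := exists_subseq (b := fun i => exp (a i)) (fun i => (hV i).bdd) hLip
    (fun i => ⟨(exp_pos _).le, (hV i).exp_le⟩)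
  have hlφ : Tendsto (fun i => lam (φ i)) atTop (𝓝 0) := hlim.comp hφ.tendsto_atTop
  have hV0b : ∀ t, |V0 t| ≤ C := fun t =>
    le_of_tendsto (hV0 t).abs (Eventually.of_forall fun i => (hV _).bdd t)
  have hV0g : ∀ t, |V0 t| ≤ C * exp (m0 * t) := fun t =>
    le_of_tendsto (hV0 t).abs (Eventually.of_forall fun i => (hV _).grow t)
  have hV0c : Continuous V0 := cont_of_lip (C := 2 * (K / m0 ^ (p + 1) / m0 ^ p)) fun s t =>
    le_of_tendsto ((hV0 s).sub (hV0 t)).abs (Eventually.of_forall fun i => hLip _ s t)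
  have hnl : ∀ t, Tendsto (fun i => nl q (V (φ i)) t) atTop (𝓝 (nl q V0 t)) := fun t =>
    ((hV0 t).abs.rpow_const (Or.inr hq.le)).mul (hV0 t)
  have her : ∀ t, Tendsto (fun i => er (m0 * q) (lam (φ i)) (a (φ i)) (V (φ i)) t) atTop (𝓝 0) :=
    fun t => squeeze_zero_norm (fun i => herb' _ t) (by simpa using hlφ.mul_const C)
  have hH : ∀ t, Tendsto (fun i => nl q (V (φ i)) t +
      er (m0 * q) (lam (φ i)) (a (φ i)) (V (φ i)) t) atTop (𝓝 (nl q V0 t)) := fun t => by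
    simpa using (hnl t).add (her t)
  -- The limit domain is a half-line `(log b, ∞)`, or all of `ℝ` when `b = lim exp aᵢ` is `0`.
  set D : Set ℝ := {s | b < exp s} with hD
  have hDo : IsOpen D := isOpen_lt continuous_const continuous_exp
  have hDu : IsUpperSet D := fun s t hst hs => lt_of_lt_of_le hs (exp_le_exp.2 hst)
  have heq0 : ∀ t, V0 t = Es (-1) m0 0 (p + 1) (D.indicator (Es 1 m0 0 (p + 1) (nl q V0))) t := by
    intro t
    refine tendsto_nhds_unique (hV0 t) ?_
    simp_rw [fun i => (hV (φ i)).eq t]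
    refine Es_tendsto (c := log b) hm (Or.inr rfl) (fun i => hGm _) (fun i => hGb _)
      (fun s hs => ?_) _ _ t (Or.inr (Nat.succ_ne_zero p))
    refine ind_tendsto hb (exp_ne_of_ne_log hs) ?_
    exact Es_tendsto (c := s + 1) hm (Or.inl rfl) (fun i => hHm _) (fun i => hHb _)
      (fun s _ => hH s) _ _ s (Or.inl (by simp))
  have hI0 : Integrable fun t => |V0 t| ^ (q + 2) := by
    refine integrable_of_tendsto (G := fun i t => |V (φ i) t| ^ (q + 2))
      (Eventually.of_forall fun t => (hV0 t).abs.rpow_const (Or.inr (by positivity)))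
      (fun i => (hV _).int.aestronglyMeasurable) ?_
    refine ne_top_of_le_ne_top ENNReal.ofReal_ne_top (b := ENNReal.ofReal C) ?_
    refine liminf_le_of_frequently_le' (Frequently.of_forall fun i => ?_)
    rw [← ofReal_integral_norm_eq_lintegral_enorm (hV _).int]
    refine ENNReal.ofReal_le_ofReal ?_
    refine le_trans (le_of_eq ?_) (hV (φ i)).int_le
    congr 1; ext t; rw [Real.norm_eq_abs, abs_of_nonneg (by positivity)]
  -- An envelope making the moments of the nonlinearity converge, uniformly at both ends.
  set c := min m0 1 with hc
  have hc0 : 0 < c := lt_min hm one_pos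
  have hc1 : c ≤ 1 := min_le_right _ _
  have hcm : c ≤ m0 := min_le_left _ _
  have hcκ : c ≤ m0 * q := by
    rw [hqm]; have : (0 : ℝ) ≤ p := by positivity
    linarith
  have henv : ∀ i t, |nl q (V i) t| ≤ C ^ q * C * exp (m0 * t - c * |t|) := by
    intro i t
    rcases le_total 0 t with ht | ht
    · refine (hnlb' i t).trans (le_mul_of_one_le_right (by positivity) (one_le_exp ?_))
      rw [abs_of_nonneg ht]; nlinarith
    · rw [abs_nl]
      calc |V i t| ^ q * |V i t| ≤ (C * exp (m0 * t)) ^ q * (C * exp (m0 * t)) := by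
            have := (hV i).grow t
            gcongr
        _ = C ^ q * C * exp (m0 * q * t + m0 * t) := by
            rw [mul_rpow hC.le (exp_pos _).le, ← exp_mul, exp_add]
            rw [show m0 * t * q = m0 * q * t by ring]; ring
        _ ≤ _ := by
            gcongr
            rw [abs_of_nonpos ht]; nlinarith
  have here : ∀ i, ∀ t, a i < t → |er (m0 * q) (lam i) (a i) (V i) t| ≤
      lam i * C * exp (m0 * t - m0 * q * (t - a i)) := by
    intro i t ht
    rw [er, Set.indicator_of_mem (Set.mem_Ioi.2 ht), abs_mul, abs_mul, abs_of_pos (hl i), abs_of_pos (exp_pos _)]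
    calc _ ≤ lam i * exp (-(m0 * q * (t - a i))) * (C * exp (m0 * t)) := by
          gcongr
          · exact mul_nonneg (hl i).le (exp_pos _).le
          · exact (hV i).grow t
      _ = lam i * C * (exp (m0 * t) * exp (-(m0 * q * (t - a i)))) := by ring
      _ = _ := by rw [← exp_add]; rfl
  have hmom : ∀ (i : ℕ) (g : ℝ → ℝ), exp (-(m0 * a i)) * Es 1 m0 0 (p + 1) g (a i) =
      ∫ s in Set.Ioi (a i), exp (-(m0 * s)) * Es 1 m0 1 p g s := by
    intro i g
    rw [Es_succ, E_one_eq, ← mul_assoc, ← exp_add]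
    simp
  obtain ⟨hInt, hm1⟩ := moment_tendsto (C1 := C ^ q * C) (p := p) hm hκ hc0 hc1 (by positivity) hC.le
    (fun i => hnlm (φ i)) (fun i => herm (φ i)) (fun i => hnlb (φ i)) (fun i => herb (φ i))
    (fun i => henv (φ i)) (fun i => (hl (φ i)).le) (fun i => here (φ i)) hlφ hnl hb
  have habs : ∀ i t, |(|nl q (V i) t + er (m0 * q) (lam i) (a i) (V i) t| - |nl q (V i) t|)| ≤
      |er (m0 * q) (lam i) (a i) (V i) t| := fun i t => by
    refine (abs_abs_sub_abs_le _ _).trans (le_of_eq ?_)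
    congr 1; ring
  obtain ⟨hInt', hm2⟩ := moment_tendsto (C1 := C ^ q * C) (p := p) (h0 := fun t => |nl q V0 t|)
    hm hκ hc0 hc1 (by positivity) hC.le
    (h := fun i t => |nl q (V (φ i)) t|)
    (e := fun i t => |nl q (V (φ i)) t + er (m0 * q) (lam (φ i)) (a (φ i)) (V (φ i)) t| -
      |nl q (V (φ i)) t|) (a := fun i => a (φ i))
    (fun i => (hnlm (φ i)).abs) (fun i => (hHm (φ i)).abs.sub (hnlm (φ i)).abs)
    (fun i t => by rw [abs_abs]; exact hnlb (φ i) t)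
    (fun i t => (habs _ t).trans (herb (φ i) t))
    (fun i t => by rw [abs_abs]; exact henv (φ i) t) (fun i => (hl (φ i)).le)
    (fun i t ht => (habs _ t).trans (here (φ i) t ht)) hlφ (fun t => (hnl t).abs) hb
  simp only [add_sub_cancel] at hm2
  simp_rw [← hmom] at hm1 hm2
  have hone : ∀ i, exp (-(m0 * a i)) * exp (m0 * a i) = 1 := fun i => by rw [← exp_add]; simp
  simp_rw [fun i => (hV (φ i)).norm, hone] at hm2
  -- The signed moments vanish in the limit by `poho`, whereas the absolute moments all equal `1`.
  have hzero : ∫ s in D, exp (-(m0 * s)) * Es 1 m0 1 p (nl q V0) s = 0 := by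
    refine tendsto_nhds_unique hm1 (squeeze_zero_norm (a := fun i => C * √(lam (φ i))) ?_ ?_)
    · intro i
      rw [Real.norm_eq_abs, abs_mul, abs_of_pos (exp_pos _)]
      calc _ ≤ exp (-(m0 * a (φ i))) * (C * √(lam (φ i)) * exp (m0 * a (φ i))) := by
            gcongr; exact (hV (φ i)).poho
        _ = C * √(lam (φ i)) * (exp (-(m0 * a (φ i))) * exp (m0 * a (φ i))) := by ring
        _ = _ := by rw [hone, mul_one]
    · simpa using (hlφ.sqrt).const_mul C
  have hfin := no_limit hm hq hqm hDo hDu hV0c hV0b hV0g hI0 heq0 hInt hzero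
  have h1 := tendsto_nhds_unique hm2 tendsto_const_nhds
  have h2 : ∀ s, Es 1 m0 1 p (fun t => |nl q V0 t|) s = 0 := by
    intro s
    have h3 : (fun t => |nl q V0 t|) = fun t => (0 : ℝ) * (0 : ℝ) := by
      ext t; rw [abs_nl, hfin]; simp
    rw [h3, Es_smul]; simp
  simp [h2] at h1

/-! ### Triviality for small `λ` -/

/-- A radial solution in logarithmic coordinates, extended by zero beyond the boundary `t = 0`:
the integral equation, the energy bound, and the Pohozaev identity (as an inequality). -/
structure Pre (m0 q M : ℝ) (p : ℕ) (lam : ℝ) (f : ℝ → ℝ) : Prop where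
  meas : Measurable f
  bdd : ∃ B, ∀ t, |f t| ≤ B
  eq : ∀ t, f t = Es (-1) m0 0 (p + 1) ((Set.Ioi 0).indicator
    (Es 1 m0 0 (p + 1) fun s => nl q f s + er (m0 * q) lam 0 f s)) t
  int : Integrable fun t => |f t| ^ (q + 2)
  int_le : ∫ t, |f t| ^ (q + 2) ≤ M
  poho : (Es 1 m0 0 (p + 1) (fun s => nl q f s + er (m0 * q) lam 0 f s) 0) ^ 2 ≤
    m0 * q * lam * ∫ t in Set.Ioi 0, exp (-(m0 * q * t)) * f t ^ 2

lemma pow_le_two_add {q x : ℝ} (hq : 0 < q) (hx : 0 ≤ x) : x ^ q * x + x ≤ 2 + 2 * x ^ (q + 2) := by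
  have h0 : 0 ≤ x ^ (q + 2) := by positivity
  rcases le_total x 1 with h | h
  · have : x ^ q ≤ 1 := rpow_le_one hx h hq.le
    nlinarith [rpow_nonneg hx q]
  · have h1 : x ^ q * x = x ^ (q + 1) := by rw [rpow_add (by linarith), rpow_one]
    have h2 : x ^ (q + 1) ≤ x ^ (q + 2) := rpow_le_rpow_of_exponent_le h (by linarith)
    have h3 : x ^ (1 : ℝ) ≤ x ^ (q + 2) := rpow_le_rpow_of_exponent_le h (by linarith)
    rw [rpow_one] at h3
    linarith

/-- The energy bounds the averaged right-hand side: the innermost average is controlled by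
`|v|^(q+1) + |v| ≤ 2 + 2 |v|^(q+2)`. -/
lemma Pre.sup_bound {m0 q M lam : ℝ} {p : ℕ} {f : ℝ → ℝ} (hm : 0 < m0) (hq : 0 < q)
    (hl : 0 < lam) (hl1 : lam ≤ 1) (hf : Pre m0 q M p lam f) (t : ℝ) :
    Es 1 m0 0 (p + 1) (fun s => |nl q f s + er (m0 * q) lam 0 f s|) t ≤
      (2 / m0 + 2 * M) / m0 ^ p := by
  obtain ⟨B, hB⟩ := hf.bdd
  have hB0 : 0 ≤ B := (abs_nonneg _).trans (hB 0)
  have hκ : 0 < m0 * q := by positivity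
  have hHm : Measurable fun s => |nl q f s + er (m0 * q) lam 0 f s| :=
    ((nl_meas hf.meas).add (er_meas hf.meas)).abs
  have hle : ∀ s, |nl q f s + er (m0 * q) lam 0 f s| ≤ 2 + 2 * |f s| ^ (q + 2) := by
    intro s
    refine le_trans ?_ (pow_le_two_add hq (abs_nonneg (f s)))
    refine (abs_add_le _ _).trans (add_le_add (le_of_eq (abs_nl _ _)) ?_)
    refine abs_indicator_le (abs_nonneg _) fun hs => ?_
    have hs' : 0 < s := hs
    rw [abs_mul]
    refine mul_le_of_le_one_left (abs_nonneg _) ?_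
    rw [abs_of_pos (by positivity)]
    refine mul_le_one₀ hl1 (exp_pos _).le ?_
    rw [exp_le_one_iff]; nlinarith
  have hμ : 0 < m0 + 2 * (((0 : ℕ) + p : ℕ) : ℝ) := by positivity
  have hM : 0 ≤ M := (integral_nonneg fun t => by positivity).trans hf.int_le
  have hE : ∀ s, |E 1 (m0 + 2 * (((0 : ℕ) + p : ℕ) : ℝ))
      (fun s => |nl q f s + er (m0 * q) lam 0 f s|) s| ≤ 2 / m0 + 2 * M := by
    intro s
    have hi1 : IntegrableOn (fun x => 2 * exp (-(m0 * x)) + 2 * |f (s + x)| ^ (q + 2))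
        (Set.Ioi 0) :=
      ((intOn_exp hm 0).const_mul 2).add ((hf.int.comp_add_left s).const_mul 2).integrableOn
    have hi2 : ∫ x in Set.Ioi (0 : ℝ), (2 * exp (-(m0 * x)) + 2 * |f (s + x)| ^ (q + 2)) ≤
        2 / m0 + 2 * M := by
      rw [integral_add ((intOn_exp hm 0).const_mul 2)
        ((hf.int.comp_add_left s).const_mul 2).integrableOn, integral_const_mul,
        integral_const_mul, int_exp hm]
      have : ∫ x in Set.Ioi (0 : ℝ), |f (s + x)| ^ (q + 2) ≤ M := by
        refine le_trans ?_ hf.int_le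
        rw [← integral_add_left_eq_self (fun t => |f t| ^ (q + 2)) s]
        exact setIntegral_le_integral (hf.int.comp_add_left s)
          (Eventually.of_forall fun x => by positivity)
      have h2 : 2 * (1 / m0) = 2 / m0 := by ring
      linarith
    refine le_trans ?_ hi2
    rw [← Real.norm_eq_abs]
    refine norm_integral_le_of_norm_le hi1 ?_
    filter_upwards [ae_restrict_mem measurableSet_Ioi] with x hx
    have hx0 : 0 < x := hx
    rw [Real.norm_eq_abs, abs_mul, abs_of_pos (exp_pos _), abs_abs, one_mul]
    have h1 : exp (-((m0 + 2 * (((0 : ℕ) + p : ℕ) : ℝ)) * x)) ≤ exp (-(m0 * x)) := by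
      refine exp_le_exp.2 ?_
      have : 0 ≤ 2 * (((0 : ℕ) + p : ℕ) : ℝ) * x := by positivity
      nlinarith
    have h2 : exp (-(m0 * x)) ≤ 1 := by rw [exp_le_one_iff]; nlinarith
    have h3 : 0 ≤ |f (s + x)| ^ (q + 2) := by positivity
    calc _ ≤ exp (-(m0 * x)) * (2 + 2 * |f (s + x)| ^ (q + 2)) := by
          gcongr; exact hle _
      _ ≤ _ := by nlinarith
  rw [Es_succ']
  exact (le_abs_self _).trans (Es_bdd hm hE p 0 t)

/-- Rescaling a nontrivial solution by its weighted mass gives a normalized solution, with a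
constant depending only on the parameters and the energy bound. -/
lemma exists_sol {m0 q M : ℝ} {p : ℕ} (hm : 0 < m0) (hq : 0 < q) (hmq : 2 * m0 < m0 * q)
    (hM : 0 ≤ M) :
    ∃ C : ℝ, ∀ lam f, 0 < lam → lam ≤ 1 → Pre m0 q M p lam f → (∀ t, f t = 0) ∨
      ∃ a V, Sol m0 q C p lam a V := by
  set κ := m0 * q with hκd
  have hκ : 0 < κ := by positivity
  set CA := (2 / m0 + 2 * M) / m0 ^ p with hCA
  have hCA0 : 0 ≤ CA := by positivity
  set c := 1 / (2 * m0) ^ (p + 1) with hc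
  have hc0 : 0 < c := by positivity
  set C := CA / m0 ^ (p + 1) + c + √(κ * c ^ 2 / (κ - 2 * m0)) + M + exp (log CA / m0) with hC
  have p1 : 0 ≤ CA / m0 ^ (p + 1) := by positivity
  have p3 : 0 ≤ √(κ * c ^ 2 / (κ - 2 * m0)) := sqrt_nonneg _
  have p4 : 0 ≤ exp (log CA / m0) := (exp_pos _).le
  refine ⟨C, fun lam f hl hl1 hf => ?_⟩
  obtain ⟨B, hB⟩ := hf.bdd
  have hB0 : 0 ≤ B := (abs_nonneg _).trans (hB 0)
  set H : ℝ → ℝ := fun s => nl q f s + er κ lam 0 f s with hH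
  have hHm : Measurable H := (nl_meas hf.meas).add (er_meas hf.meas)
  have hHb : ∀ t, |H t| ≤ B ^ q * B + lam * B := fun t =>
    (abs_add_le _ _).trans (add_le_add (abs_nl_le hq (hB t)) (abs_er_le hκ.le hl.le hB hB0 t))
  have hsup : ∀ t, Es 1 m0 0 (p + 1) (fun s => |H s|) t ≤ CA := hf.sup_bound hm hq hl hl1
  set A := Es 1 m0 0 (p + 1) (fun s => |H s|) 0 with hA
  have hA0 : 0 ≤ A := Es_nonneg (fun s => abs_nonneg _) _ _ _
  have hHb' : ∀ t, |(|H t|)| ≤ B ^ q * B + lam * B := fun t => by rw [abs_abs]; exact hHb t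
  have hWA : ∀ s, 0 ≤ s → Es 1 m0 0 (p + 1) (fun s => |H s|) s ≤ exp (m0 * s) * A := by
    intro s hs
    rw [hA, Es_succ, E_one_eq, E_one_eq]
    simp only [Nat.cast_zero, mul_zero, add_zero, exp_zero, one_mul]
    have hi := Ioi_intOn (t := 0) hm (Es_meas (σ := 1) (m0 := m0) hHm.abs p (0 + 1))
      (Es_bdd hm hHb' p (0 + 1))
    refine mul_le_mul_of_nonneg_left ?_ (exp_pos _).le
    refine setIntegral_mono_set hi (Eventually.of_forall fun x => ?_)
      (Set.Ioi_subset_Ioi hs).eventuallyLE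
    exact mul_nonneg (exp_pos _).le (Es_nonneg (fun s => abs_nonneg _) _ _ _)
  have hW : ∀ s, |Es 1 m0 0 (p + 1) H s| ≤ Es 1 m0 0 (p + 1) (fun s => |H s|) s :=
    fun s => abs_Es_le hm hHm hHb _ _ _
  -- The weighted mass `A` controls the growth of `f` away from the boundary.
  have hgrow : ∀ t, |f t| ≤ A * c * exp (m0 * t) := by
    intro t
    rw [hf.eq t]
    have := Es_bound (σ := -1) (m0 := m0) (α := -m0) (c := 2 * m0) (B := A)
      (g := (Set.Ioi 0).indicator (Es 1 m0 0 (p + 1) H))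
      (ρ := fun t => exp (m0 * t)) (S := Set.univ) (by positivity) hA0 (fun _ _ _ _ => trivial)
      (fun t _ x hx => by
        rw [← exp_add]
        exact exp_le_exp.2 (le_of_eq (by ring))) (fun t _ => (exp_pos _).le)
      (fun t _ => abs_indicator_le (by positivity) fun ht => (hW t).trans
        ((hWA t (le_of_lt ht)).trans (le_of_eq (mul_comm _ _)))) (p + 1) 0
      (by push_cast; linarith) t trivial
    refine this.trans (le_of_eq ?_)
    rw [hc]; ring
  rcases hA0.eq_or_lt with hAz | hAp
  · left
    intro t
    have := hgrow t
    rw [← hAz] at this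
    simpa using this
  right
  have hbdd : ∀ t, |f t| ≤ CA / m0 ^ (p + 1) := by
    intro t
    rw [hf.eq t]
    exact Es_bdd hm (fun s => abs_indicator_le hCA0 fun _ => (hW s).trans (hsup s)) _ _ _
  -- Translation by `a = log A / m₀` normalizes the weighted mass to `e^{m₀ a}`.
  have hea : exp (m0 * (log A / m0)) = A := by
    rw [mul_div_cancel₀ _ hm.ne', exp_log hAp]
  set a := log A / m0 with ha
  -- The weighted integral of `f²` converges at the rate `κ - 2 m₀ > 0`.
  have hpoho : |Es 1 m0 0 (p + 1) H 0| ≤ √(κ * c ^ 2 / (κ - 2 * m0)) * √lam * A := by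
    rw [← sqrt_sq_eq_abs, ← sqrt_sq hAp.le, ← sqrt_mul (by
      have : 0 < κ - 2 * m0 := by linarith
      positivity), ← sqrt_mul' _ (by positivity)]
    refine sqrt_le_sqrt (hf.poho.trans ?_)
    have h1 : ∫ t in Set.Ioi (0 : ℝ), exp (-(κ * t)) * f t ^ 2 ≤
        (A * c) ^ 2 * (1 / (κ - 2 * m0)) := by
      rw [← int_exp (by linarith), ← integral_const_mul]
      refine le_trans (le_abs_self _) ?_
      rw [← Real.norm_eq_abs]
      refine norm_integral_le_of_norm_le ((intOn_exp (by linarith) 0).const_mul _) ?_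
      refine Eventually.of_forall fun t => ?_
      rw [Real.norm_eq_abs, abs_of_nonneg (by positivity), ← sq_abs (f t)]
      calc exp (-(κ * t)) * |f t| ^ 2 ≤ exp (-(κ * t)) * (A * c * exp (m0 * t)) ^ 2 := by
            have := hgrow t
            gcongr
        _ = (A * c) ^ 2 * (exp (-(κ * t)) * (exp (m0 * t) * exp (m0 * t))) := by ring
        _ = _ := by rw [← exp_add, ← exp_add]; congr 2; ring
    calc κ * lam * ∫ t in Set.Ioi (0 : ℝ), exp (-(κ * t)) * f t ^ 2
        ≤ κ * lam * ((A * c) ^ 2 * (1 / (κ - 2 * m0))) := by gcongr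
      _ = _ := by ring
  have hHs : (fun s => nl q (fun t => f (t - a)) s + er κ lam a (fun t => f (t - a)) s) =
      fun s => H (s - a) := by
    ext s
    simp only [hH, nl, er, Set.indicator_apply, Set.mem_Ioi, sub_pos, sub_zero]
  refine ⟨a, fun t => f (t - a), ⟨hf.meas.comp (by fun_prop), fun t => (hbdd _).trans ?_,
    fun t => (hgrow _).trans ?_, fun t => ?_, ?_, ?_, hf.int.comp_sub_right a, ?_, ?_⟩⟩
  · linarith
  · rw [show m0 * (t - a) = -(m0 * a) + m0 * t by ring, exp_add, exp_neg, hea]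
    have : A * c * (A⁻¹ * exp (m0 * t)) = c * exp (m0 * t) := by field_simp
    rw [this]
    gcongr; linarith
  · rw [hHs, Es_shift, hf.eq (t - a)]
    rw [← congrFun (Es_shift (-1) m0 a _ (p + 1) 0) t]
    congr 1
    ext s
    simp only [Set.indicator_apply, Set.mem_Ioi, sub_pos]
    rfl
  · have : (fun s => |nl q (fun t => f (t - a)) s + er κ lam a (fun t => f (t - a)) s|) =
        fun s => |H (s - a)| := by
      ext s; exact congrArg _ (congrFun hHs s)
    rw [this, Es_shift 1 m0 a (fun s => |H s|), hea]
    simp only [sub_self]; rfl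
  · rw [hHs, Es_shift, hea]
    simp only [sub_self]
    refine hpoho.trans ?_
    gcongr; linarith
  · rw [integral_sub_right_eq_self (fun t => |f t| ^ (q + 2)) a]
    exact hf.int_le.trans (by linarith)
  · have : exp a ≤ exp (log CA / m0) := by
      refine exp_le_exp.2 ?_
      rw [ha]
      gcongr
      exact hsup 0
    linarith

/-- Triviality of solutions with bounded energy for all sufficiently small `λ`. -/
theorem exists_lam {m0 q M : ℝ} {p : ℕ} (hm : 0 < m0) (hq : 0 < q) (hmq : 2 * m0 < m0 * q)
    (hqm : m0 * q = 2 * (p + 1)) (hM : 0 ≤ M) :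
    ∃ lam0 > 0, ∀ lam f, 0 < lam → lam < lam0 → Pre m0 q M p lam f → ∀ t, f t = 0 := by
  obtain ⟨C, hC⟩ := exists_sol (p := p) hm hq hmq hM
  by_contra! hcon
  have h1 : ∀ i : ℕ, ∃ lam : ℝ, 0 < lam ∧ lam < 1 / ((i : ℝ) + 1) ∧ ∃ a V, Sol m0 q C p lam a V := by
    intro i
    obtain ⟨lam, f, hl, hl1, hf, t, ht⟩ := hcon (1 / ((i : ℝ) + 1)) (by positivity)
    have hi : 1 / ((i : ℝ) + 1) ≤ 1 := by
      rw [div_le_one (by positivity)]; linarith [Nat.cast_nonneg (α := ℝ) i]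
    exact ⟨lam, hl, hl1, (hC lam f hl (hl1.le.trans hi) hf).resolve_left fun h => ht (h t)⟩
  choose lam hl hl1 a V hS using h1
  refine no_seq hm hq hqm hl (fun i => (hl1 i).le.trans ?_) ?_ hS
  · rw [div_le_one (by positivity)]; linarith [Nat.cast_nonneg (α := ℝ) i]
  · exact squeeze_zero (fun i => (hl i).le) (fun i => (hl1 i).le)
      tendsto_one_div_add_atTop_nhds_zero_nat

/-! ### Factorized operators in logarithmic coordinates -/

/-- The profile `ψ` written in logarithmic coordinates, with the Emden–Fowler weight. -/
def Ph (m0 : ℝ) (ψ : ℝ → ℝ) : ℝ → ℝ := fun t => exp (-(m0 * t)) * ψ (exp (-t))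

/-- The operator on profiles conjugate to `d/dt + c` under `Ph`. -/
def La (m0 c : ℝ) (ψ : ℝ → ℝ) : ℝ → ℝ := fun x => (c - m0) * ψ x - x * deriv ψ x

/-- Composition of the operators `La m0 c` for `c` in the list, the head being applied last. -/
def Las (m0 : ℝ) (l : List ℝ) (ψ : ℝ → ℝ) : ℝ → ℝ := l.foldr (La m0) ψ

/-- The exponents `m₀ + 2j, …, m₀ + 2(j + m - 1)`. -/
def up (m0 : ℝ) : ℕ → ℕ → List ℝ
  | _, 0 => []
  | j, m + 1 => (m0 + 2 * j) :: up m0 (j + 1) m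

/-- Vanishing to order `m` at the point `1`. -/
def Van : ℕ → (ℝ → ℝ) → Prop
  | 0, _ => True
  | m + 1, ψ => ψ 1 = 0 ∧ Van m (deriv ψ)

lemma up_length (m0 : ℝ) (j m : ℕ) : (up m0 j m).length = m := by
  induction m generalizing j with
  | zero => rfl
  | succ m ih => simp [up, ih]

@[simp] lemma Las_nil (m0 : ℝ) (ψ : ℝ → ℝ) : Las m0 [] ψ = ψ := rfl

@[simp] lemma Las_cons (m0 c : ℝ) (l : List ℝ) (ψ : ℝ → ℝ) :
    Las m0 (c :: l) ψ = La m0 c (Las m0 l ψ) := rfl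

lemma Las_append (m0 : ℝ) (l l' : List ℝ) (ψ : ℝ → ℝ) :
    Las m0 (l ++ l') ψ = Las m0 l (Las m0 l' ψ) := by
  simp [Las]

lemma Ph_hasDeriv {m0 c t : ℝ} {ψ : ℝ → ℝ} (hψ : Differentiable ℝ ψ) :
    HasDerivAt (Ph m0 ψ) (Ph m0 (La m0 c ψ) t - c * Ph m0 ψ t) t := by
  have h1 : HasDerivAt (fun t : ℝ => exp (-t)) (-exp (-t)) t := by
    simpa using (hasDerivAt_neg t).exp
  have h2 : HasDerivAt (fun t : ℝ => exp (-(m0 * t))) (exp (-(m0 * t)) * -m0) t := by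
    simpa using (((hasDerivAt_id t).const_mul m0).neg).exp
  have h3 := (hψ (exp (-t))).hasDerivAt.comp t h1
  refine (h2.mul h3).congr_deriv ?_
  simp only [Ph, La, Function.comp]
  ring

lemma La_contDiff {m0 c : ℝ} {m : ℕ} {ψ : ℝ → ℝ} (hψ : ContDiff ℝ (m + 1 : ℕ) ψ) :
    ContDiff ℝ m (La m0 c ψ) := by
  have h1 : ContDiff ℝ m ψ := hψ.of_le (by exact_mod_cast Nat.le_succ m)
  have h2 : ContDiff ℝ m (deriv ψ) := by
    have := (contDiff_succ_iff_deriv (n := (m : WithTop ℕ∞)) (f := ψ)).1 (by exact_mod_cast hψ)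
    exact this.2.2
  exact (contDiff_const.mul h1).sub (contDiff_id.mul h2)

lemma Las_contDiff {m0 : ℝ} {m : ℕ} {ψ : ℝ → ℝ} (l : List ℝ)
    (hψ : ContDiff ℝ (m + l.length : ℕ) ψ) : ContDiff ℝ m (Las m0 l ψ) := by
  induction l generalizing m with
  | nil => simpa using hψ
  | cons c l ih =>
    rw [Las_cons]
    refine La_contDiff (ih ?_)
    rwa [List.length_cons, ← add_assoc, add_right_comm] at hψ

lemma La_deriv {m0 c : ℝ} {ψ : ℝ → ℝ} (hψ : ContDiff ℝ 2 ψ) (x : ℝ) :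
    deriv (La m0 c ψ) x = (c - m0 - 1) * deriv ψ x - x * deriv (deriv ψ) x := by
  have h1 : Differentiable ℝ ψ := hψ.differentiable (by norm_num)
  have h2 : Differentiable ℝ (deriv ψ) := by
    have := (contDiff_succ_iff_deriv (n := 1) (f := ψ)).1 hψ
    exact this.2.2.differentiable (by norm_num)
  have h3 := (((h1 x).hasDerivAt.const_mul (c - m0)).sub
    ((hasDerivAt_id x).mul (h2 x).hasDerivAt)).deriv
  rw [show La m0 c ψ = (fun y => (c - m0) * ψ y) - id * deriv ψ from rfl, h3]
  simp; ring

lemma La_comm {m0 a b : ℝ} {ψ : ℝ → ℝ} (hψ : ContDiff ℝ 2 ψ) :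
    La m0 a (La m0 b ψ) = La m0 b (La m0 a ψ) := by
  ext x
  simp only [La, La_deriv hψ]
  ring

lemma Las_perm {m0 : ℝ} {l l' : List ℝ} {ψ : ℝ → ℝ} (h : l.Perm l')
    (hψ : ContDiff ℝ (l.length : ℕ) ψ) : Las m0 l ψ = Las m0 l' ψ := by
  induction h with
  | nil => rfl
  | cons c h ih =>
    rw [Las_cons, Las_cons, ih (hψ.of_le (by simp))]
  | swap a b l =>
    simp only [Las_cons]
    refine La_comm (Las_contDiff (m := 2) l (hψ.of_le ?_))
    simp only [List.length_cons]
    exact_mod_cast (by omega : 2 + l.length ≤ l.length + 1 + 1)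
  | trans h h' ih ih' =>
    rw [ih hψ, ih' (by rwa [← h.length_eq])]

lemma Van.mono {m m' : ℕ} {ψ : ℝ → ℝ} (h : Van m ψ) (hm : m' ≤ m) : Van m' ψ := by
  induction m' generalizing m ψ with
  | zero => trivial
  | succ m' ih =>
    obtain ⟨r, rfl⟩ : ∃ r, m = r + 1 := ⟨m - 1, by omega⟩
    exact ⟨h.1, ih h.2 (by omega)⟩

lemma Van.comb {m : ℕ} {ψ χ : ℝ → ℝ} (a b : ℝ) (h : Van m ψ) (h' : Van m χ)
    (hψ : ContDiff ℝ m ψ) (hχ : ContDiff ℝ m χ) : Van m fun x => a * ψ x + b * χ x := by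
  induction m generalizing ψ χ with
  | zero => trivial
  | succ m ih =>
    have h1 := (contDiff_succ_iff_deriv (n := (m : WithTop ℕ∞)) (f := ψ)).1 (by exact_mod_cast hψ)
    have h2 := (contDiff_succ_iff_deriv (n := (m : WithTop ℕ∞)) (f := χ)).1 (by exact_mod_cast hχ)
    refine ⟨by simp [h.1, h'.1], ?_⟩
    have : deriv (fun x => a * ψ x + b * χ x) = fun x => a * deriv ψ x + b * deriv χ x := by
      ext x
      exact (((h1.1 x).hasDerivAt.const_mul a).add ((h2.1 x).hasDerivAt.const_mul b)).deriv
    rw [this]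
    exact ih h.2 h'.2 h1.2.2 h2.2.2

lemma Van.id_mul {m : ℕ} {ψ : ℝ → ℝ} (h : Van m ψ) (hψ : ContDiff ℝ m ψ) :
    Van m fun x => x * ψ x := by
  induction m generalizing ψ with
  | zero => trivial
  | succ m ih =>
    have h1 := (contDiff_succ_iff_deriv (n := (m : WithTop ℕ∞)) (f := ψ)).1 (by exact_mod_cast hψ)
    refine ⟨by simp [h.1], ?_⟩
    have : deriv (fun x => x * ψ x) = fun x => 1 * ψ x + 1 * (x * deriv ψ x) := by
      ext x
      have := ((hasDerivAt_id x).mul (h1.1 x).hasDerivAt).deriv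
      simp only [id] at this
      rw [show (fun x => x * ψ x) = id * ψ from rfl, this]; simp
    rw [this]
    have h2 : ContDiff ℝ m ψ := hψ.of_le (by exact_mod_cast Nat.le_succ m)
    exact Van.comb 1 1 (h.mono (Nat.le_succ m)) (ih h.2 h1.2.2) h2 (contDiff_id.mul h1.2.2)

lemma Van.La {m0 c : ℝ} {m : ℕ} {ψ : ℝ → ℝ} (h : Van (m + 1) ψ) (hψ : ContDiff ℝ (m + 1 : ℕ) ψ) :
    Van m (La m0 c ψ) := by
  have h1 := (contDiff_succ_iff_deriv (n := (m : WithTop ℕ∞)) (f := ψ)).1 (by exact_mod_cast hψ)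
  have h2 : ContDiff ℝ m ψ := hψ.of_le (by exact_mod_cast Nat.le_succ m)
  have := Van.comb (c - m0) (-1) (h.mono (Nat.le_succ m)) (h.2.id_mul h1.2.2) h2
    (contDiff_id.mul h1.2.2)
  convert this using 1
  ext x; simp [PolyH.La]; ring

lemma Van.Las {m0 : ℝ} {m : ℕ} {ψ : ℝ → ℝ} (l : List ℝ) (h : Van (m + l.length) ψ)
    (hψ : ContDiff ℝ (m + l.length : ℕ) ψ) : Van m (Las m0 l ψ) := by
  induction l generalizing m with
  | nil => simpa using h
  | cons c l ih =>
    rw [List.length_cons, ← add_assoc, add_right_comm] at hψ h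
    rw [Las_cons]
    exact (ih h hψ).La (Las_contDiff l hψ)

lemma Ph_bound {m0 T : ℝ} {ψ : ℝ → ℝ} (hψ : Continuous ψ) :
    ∃ C, 0 ≤ C ∧ ∀ t, T ≤ t → |Ph m0 ψ t| ≤ C * exp (-(m0 * t)) := by
  obtain ⟨C, hC⟩ := (isCompact_Icc (a := (0 : ℝ)) (b := exp (-T))).exists_bound_of_continuousOn
    hψ.continuousOn
  refine ⟨|C|, abs_nonneg _, fun t ht => ?_⟩
  have h1 := (hC (exp (-t)) ⟨(exp_pos _).le, exp_le_exp.2 (by linarith)⟩).trans (le_abs_self C)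
  rw [Real.norm_eq_abs] at h1
  calc |Ph m0 ψ t| = |ψ (exp (-t))| * exp (-(m0 * t)) := by
        rw [Ph, abs_mul, abs_of_pos (exp_pos _), mul_comm]
    _ ≤ _ := mul_le_mul_of_nonneg_right h1 (exp_pos _).le

lemma Ph_cont {m0 : ℝ} {ψ : ℝ → ℝ} (hψ : Continuous ψ) : Continuous (Ph m0 ψ) := by
  unfold Ph; fun_prop

lemma Ph_tendsto {m0 : ℝ} {ψ : ℝ → ℝ} (hm : 0 < m0) (hψ : Continuous ψ) :
    Tendsto (Ph m0 ψ) atTop (𝓝 0) := by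
  have h1 : Tendsto (fun t : ℝ => exp (-(m0 * t))) atTop (𝓝 0) :=
    tendsto_exp_neg_atTop_nhds_zero.comp (tendsto_id.const_mul_atTop hm)
  have h2 : Tendsto (fun t : ℝ => ψ (exp (-t))) atTop (𝓝 (ψ 0)) :=
    (hψ.tendsto 0).comp tendsto_exp_neg_atTop_nhds_zero
  have := h1.mul h2
  rw [zero_mul] at this
  exact this

lemma Ph_mul_intOn {m0 : ℝ} {ψ χ : ℝ → ℝ} (hm : 0 < m0) (hψ : Continuous ψ) (hχ : Continuous χ) :
    IntegrableOn (fun t => Ph m0 ψ t * Ph m0 χ t) (Set.Ioi 0) := by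
  obtain ⟨C, hC0, hC⟩ := Ph_bound (m0 := m0) (T := 0) hψ
  obtain ⟨C', hC0', hC'⟩ := Ph_bound (m0 := m0) (T := 0) hχ
  refine ((intOn_exp (a := m0 + m0) (by linarith) 0).const_mul (C * C')).mono'
    ((Ph_cont hψ).mul (Ph_cont hχ)).aestronglyMeasurable ?_
  filter_upwards [ae_restrict_mem measurableSet_Ioi] with t ht
  rw [Real.norm_eq_abs, abs_mul]
  have h1 := hC t (le_of_lt ht)
  have h2 := hC' t (le_of_lt ht)
  calc _ ≤ (C * exp (-(m0 * t))) * (C' * exp (-(m0 * t))) := by gcongr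
    _ = C * C' * (exp (-(m0 * t)) * exp (-(m0 * t))) := by ring
    _ = _ := by rw [← exp_add]; congr 2; ring

/-- `E 1 μ` inverts `-d/dt + μ` on profiles. -/
lemma E_one_Ph {m0 μ t : ℝ} {ψ : ℝ → ℝ} (hm : 0 < m0) (hμ : 0 < μ) (hψ : ContDiff ℝ 1 ψ) :
    E 1 μ (fun s => -Ph m0 (La m0 (-μ) ψ) s) t = Ph m0 ψ t := by
  have hd : Differentiable ℝ ψ := hψ.differentiable (by norm_num)
  have hLc : Continuous (La m0 (-μ) ψ) :=
    (La_contDiff (m := 0) (by exact_mod_cast hψ)).continuous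
  have hF : ∀ x : ℝ, HasDerivAt (fun x => -(exp (-(μ * x)) * Ph m0 ψ (t + x)))
      (exp (-(μ * x)) * -Ph m0 (La m0 (-μ) ψ) (t + 1 * x)) x := by
    intro x
    have h2 : HasDerivAt (fun t : ℝ => exp (-(μ * t))) (exp (-(μ * x)) * -μ) x := by
      simpa using (((hasDerivAt_id x).const_mul μ).neg).exp
    have h3 : HasDerivAt (fun x => Ph m0 ψ (t + x)) _ x :=
      (Ph_hasDeriv (m0 := m0) (c := -μ) (t := t + x) hd).comp_const_add t x
    refine (h2.mul h3).neg.congr_deriv ?_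
    rw [one_mul]; ring
  obtain ⟨C, hC0, hC⟩ := Ph_bound (m0 := m0) (T := t) hLc
  have hInt : IntegrableOn (fun x => exp (-(μ * x)) * -Ph m0 (La m0 (-μ) ψ) (t + 1 * x))
      (Set.Ioi 0) := by
    refine ((intOn_exp hμ 0).const_mul (C * exp (-(m0 * t)))).mono' ?_ ?_
    · have := Ph_cont (m0 := m0) hLc
      exact Continuous.aestronglyMeasurable (by fun_prop)
    · filter_upwards [ae_restrict_mem measurableSet_Ioi] with x hx
      have hx0 : 0 < x := hx
      rw [Real.norm_eq_abs, abs_mul, abs_of_pos (exp_pos _), abs_neg, mul_comm]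
      gcongr
      refine (hC _ (by linarith)).trans ?_
      gcongr
      nlinarith
  have htend : Tendsto (fun x => -(exp (-(μ * x)) * Ph m0 ψ (t + x))) atTop (𝓝 0) := by
    have h1 : Tendsto (fun t : ℝ => exp (-(μ * t))) atTop (𝓝 0) :=
      tendsto_exp_neg_atTop_nhds_zero.comp (tendsto_id.const_mul_atTop hμ)
    have h2 := (Ph_tendsto hm hψ.continuous).comp (tendsto_atTop_add_const_left _ t tendsto_id)
    simpa using (h1.mul h2).neg
  have := integral_Ioi_of_hasDerivAt_of_tendsto (a := 0) (hF 0).continuousAt.continuousWithinAt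
    (fun x _ => hF x) hInt htend
  rw [E, this]
  simp

/-- `E (-1) μ` inverts `d/dt + μ` on profiles vanishing at the boundary, extended by zero. -/
lemma E_neg_one_Ph {m0 μ t : ℝ} {ψ : ℝ → ℝ} (hψ : ContDiff ℝ 1 ψ) (h0 : ψ 1 = 0) :
    E (-1) μ ((Set.Ioi 0).indicator (Ph m0 (La m0 μ ψ))) t =
      (Set.Ioi 0).indicator (Ph m0 ψ) t := by
  have hd : Differentiable ℝ ψ := hψ.differentiable (by norm_num)
  have hLc : Continuous (La m0 μ ψ) :=
    (La_contDiff (m := 0) (by exact_mod_cast hψ)).continuous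
  rcases le_or_gt t 0 with ht | ht
  · rw [Set.indicator_of_notMem (by simpa using ht), E]
    rw [setIntegral_congr_fun (g := fun _ => (0 : ℝ)) measurableSet_Ioi, integral_zero]
    intro x hx
    have hx0 : 0 < x := hx
    beta_reduce
    rw [Set.indicator_of_notMem (by simp; linarith), mul_zero]
  · rw [Set.indicator_of_mem (show t ∈ Set.Ioi (0 : ℝ) from ht), E]
    have hF : ∀ x : ℝ, HasDerivAt (fun x => -(exp (-(μ * x)) * Ph m0 ψ (t - x)))
        (exp (-(μ * x)) * Ph m0 (La m0 μ ψ) (t - x)) x := by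
      intro x
      have h2 : HasDerivAt (fun t : ℝ => exp (-(μ * t))) (exp (-(μ * x)) * -μ) x := by
        simpa using (((hasDerivAt_id x).const_mul μ).neg).exp
      have h3 : HasDerivAt (fun x => Ph m0 ψ (t - x)) _ x :=
        (Ph_hasDeriv (m0 := m0) (c := μ) (t := t - x) hd).comp_const_sub t x
      refine (h2.mul h3).neg.congr_deriv ?_
      ring
    have h1 : ∀ x ∈ Set.Ioi (0 : ℝ),
        exp (-(μ * x)) * (Set.Ioi 0).indicator (Ph m0 (La m0 μ ψ)) (t + -1 * x) =
        (Set.Ioo 0 t).indicator (fun x => exp (-(μ * x)) * Ph m0 (La m0 μ ψ) (t - x)) x := by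
      intro x hx
      have hx0 : 0 < x := hx
      by_cases hxt : x < t
      · rw [Set.indicator_of_mem (by simp; linarith), Set.indicator_of_mem (Set.mem_Ioo.2 ⟨hx0, hxt⟩)]
        congr 2; ring
      · rw [Set.indicator_of_notMem (by simp; linarith), mul_zero,
          Set.indicator_of_notMem (fun h => hxt h.2)]
    rw [setIntegral_congr_fun measurableSet_Ioi h1, setIntegral_indicator measurableSet_Ioo,
      Set.inter_eq_self_of_subset_right (fun x hx => hx.1), ← integral_Ioc_eq_integral_Ioo,
      ← intervalIntegral.integral_of_le ht.le,
      intervalIntegral.integral_eq_sub_of_hasDerivAt (fun x _ => hF x)]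
    · simp [Ph, h0]
    · have := Ph_cont (m0 := m0) hLc
      exact Continuous.intervalIntegrable (by fun_prop) _ _

lemma Es_one_Ph {m0 : ℝ} {ψ : ℝ → ℝ} (hm : 0 < m0) (m j : ℕ) (hψ : ContDiff ℝ m ψ) (t : ℝ) :
    Es 1 m0 j m (fun s => (-1) ^ m * Ph m0 (Las m0 ((up m0 j m).reverse.map Neg.neg) ψ) s) t =
      Ph m0 ψ t := by
  induction m generalizing j ψ t with
  | zero => simp [up, Es]
  | succ m ih =>
    have h1 : (up m0 j (m + 1)).reverse.map Neg.neg =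
        (up m0 (j + 1) m).reverse.map Neg.neg ++ [-(m0 + 2 * j)] := by simp [up]
    rw [h1, Las_append, Es_succ]
    simp only [Las_cons, Las_nil]
    have h2 : Es 1 m0 (j + 1) m (fun s => (-1) ^ (m + 1) *
        Ph m0 (Las m0 ((up m0 (j + 1) m).reverse.map Neg.neg) (La m0 (-(m0 + 2 * j)) ψ)) s) =
        fun s => -Ph m0 (La m0 (-(m0 + 2 * j)) ψ) s := by
      ext s
      rw [← ih (j + 1) (La_contDiff (by exact_mod_cast hψ)) s]
      have := congrFun (Es_smul 1 m0 (-1) (fun s => (-1) ^ m *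
        Ph m0 (Las m0 ((up m0 (j + 1) m).reverse.map Neg.neg) (La m0 (-(m0 + 2 * j)) ψ)) s)
        m (j + 1)) s
      rw [neg_one_mul] at this
      rw [← this]
      congr 1
      ext r
      ring
    rw [h2]
    exact E_one_Ph hm (by positivity)
      (hψ.of_le (by exact_mod_cast Nat.succ_le_succ (Nat.zero_le m)))

lemma Es_neg_one_Ph {m0 : ℝ} {ψ : ℝ → ℝ} (m j : ℕ) (hψ : ContDiff ℝ m ψ) (hv : Van m ψ) (t : ℝ) :
    Es (-1) m0 j m ((Set.Ioi 0).indicator (Ph m0 (Las m0 (up m0 j m).reverse ψ))) t =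
      (Set.Ioi 0).indicator (Ph m0 ψ) t := by
  induction m generalizing j ψ t with
  | zero => simp [up, Es]
  | succ m ih =>
    have h1 : (up m0 j (m + 1)).reverse = (up m0 (j + 1) m).reverse ++ [m0 + 2 * j] := by simp [up]
    rw [h1, Las_append, Es_succ]
    simp only [Las_cons, Las_nil]
    have h2 := funext (ih (j + 1) (La_contDiff (c := m0 + 2 * j) (m0 := m0) (by exact_mod_cast hψ))
      (hv.La (by exact_mod_cast hψ)))
    rw [h2]
    exact E_neg_one_Ph (hψ.of_le (by exact_mod_cast Nat.succ_le_succ (Nat.zero_le m))) hv.1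

/-! ### The Pohozaev identity -/

/-- The `L²(0, ∞)` pairing of two profiles in logarithmic coordinates. -/
def Pair (m0 : ℝ) (ψ χ : ℝ → ℝ) : ℝ := ∫ t in Set.Ioi (0 : ℝ), Ph m0 ψ t * Ph m0 χ t

lemma ibp {m0 μ : ℝ} {z y : ℝ → ℝ} (hm : 0 < m0) (hz : ContDiff ℝ 1 z) (hy : ContDiff ℝ 1 y) :
    Pair m0 (La m0 (-μ) z) y = -(z 1 * y 1) - Pair m0 z (La m0 μ y) := by
  have hzc : Continuous (La m0 (-μ) z) :=
    (La_contDiff (m := 0) (by exact_mod_cast hz)).continuous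
  have hyc : Continuous (La m0 μ y) := (La_contDiff (m := 0) (by exact_mod_cast hy)).continuous
  have h1 := Ph_mul_intOn hm hzc hy.continuous
  have h2 := Ph_mul_intOn hm hz.continuous hyc
  have hF : ∀ t : ℝ, HasDerivAt (fun t => Ph m0 z t * Ph m0 y t)
      (Ph m0 (La m0 (-μ) z) t * Ph m0 y t + Ph m0 z t * Ph m0 (La m0 μ y) t) t := by
    intro t
    refine ((Ph_hasDeriv (c := -μ) (hz.differentiable (by norm_num))).mul
      (Ph_hasDeriv (c := μ) (hy.differentiable (by norm_num)))).congr_deriv ?_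
    ring
  have h3 := integral_Ioi_of_hasDerivAt_of_tendsto (a := 0)
    (hF 0).continuousAt.continuousWithinAt (fun x _ => hF x) (h1.add h2)
    (by simpa using (Ph_tendsto hm hz.continuous).mul (Ph_tendsto hm hy.continuous))
  rw [integral_add h1 h2] at h3
  simp only [Ph, mul_zero, neg_zero, exp_zero, one_mul, zero_sub] at h3
  simp only [Pair, Ph]
  linarith

lemma ibps {m0 : ℝ} {z y : ℝ → ℝ} (hm : 0 < m0) (l : List ℝ) (hz : ContDiff ℝ l.length z)
    (hy : ContDiff ℝ l.length y) (hv : Van l.length y) :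
    Pair m0 (Las m0 (l.map Neg.neg) z) y = (-1) ^ l.length * Pair m0 z (Las m0 l.reverse y) := by
  induction l generalizing y with
  | nil => simp
  | cons c l ih =>
    rw [List.length_cons] at *
    have h1 : ContDiff ℝ 1 (Las m0 (l.map Neg.neg) z) :=
      Las_contDiff (m := 1) _ (by rw [List.length_map, add_comm]; exact hz)
    rw [List.map_cons, Las_cons, ibp hm h1
      (hy.of_le (by exact_mod_cast Nat.succ_le_succ (Nat.zero_le _))), hv.1,
      ih (hz.of_le (by exact_mod_cast Nat.le_succ _)) (La_contDiff hy) (hv.La hy),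
      List.reverse_cons, Las_append]
    simp only [Las_cons, Las_nil]
    ring

/-- Testing the factorized operator against `dv/dt` leaves only a boundary term. -/
lemma pair_pohozaev {m0 : ℝ} {p : ℕ} {ψ : ℝ → ℝ} (hm : 0 < m0)
    (hψ : ContDiff ℝ (2 * (p + 1) : ℕ) ψ) (hv : Van (p + 1) ψ) :
    Pair m0 (Las m0 ((up m0 0 (p + 1)).reverse.map Neg.neg) (Las m0 (up m0 0 (p + 1)) ψ))
      (La m0 0 ψ) = (-1) ^ (p + 1) * ((Las m0 (up m0 0 (p + 1)) ψ 1) ^ 2 / 2) := by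
  set w := Las m0 (up m0 0 (p + 1)) ψ with hw
  set X := Las m0 (up m0 1 p) ψ with hX
  have hwX : w = La m0 (m0 + 2 * (0 : ℕ)) X := rfl
  have hle : ∀ {a : ℕ}, a ≤ 2 * (p + 1) → ContDiff ℝ a ψ := fun h =>
    hψ.of_le (by exact_mod_cast h)
  have hwc : ContDiff ℝ (p + 1 : ℕ) w :=
    Las_contDiff _ (by rw [up_length]; exact hle (by omega))
  have hXc : ContDiff ℝ (2 : ℕ) X := Las_contDiff _ (by rw [up_length]; exact hle (by omega))
  have hX1 : X 1 = 0 := by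
    have : Van 1 X := Van.Las _ (by rw [up_length, add_comm]; exact hv)
      (by rw [up_length]; exact hle (by omega))
    exact this.1
  have hlen : (up m0 1 p).reverse.length = p := by rw [List.length_reverse, up_length]
  have hw1 : ContDiff ℝ 1 w := hwc.of_le (by exact_mod_cast (by omega : 1 ≤ p + 1))
  have hX1c : ContDiff ℝ 1 X := hXc.of_le (by exact_mod_cast (by omega : 1 ≤ 2))
  have h1 : (up m0 0 (p + 1)).reverse.map Neg.neg =
      (up m0 1 p).reverse.map Neg.neg ++ [-(m0 + 2 * (0 : ℕ))] := by simp [up]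
  have hcomm : Las m0 (up m0 1 p) (La m0 0 ψ) = La m0 0 X := by
    have := Las_perm (m0 := m0) (ψ := ψ) (List.perm_append_comm (l₁ := up m0 1 p) (l₂ := [0]))
      (hle (by simp [up_length]))
    simpa [Las_append] using this
  rw [h1, Las_append]
  simp only [Las_cons, Las_nil]
  rw [ibps hm _ (by rw [hlen]; exact La_contDiff hwc)
    (by rw [hlen]; exact La_contDiff (hle (by omega)))
    (by rw [hlen]; exact hv.La (hle (by omega))), List.reverse_reverse, hcomm, hlen,
    ibp hm hw1 (La_contDiff (m := 1) hXc), La_comm hXc, ← hwX]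
  have h2 := ibp (μ := 0) hm hw1 hw1
  have h3 : Pair m0 (La m0 0 w) w = Pair m0 w (La m0 0 w) := by
    simp only [Pair]; congr 1; ext t; ring
  rw [neg_zero, h3] at h2
  have h4 : La m0 0 X 1 = w 1 := by
    rw [hwX]; simp [La, hX1]
  rw [h4, pow_succ]
  linear_combination (-(-1 : ℝ) ^ p / 2) * h2

/-- The Pohozaev identity for a solution profile: the energy terms of the nonlinearity cancel, so that
up to sign the squared boundary value equals a multiple of `λ` times a weighted `L²` norm. -/
lemma poho_identity {m0 q lam : ℝ} {p : ℕ} {φ : ℝ → ℝ} (hm : 0 < m0) (hq : 0 < q)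
    (hφ : ContDiff ℝ (2 * (p + 1) : ℕ) φ) (hv : Van (p + 1) φ)
    (hode : ∀ t, 0 < t → Ph m0 (Las m0 ((up m0 0 (p + 1)).reverse.map Neg.neg)
      (Las m0 (up m0 0 (p + 1)) φ)) t =
        lam * exp (-(m0 * q * t)) * Ph m0 φ t + |Ph m0 φ t| ^ q * Ph m0 φ t) :
    (-1) ^ (p + 1) * (Las m0 (up m0 0 (p + 1)) φ 1) ^ 2 =
      m0 * q * lam * ∫ t in Set.Ioi 0, exp (-(m0 * q * t)) * Ph m0 φ t ^ 2 := by
  have h1 := pair_pohozaev hm hφ hv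
  set W := Las m0 ((up m0 0 (p + 1)).reverse.map Neg.neg) (Las m0 (up m0 0 (p + 1)) φ) with hW
  set w := Las m0 (up m0 0 (p + 1)) φ with hw
  have hwc : ContDiff ℝ (p + 1 : ℕ) w :=
    Las_contDiff _ (by rw [up_length]; exact hφ.of_le (by exact_mod_cast (by omega)))
  have hWc : Continuous W :=
    (Las_contDiff (m := 0) _ (by simpa [up_length] using hwc)).continuous
  have hφ1 : ContDiff ℝ (0 + 1 : ℕ) φ := hφ.of_le (by exact_mod_cast (by omega))
  have hdc : Continuous (La m0 0 φ) := (La_contDiff hφ1).continuous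
  have hφd : Differentiable ℝ φ := hφ1.differentiable (by norm_num)
  have hd : ∀ t, HasDerivAt (Ph m0 φ) (Ph m0 (La m0 0 φ) t) t := fun t => by
    simpa using Ph_hasDeriv (m0 := m0) (c := 0) (t := t) hφd
  have hκ : 0 < m0 * q := mul_pos hm hq
  have hI1 := Ph_mul_intOn hm hWc hdc
  have hI2 : IntegrableOn (fun t => exp (-(m0 * q * t)) * Ph m0 φ t ^ 2) (Set.Ioi 0) := by
    refine (Ph_mul_intOn hm hφd.continuous hφd.continuous).mono' ?_ ?_
    · have := Ph_cont (m0 := m0) hφd.continuous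
      exact Continuous.aestronglyMeasurable (by fun_prop)
    · filter_upwards [ae_restrict_mem measurableSet_Ioi] with t ht
      have ht0 : 0 < t := ht
      rw [Real.norm_eq_abs, abs_of_nonneg (by positivity), ← sq]
      refine mul_le_of_le_one_left (sq_nonneg _) (exp_le_one_iff.2 ?_)
      nlinarith
  -- A primitive of the nonlinear and linear terms tested against `dv/dt`.
  have hG : ∀ t, HasDerivAt (fun t => |Ph m0 φ t| ^ (q + 2) / (q + 2)
      + lam / 2 * (exp (-(m0 * q * t)) * Ph m0 φ t ^ 2))
      (|Ph m0 φ t| ^ q * Ph m0 φ t * Ph m0 (La m0 0 φ) t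
        + (lam * exp (-(m0 * q * t)) * Ph m0 φ t * Ph m0 (La m0 0 φ) t
        - m0 * q * lam / 2 * (exp (-(m0 * q * t)) * Ph m0 φ t ^ 2))) t := by
    intro t
    have h2 : HasDerivAt (fun t : ℝ => exp (-(m0 * q * t))) (exp (-(m0 * q * t)) * -(m0 * q)) t := by
      simpa using (((hasDerivAt_id t).const_mul (m0 * q)).neg).exp
    have h3 := (((hasDerivAt_abs_rpow (Ph m0 φ t) (by linarith : 1 < q + 2)).comp t
      (hd t)).div_const (q + 2)).add ((h2.mul ((hd t).pow 2)).const_mul (lam / 2))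
    refine h3.congr_deriv ?_
    rw [show q + 2 - 2 = q by ring]
    have : q + 2 ≠ 0 := by linarith
    field_simp
    simp
    ring
  have hcong : ∀ t ∈ Set.Ioi (0 : ℝ), |Ph m0 φ t| ^ q * Ph m0 φ t * Ph m0 (La m0 0 φ) t
        + (lam * exp (-(m0 * q * t)) * Ph m0 φ t * Ph m0 (La m0 0 φ) t
        - m0 * q * lam / 2 * (exp (-(m0 * q * t)) * Ph m0 φ t ^ 2)) =
        Ph m0 W t * Ph m0 (La m0 0 φ) t
          - m0 * q * lam / 2 * (exp (-(m0 * q * t)) * Ph m0 φ t ^ 2) := by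
    intro t ht
    rw [hode t ht]; ring
  have hI3 := hI2.const_mul (m0 * q * lam / 2)
  have hv0 := Ph_tendsto hm hφd.continuous
  have ht1 : Tendsto (fun t => |Ph m0 φ t| ^ (q + 2) / (q + 2)
      + lam / 2 * (exp (-(m0 * q * t)) * Ph m0 φ t ^ 2)) atTop (𝓝 0) := by
    have h4 : Tendsto (fun t : ℝ => exp (-(m0 * q * t))) atTop (𝓝 0) :=
      tendsto_exp_neg_atTop_nhds_zero.comp (tendsto_id.const_mul_atTop hκ)
    have h5 := ((hv0.abs.rpow_const (p := q + 2) (Or.inr (by linarith))).div_const (q + 2)).add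
      ((h4.mul (hv0.pow 2)).const_mul (lam / 2))
    simpa [Real.zero_rpow (by linarith : q + 2 ≠ 0)] using h5
  have hfin := integral_Ioi_of_hasDerivAt_of_tendsto (a := 0)
    (hG 0).continuousAt.continuousWithinAt (fun x _ => hG x)
    ((hI1.sub hI3).congr_fun (fun t ht => (hcong t ht).symm) measurableSet_Ioi) ht1
  have hφ0 : Ph m0 φ 0 = 0 := by simp [Ph, hv.1]
  rw [setIntegral_congr_fun measurableSet_Ioi hcong, integral_sub hI1 hI3, integral_const_mul,
    hφ0] at hfin
  simp only [abs_zero, Real.zero_rpow (by linarith : q + 2 ≠ 0)] at hfin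
  rw [Pair] at h1
  rw [h1] at hfin
  rw [zero_div, zero_pow two_ne_zero, mul_zero, mul_zero, zero_add, sub_zero] at hfin
  linear_combination 2 * hfin

/-- Triviality of profiles of bounded energy for small `λ`. For odd `p + 1` the two sides of
`poho_identity` have opposite signs; for even `p + 1` the profile, extended by zero, solves the
integral equation and `exists_lam` applies. -/
theorem ode_trivial {m0 q M : ℝ} {p : ℕ} (hm : 0 < m0) (hq : 0 < q) (hmq : 2 * m0 < m0 * q)
    (hqm : m0 * q = 2 * (p + 1)) (hM : 0 ≤ M) :
    ∃ lam0 > 0, ∀ lam φ, 0 < lam → lam < lam0 → ContDiff ℝ (2 * (p + 1) : ℕ) φ → Van (p + 1) φ →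
      (∀ t, 0 < t → Ph m0 (Las m0 ((up m0 0 (p + 1)).reverse.map Neg.neg)
        (Las m0 (up m0 0 (p + 1)) φ)) t =
          lam * exp (-(m0 * q * t)) * Ph m0 φ t + |Ph m0 φ t| ^ q * Ph m0 φ t) →
      (∫ t in Set.Ioi 0, |Ph m0 φ t| ^ (q + 2)) ≤ M → ∀ t, 0 < t → Ph m0 φ t = 0 := by
  have hκ : 0 < m0 * q := mul_pos hm hq
  rcases Nat.even_or_odd (p + 1) with hpar | hpar
  · obtain ⟨lam0, hl0, H⟩ := exists_lam hm hq hmq hqm hM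
    refine ⟨lam0, hl0, fun lam φ hl hll hφ hv hode hen t ht => ?_⟩
    have hpoh := poho_identity hm hq hφ hv hode
    rw [hpar.neg_one_pow, one_mul] at hpoh
    have hφc : Continuous φ := hφ.continuous
    have hvc := Ph_cont (m0 := m0) hφc
    set w := Las m0 (up m0 0 (p + 1)) φ with hw
    have hwc : ContDiff ℝ (p + 1 : ℕ) w :=
      Las_contDiff _ (by rw [up_length]; exact hφ.of_le (by exact_mod_cast (by omega)))
    have hw' : Las m0 (up m0 0 (p + 1)).reverse φ = w :=
      (Las_perm (List.reverse_perm _).symm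
        (by rw [up_length]; exact hφ.of_le (by exact_mod_cast (by omega)))).symm
    set f := (Set.Ioi (0 : ℝ)).indicator (Ph m0 φ) with hf
    have hfpos : ∀ s, 0 < s → f s = Ph m0 φ s := fun s hs => Set.indicator_of_mem hs _
    have hEs : ∀ t, 0 ≤ t →
        Es 1 m0 0 (p + 1) (fun s => nl q f s + er (m0 * q) lam 0 f s) t = Ph m0 w t := by
      intro t ht
      rw [← Es_one_Ph hm (p + 1) 0 hwc t, Es_succ, Es_succ]
      refine E_congr fun x hx => ?_
      refine Es_congr (S := Set.Ioi 0) (fun t ht x hx => ?_) (fun s hs => ?_) p (0 + 1) _ ?_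
      · have : 0 < t := ht
        show 0 < t + 1 * x
        linarith
      · have hs0 : 0 < s := hs
        rw [hode s hs0, hpar.neg_one_pow, one_mul, nl, er, Set.indicator_of_mem hs, hfpos s hs0,
          sub_zero]
        ring
      · show 0 < t + 1 * x
        linarith
    have hfneg : ∀ s, ¬0 < s → f s = 0 := fun s hs => Set.indicator_of_notMem (s := Set.Ioi 0) hs _
    have hsq := Ph_mul_intOn hm hφc hφc
    obtain ⟨C, hC0, hC⟩ := Ph_bound (m0 := m0) (T := 0) hφc
    have hCb : ∀ t, |f t| ≤ C := by
      intro t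
      by_cases h : 0 < t
      · rw [hfpos t h]
        refine (hC t h.le).trans (mul_le_of_le_one_right hC0 (exp_le_one_iff.2 ?_))
        nlinarith
      · rw [hfneg t h, abs_zero]; exact hC0
    have hind : (fun t => |f t| ^ (q + 2)) =
        (Set.Ioi 0).indicator fun t => |Ph m0 φ t| ^ (q + 2) := by
      ext t
      by_cases h : 0 < t
      · rw [hfpos t h, Set.indicator_of_mem (show t ∈ Set.Ioi 0 from h)]
      · rw [hfneg t h, Set.indicator_of_notMem (show t ∉ Set.Ioi (0 : ℝ) from h), abs_zero,
          Real.zero_rpow (by linarith)]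
    have hpre : Pre m0 q M p lam f := by
      refine ⟨hvc.measurable.indicator measurableSet_Ioi, ⟨C, hCb⟩, fun t => ?_, ?_, ?_, ?_⟩
      · rw [show (Set.Ioi (0 : ℝ)).indicator (Es 1 m0 0 (p + 1)
          fun s => nl q f s + er (m0 * q) lam 0 f s) = (Set.Ioi 0).indicator (Ph m0 w) from
          Set.indicator_congr fun t ht => hEs t (le_of_lt ht), ← hw',
          Es_neg_one_Ph (p + 1) 0 (hφ.of_le (by exact_mod_cast (by omega))) hv]
      · rw [hind, integrable_indicator_iff measurableSet_Ioi]
        refine (hsq.const_mul (C ^ q)).mono' ?_ ?_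
        · refine Continuous.aestronglyMeasurable ?_
          exact hvc.abs.rpow_const fun x => Or.inr (by linarith)
        · filter_upwards [ae_restrict_mem measurableSet_Ioi] with t ht
          have h2 := hCb t
          rw [hfpos t ht] at h2
          rw [Real.norm_eq_abs, abs_of_nonneg (by positivity), ← sq, ← sq_abs (Ph m0 φ t)]
          rw [Real.rpow_add_of_nonneg (abs_nonneg _) hq.le (by norm_num), Real.rpow_two]
          gcongr
      · rw [hind, integral_indicator measurableSet_Ioi]
        exact hen
      · rw [hEs 0 le_rfl]
        have h3 : Ph m0 w 0 = w 1 := by simp [Ph]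
        rw [h3, hpoh]
        refine le_of_eq (congrArg _ (setIntegral_congr_fun measurableSet_Ioi fun t ht => ?_))
        simp only [hfpos t ht]
    rw [← hfpos t ht]
    exact H lam f hl hll hpre t
  · refine ⟨1, one_pos, fun lam φ hl hll hφ hv hode _ => ?_⟩
    have hpoh := poho_identity hm hq hφ hv hode
    rw [hpar.neg_one_pow] at hpoh
    have hvc := Ph_cont (m0 := m0) hφ.continuous
    have hgc : Continuous fun t => exp (-(m0 * q * t)) * Ph m0 φ t ^ 2 := by fun_prop
    have hI2 : IntegrableOn (fun t => exp (-(m0 * q * t)) * Ph m0 φ t ^ 2) (Set.Ioi 0) := by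
      refine (Ph_mul_intOn hm hφ.continuous hφ.continuous).mono' hgc.aestronglyMeasurable ?_
      filter_upwards [ae_restrict_mem measurableSet_Ioi] with t ht
      have ht0 : 0 < t := ht
      rw [Real.norm_eq_abs, abs_of_nonneg (by positivity), ← sq]
      refine mul_le_of_le_one_left (sq_nonneg _) (exp_le_one_iff.2 ?_)
      nlinarith
    have hnn : 0 ≤ ∫ t in Set.Ioi 0, exp (-(m0 * q * t)) * Ph m0 φ t ^ 2 :=
      integral_nonneg fun t => by positivity
    have h0 : ∫ t in Set.Ioi 0, exp (-(m0 * q * t)) * Ph m0 φ t ^ 2 = 0 := by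
      have h4 : 0 < m0 * q * lam := mul_pos hκ hl
      refine le_antisymm ?_ hnn
      by_contra! h
      nlinarith [mul_pos h4 h, sq_nonneg (Las m0 (up m0 0 (p + 1)) φ 1)]
    have h5 := (setIntegral_eq_zero_iff_of_nonneg_ae
      (Eventually.of_forall fun t => by simp only [Pi.zero_apply]; positivity) hI2).1 h0
    have h6 := Measure.eqOn_open_of_ae_eq h5 isOpen_Ioi hgc.continuousOn continuousOn_const
    intro t ht
    have h7 := h6 ht
    simp only [Pi.zero_apply, mul_eq_zero, (exp_pos _).ne', false_or] at h7
    exact pow_eq_zero_iff (two_ne_zero) |>.1 h7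

/-! ### Radial functions -/

/-- The restriction of `w` to the line spanned by `e`. -/
def Sec {n : ℕ} (e : EuclideanSpace ℝ (Fin n)) (w : EuclideanSpace ℝ (Fin n) → ℝ) : ℝ → ℝ :=
  fun r => w (r • e)

section radial

variable {n : ℕ} {e : EuclideanSpace ℝ (Fin n)} {w : EuclideanSpace ℝ (Fin n) → ℝ}

lemma Sec_contDiff {m : ℕ} (hw : ContDiff ℝ m w) : ContDiff ℝ m (Sec e w) :=
  hw.comp (contDiff_id.smul contDiff_const)

lemma iteratedDeriv_Sec {m j : ℕ} (hw : ContDiff ℝ m w) (hj : j ≤ m) (r : ℝ) :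
    iteratedDeriv j (Sec e w) r = iteratedFDeriv ℝ j w (r • e) (fun _ => e) := by
  have h := ContinuousLinearMap.iteratedFDeriv_comp_right
    (ContinuousLinearMap.toSpanSingleton ℝ e) hw r (i := j) (by exact_mod_cast hj)
  rw [iteratedDeriv_eq_iteratedFDeriv, show Sec e w = w ∘ ContinuousLinearMap.toSpanSingleton ℝ e
    from by ext r; simp [Sec], h]
  simp [ContinuousLinearMap.toSpanSingleton_apply]

lemma van_of_iteratedDeriv {k : ℕ} {φ : ℝ → ℝ} (h : ∀ j < k, iteratedDeriv j φ 1 = 0) :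
    Van k φ := by
  induction k generalizing φ with
  | zero => trivial
  | succ k ih =>
    refine ⟨by simpa using h 0 (Nat.succ_pos k), ih fun j hj => ?_⟩
    rw [← iteratedDeriv_succ']
    exact h (j + 1) (by omega)

lemma radial_eq (he : ‖e‖ = 1) (hr : ∀ x y, ‖x‖ = ‖y‖ → w x = w y)
    (x : EuclideanSpace ℝ (Fin n)) : w x = Sec e w ‖x‖ :=
  hr _ _ (by rw [norm_smul, he, norm_norm, mul_one])

/-- The second derivative of `φ ∘ √N` at `0` for the quadratic `N s = r² + 2as + s²`. -/
lemma deriv_two_sqrt {φ : ℝ → ℝ} {a r : ℝ} (hφ : ContDiff ℝ 2 φ) (hr : 0 < r) :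
    iteratedDeriv 2 (fun s : ℝ => φ (√(r ^ 2 + 2 * s * a + s ^ 2))) 0 =
      deriv (deriv φ) r * (a ^ 2 / r ^ 2) + deriv φ r * (1 / r - a ^ 2 / r ^ 3) := by
  have hd : Differentiable ℝ φ := hφ.differentiable (by norm_num)
  have hd2 : Differentiable ℝ (deriv φ) :=
    ((contDiff_succ_iff_deriv (n := 1) (f := φ)).1 hφ).2.2.differentiable (by norm_num)
  set ρ : ℝ → ℝ := fun s => √(r ^ 2 + 2 * s * a + s ^ 2) with hρ
  have hρ0 : ρ 0 = r := by simp [hρ, Real.sqrt_sq hr.le]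
  have hρc : Continuous ρ := by fun_prop
  have hpos : ∀ᶠ s in 𝓝 (0 : ℝ), 0 < ρ s := by
    refine hρc.continuousAt.eventually (lt_mem_nhds ?_)
    rw [hρ0]; exact hr
  have hρd : ∀ s, 0 < ρ s → HasDerivAt ρ ((a + s) / ρ s) s := by
    intro s hs
    have h1 : HasDerivAt (fun s : ℝ => r ^ 2 + 2 * s * a + s ^ 2) (2 * a + 2 * s) s := by
      have := (((hasDerivAt_id s).const_mul 2).mul_const a).const_add (r ^ 2) |>.add
        ((hasDerivAt_id s).pow 2)
      refine this.congr_deriv ?_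
      simp
    have h2 := h1.sqrt (Real.sqrt_pos.1 hs).ne'
    refine h2.congr_deriv ?_
    have : √(r ^ 2 + 2 * s * a + s ^ 2) = ρ s := rfl
    rw [this]
    field_simp
  have hfirst : deriv (fun s => φ (ρ s)) =ᶠ[𝓝 0] fun s => deriv φ (ρ s) * ((a + s) / ρ s) := by
    filter_upwards [hpos] with s hs
    exact ((hd (ρ s)).hasDerivAt.comp s (hρd s hs)).deriv
  rw [iteratedDeriv_succ, iteratedDeriv_one, hfirst.deriv_eq]
  have hp0 : 0 < ρ 0 := by rw [hρ0]; exact hr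
  have h3 := ((hd2 (ρ 0)).hasDerivAt.comp 0 (hρd 0 hp0)).mul
    ((((hasDerivAt_id (0 : ℝ)).const_add a)).div (hρd 0 hp0) hp0.ne')
  have h4 := h3.deriv
  simp only [Function.comp_def, id, Pi.div_apply] at h4
  refine (Eq.trans ?_ h4).trans ?_
  · rfl
  · simp only [hρ0]
    field_simp
    ring

lemma iteratedFDeriv_two_line (hw : ContDiff ℝ 2 w) (x v : EuclideanSpace ℝ (Fin n)) :
    iteratedFDeriv ℝ 2 w x (fun _ => v) = iteratedDeriv 2 (fun s : ℝ => w (x + s • v)) 0 := by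
  have h1 : ContDiff ℝ (2 : ℕ) fun y => w (x + y) :=
    (show ContDiff ℝ (2 : ℕ) w from hw).comp (contDiff_const.add contDiff_id)
  have h2 := iteratedDeriv_Sec (e := v) (j := 2) h1 le_rfl 0
  rw [iteratedFDeriv_comp_add_left, zero_smul, add_zero] at h2
  exact h2.symm

/-- The Laplacian of a radial function in polar coordinates. -/
lemma lap_radial (he : ‖e‖ = 1) (hw : ContDiff ℝ 2 w) (hr : ∀ x y, ‖x‖ = ‖y‖ → w x = w y)
    {x : EuclideanSpace ℝ (Fin n)} (hx : x ≠ 0) :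
    lap w x = deriv (deriv (Sec e w)) ‖x‖ + (n - 1) / ‖x‖ * deriv (Sec e w) ‖x‖ := by
  have hpos : 0 < ‖x‖ := norm_pos_iff.2 hx
  have h1 : ∀ i : Fin n, iteratedFDeriv ℝ 2 w x (fun _ => EuclideanSpace.single i 1) =
      deriv (deriv (Sec e w)) ‖x‖ * (x i ^ 2 / ‖x‖ ^ 2) +
        deriv (Sec e w) ‖x‖ * (1 / ‖x‖ - x i ^ 2 / ‖x‖ ^ 3) := by
    intro i
    rw [iteratedFDeriv_two_line hw, ← deriv_two_sqrt (Sec_contDiff (m := 2) hw) hpos]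
    congr 1
    ext s
    rw [radial_eq he hr]
    congr 1
    rw [← Real.sqrt_sq (norm_nonneg (x + _)), norm_add_sq_real]
    congr 1
    rw [inner_smul_right, EuclideanSpace.inner_single_right, norm_smul,
      mul_pow]
    simp
    ring
  have h2 : ∑ i, x i ^ 2 = ‖x‖ ^ 2 := by
    rw [EuclideanSpace.norm_sq_eq]; simp
  unfold lap
  rw [Finset.sum_congr rfl fun i _ => h1 i, Finset.sum_add_distrib, ← Finset.mul_sum,
    ← Finset.mul_sum, Finset.sum_sub_distrib]
  simp only [← Finset.sum_div, h2]
  simp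
  field_simp

lemma lap_radial_radial (he : ‖e‖ = 1) (hw : ContDiff ℝ 2 w)
    (hr : ∀ x y, ‖x‖ = ‖y‖ → w x = w y) : ∀ x y, ‖x‖ = ‖y‖ → lap w x = lap w y := by
  intro x y hxy
  by_cases hx : x = 0
  · have hy : y = 0 := by
      rw [hx, norm_zero] at hxy
      exact norm_eq_zero.1 hxy.symm
    rw [hx, hy]
  · have hy : y ≠ 0 := by
      rw [← norm_pos_iff, ← hxy]; exact norm_pos_iff.2 hx
    rw [lap_radial he hw hr hx, lap_radial he hw hr hy, hxy]

lemma lap_contDiff {m : ℕ} (hw : ContDiff ℝ (m + 2 : ℕ) w) : ContDiff ℝ m (lap w) := by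
  refine ContDiff.sum fun i _ => ?_
  have h1 : ContDiff ℝ m (iteratedFDeriv ℝ 2 w) :=
    hw.iteratedFDeriv_right (by exact_mod_cast le_rfl)
  exact (ContinuousMultilinearMap.apply ℝ (fun _ : Fin 2 => EuclideanSpace ℝ (Fin n)) ℝ
    (fun _ => EuclideanSpace.single i 1)).contDiff.comp h1

lemma iterLap_succ (j : ℕ) : iterLap (j + 1) w = lap (iterLap j w) :=
  Function.iterate_succ_apply' _ _ _

lemma iterLap_contDiff {k : ℕ} (hw : ContDiff ℝ (2 * k : ℕ) w) (j : ℕ) (hj : j ≤ k) :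
    ContDiff ℝ (2 * (k - j) : ℕ) (iterLap j w) := by
  induction j with
  | zero => simpa [iterLap] using hw
  | succ j ih =>
    rw [iterLap_succ]
    refine lap_contDiff ?_
    convert ih (by omega) using 2
    omega

lemma iterLap_radial {k : ℕ} (he : ‖e‖ = 1) (hw : ContDiff ℝ (2 * k : ℕ) w)
    (hr : ∀ x y, ‖x‖ = ‖y‖ → w x = w y) (j : ℕ) (hj : j ≤ k) :
    ∀ x y, ‖x‖ = ‖y‖ → iterLap j w x = iterLap j w y := by
  induction j with
  | zero => simpa [iterLap] using hr
  | succ j ih =>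
    rw [iterLap_succ]
    exact lap_radial_radial he ((iterLap_contDiff hw j (by omega)).of_le
      (by exact_mod_cast (by omega : 2 ≤ 2 * (k - j)))) (ih (by omega))

end radial

/-! ### From the polyharmonic equation to the factorized equation -/

/-- The exponents of the `2j` first order factors of `r^{2j} Δ^j` on radial functions. -/
def mix (m0 : ℝ) (k : ℕ) : ℕ → List ℝ
  | 0 => []
  | j + 1 => (m0 + 2 * j) :: -(m0 + 2 * ((k : ℝ) - 1 - j)) :: mix m0 k j

lemma La_congr {m0 c : ℝ} {ψ χ : ℝ → ℝ} (h : ∀ x, 0 < x → ψ x = χ x) :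
    ∀ x, 0 < x → La m0 c ψ x = La m0 c χ x := by
  intro x hx
  have h1 : ψ =ᶠ[𝓝 x] χ := by
    filter_upwards [lt_mem_nhds hx] with y hy using h y hy
  rw [La, La, h x hx, h1.deriv_eq]

/-- One Laplacian corresponds to two first order factors, in dimension `ν = 2 m₀ + 2 k`. -/
lemma La_La_pow {m0 ν : ℝ} {j k : ℕ} {φ : ℝ → ℝ} (hν : ν = 2 * m0 + 2 * k) (hφ : ContDiff ℝ 2 φ) :
    ∀ x, 0 < x → La m0 (m0 + 2 * j) (La m0 (-(m0 + 2 * ((k : ℝ) - 1 - j)))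
      fun x => x ^ (2 * j) * φ x) x =
      x ^ (2 * (j + 1)) * (deriv (deriv φ) x + (ν - 1) / x * deriv φ x) := by
  have hd : Differentiable ℝ φ := hφ.differentiable (by norm_num)
  have hd2 : Differentiable ℝ (deriv φ) :=
    ((contDiff_succ_iff_deriv (n := 1) (f := φ)).1 hφ).2.2.differentiable (by norm_num)
  have hpow : ∀ x : ℝ, x * ((2 * j : ℕ) * x ^ (2 * j - 1)) = 2 * j * x ^ (2 * j) := by
    intro x
    rcases j with _ | j
    · simp
    · rw [show 2 * (j + 1) - 1 = 2 * j + 1 by omega, show 2 * (j + 1) = 2 * j + 1 + 1 by ring,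
        pow_succ x (2 * j + 1)]
      push_cast
      ring
  have h1 : (La m0 (-(m0 + 2 * ((k : ℝ) - 1 - j))) fun x => x ^ (2 * j) * φ x) =
      fun x => x ^ (2 * j) * ((2 - ν) * φ x - x * deriv φ x) := by
    ext x
    have h2 := ((hasDerivAt_pow (2 * j) x).mul (hd x).hasDerivAt).deriv
    rw [La, show (fun x => x ^ (2 * j) * φ x) = (fun x => x ^ (2 * j)) * φ from rfl, h2]
    rw [hν]
    linear_combination (-φ x) * hpow x
  intro x hx
  have h3 : HasDerivAt (fun x => (2 - ν) * φ x - x * deriv φ x)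
      ((2 - ν) * deriv φ x - (1 * deriv φ x + x * deriv (deriv φ) x)) x :=
    ((hd x).hasDerivAt.const_mul _).sub ((hasDerivAt_id x).mul (hd2 x).hasDerivAt)
  have h4 := ((hasDerivAt_pow (2 * j) x).mul h3).deriv
  rw [h1, La, show (fun x => x ^ (2 * j) * ((2 - ν) * φ x - x * deriv φ x)) =
    (fun x => x ^ (2 * j)) * (fun x => (2 - ν) * φ x - x * deriv φ x) from rfl, h4]
  rw [show x ^ (2 * (j + 1)) = x ^ (2 * j) * x ^ 2 by ring]
  field_simp
  linear_combination (-((2 - ν) * φ x - x * deriv φ x)) * hpow x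

lemma Las_mix {n k : ℕ} {m0 : ℝ} {e : EuclideanSpace ℝ (Fin n)} {w : EuclideanSpace ℝ (Fin n) → ℝ}
    (hn : (n : ℝ) = 2 * m0 + 2 * k) (he : ‖e‖ = 1) (hw : ContDiff ℝ (2 * k : ℕ) w)
    (hr : ∀ x y, ‖x‖ = ‖y‖ → w x = w y) (j : ℕ) (hj : j ≤ k) :
    ∀ x, 0 < x → Las m0 (mix m0 k j) (Sec e w) x = x ^ (2 * j) * Sec e (iterLap j w) x := by
  induction j with
  | zero => intro x _; simp [mix, iterLap]
  | succ j ih =>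
    intro x hx
    have hc : ContDiff ℝ 2 (iterLap j w) := (iterLap_contDiff hw j (by omega)).of_le
      (by exact_mod_cast (by omega : 2 ≤ 2 * (k - j)))
    rw [mix, Las_cons, Las_cons, La_congr (La_congr (ih (by omega))) x hx,
      La_La_pow hn (Sec_contDiff (m := 2) hc) x hx, iterLap_succ]
    congr 1
    have hx0 : x • e ≠ 0 := smul_ne_zero hx.ne' (by rw [← norm_pos_iff, he]; exact one_pos)
    have hnx : ‖x • e‖ = x := by rw [norm_smul, he, mul_one, Real.norm_of_nonneg hx.le]
    rw [Sec, lap_radial he hc (iterLap_radial he hw hr j (by omega)) hx0, hnx]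

lemma mix_perm_aux (m0 : ℝ) (k j : ℕ) : (mix m0 k j).Perm
    (((List.range j).map fun i : ℕ => -(m0 + 2 * ((k : ℝ) - 1 - i))) ++
      (List.range j).map fun i : ℕ => m0 + 2 * (i : ℝ)) := by
  induction j with
  | zero => simp [mix]
  | succ j ih =>
    rw [← Multiset.coe_eq_coe] at ih ⊢
    rw [mix, ← Multiset.cons_coe, ← Multiset.cons_coe, ih, List.range_succ]
    simp only [List.map_append, ← Multiset.coe_add, List.map_cons, List.map_nil,
      ← Multiset.singleton_add]
    rw [← Multiset.coe_singleton, ← Multiset.coe_singleton]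
    abel

lemma up_eq (m0 : ℝ) (j m : ℕ) :
    up m0 j m = (List.range m).map fun i : ℕ => m0 + 2 * ((j + i : ℕ) : ℝ) := by
  induction m generalizing j with
  | zero => rfl
  | succ m ih =>
    rw [up, ih, List.range_succ_eq_map, List.map_cons, List.map_map, add_zero]
    congr 1
    refine List.map_congr_left fun i _ => ?_
    simp only [Function.comp]
    push_cast; ring

lemma mix_perm (m0 : ℝ) (k : ℕ) :
    (mix m0 k k).Perm ((up m0 0 k).reverse.map Neg.neg ++ up m0 0 k) := by
  have h1 : (up m0 0 k).reverse.map Neg.neg =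
      (List.range k).map fun i : ℕ => -(m0 + 2 * ((k : ℝ) - 1 - i)) := by
    apply List.ext_getElem
    · simp [up_length]
    · intro i h1 h2
      have hi : i < k := by simpa using h2
      simp only [List.getElem_map, List.getElem_reverse, List.getElem_range, up_eq,
        List.length_map, List.length_range, zero_add]
      rw [Nat.sub_sub, Nat.cast_sub (by omega)]
      push_cast; ring
  have h2 : up m0 0 k = (List.range k).map fun i : ℕ => m0 + 2 * (i : ℝ) := by
    simp [up_eq]
  rw [h1]
  conv_rhs => rw [h2]
  exact mix_perm_aux m0 k k

/-- The energy in logarithmic coordinates. -/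
lemma energy_eq {n : ℕ} (hn : 0 < n) {m0 s : ℝ} {e : EuclideanSpace ℝ (Fin n)}
    {w : EuclideanSpace ℝ (Fin n) → ℝ} (hms : m0 * s = n) (he : ‖e‖ = 1)
    (hr : ∀ x y, ‖x‖ = ‖y‖ → w x = w y) :
    ∫ x in ball 0 1, |w x| ^ s =
      n * volume.real (ball (0 : EuclideanSpace ℝ (Fin n)) 1) *
        ∫ t in Set.Ioi 0, |Ph m0 (Sec e w) t| ^ s := by
  have : Nonempty (Fin n) := ⟨⟨0, hn⟩⟩
  have h1 : ∫ x in ball (0 : EuclideanSpace ℝ (Fin n)) 1, |w x| ^ s =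
      ∫ x : EuclideanSpace ℝ (Fin n),
        (fun r => (Set.Iio (1 : ℝ)).indicator (fun r => |Sec e w r| ^ s) r) ‖x‖ := by
    rw [← integral_indicator measurableSet_ball]
    congr 1
    ext x
    by_cases hx : ‖x‖ < 1
    · rw [Set.indicator_of_mem (by simpa using hx)]
      simp only [Set.indicator_of_mem (show ‖x‖ ∈ Set.Iio (1 : ℝ) from hx)]
      rw [radial_eq he hr x]
    · rw [Set.indicator_of_notMem (by simpa using hx)]
      simp only [Set.indicator_of_notMem (show ‖x‖ ∉ Set.Iio (1 : ℝ) from hx)]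
  have himg : (fun t : ℝ => exp (-t)) '' Set.Ioi 0 = Set.Ioo 0 1 := by
    ext x
    constructor
    · rintro ⟨t, ht, rfl⟩
      have ht0 : 0 < t := ht
      exact ⟨exp_pos _, Real.exp_lt_one_iff.2 (by linarith)⟩
    · rintro ⟨h0, h1⟩
      exact ⟨-Real.log x, by simpa using Real.log_neg h0 h1, by simp [Real.exp_log h0]⟩
  have h2 := integral_image_eq_integral_abs_deriv_smul (s := Set.Ioi (0 : ℝ))
    (f := fun t : ℝ => exp (-t)) (f' := fun t => -exp (-t)) measurableSet_Ioi
    (fun t _ => by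
      have : HasDerivAt (fun t : ℝ => exp (-t)) (-exp (-t)) t := by
        simpa using (hasDerivAt_neg t).exp
      exact this.hasDerivWithinAt)
    (fun a _ b _ h => by simpa using h) (fun y => y ^ (n - 1) * |Sec e w y| ^ s)
  rw [himg] at h2
  have h3 : ∫ y in Set.Ioi (0 : ℝ), y ^ (n - 1) •
      (Set.Iio (1 : ℝ)).indicator (fun r => |Sec e w r| ^ s) y =
      ∫ y in Set.Ioo (0 : ℝ) 1, y ^ (n - 1) * |Sec e w y| ^ s := by
    rw [← Set.Ioi_inter_Iio, ← setIntegral_indicator measurableSet_Iio]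
    congr 1
    ext y
    by_cases hy : y ∈ Set.Iio (1 : ℝ)
    · rw [Set.indicator_of_mem hy, Set.indicator_of_mem hy, smul_eq_mul]
    · rw [Set.indicator_of_notMem hy, Set.indicator_of_notMem hy, smul_zero]
  rw [h1, integral_fun_norm_addHaar, finrank_euclideanSpace_fin, h3, h2, nsmul_eq_mul, smul_eq_mul,
    mul_assoc]
  congr 2
  refine setIntegral_congr_fun measurableSet_Ioi fun t _ => ?_
  simp only [smul_eq_mul, abs_neg, abs_of_pos (exp_pos _)]
  rw [Ph, abs_mul, abs_of_pos (exp_pos _), Real.mul_rpow (exp_pos _).le (abs_nonneg _),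
    ← Real.exp_mul, ← mul_assoc, ← pow_succ', Nat.sub_add_cancel hn, ← Real.exp_nat_mul]
  congr 2
  rw [← hms]; ring

end PolyH

open PolyH

theorem stmt0 (n k : ℕ) (hk : 2 ≤ 2 * k) (hn : 2 * k < n) (hn4 : n < 4 * k)
    (M : ℝ) (hM : 0 < M) :
    ∃ lam₀ : ℝ, 0 < lam₀ ∧ ∀ lam : ℝ, 0 < lam → lam < lam₀ →
      ∀ u : EuclideanSpace ℝ (Fin n) → ℝ,
        ContDiff ℝ (2 * k : ℕ) u →
        (∀ x y : EuclideanSpace ℝ (Fin n), ‖x‖ = ‖y‖ → u x = u y) →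
        (∀ x ∈ Metric.ball (0 : EuclideanSpace ℝ (Fin n)) 1,
          iterLap k u x - lam * u x = |u x| ^ (twoStar n k - 2) * u x) →
        (∀ x : EuclideanSpace ℝ (Fin n), ‖x‖ = 1 → ∀ j < k,
          iteratedFDeriv ℝ j u x (fun _ => x) = 0) →
        (∫ x in Metric.ball (0 : EuclideanSpace ℝ (Fin n)) 1, |u x| ^ twoStar n k)
            ≤ M ^ twoStar n k →
        ∀ x ∈ Metric.ball (0 : EuclideanSpace ℝ (Fin n)) 1, u x = 0 := by
  obtain ⟨p, rfl⟩ : ∃ p, k = p + 1 := ⟨k - 1, by omega⟩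
  have hn1 : 2 * ((p + 1 : ℕ) : ℝ) < n := by exact_mod_cast hn
  have hn2 : (n : ℝ) < 4 * ((p + 1 : ℕ) : ℝ) := by exact_mod_cast hn4
  have hn0 : 0 < n := by omega
  set m0 : ℝ := ((n : ℝ) - 2 * (p + 1 : ℕ)) / 2 with hm0
  set q : ℝ := twoStar n (p + 1) - 2 with hq
  have hm : 0 < m0 := by rw [hm0]; linarith
  have hden : (n : ℝ) - 2 * (p + 1 : ℕ) ≠ 0 := by linarith
  have hmts : m0 * twoStar n (p + 1) = n := by
    rw [hm0, twoStar]; field_simp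
  have hnm : (n : ℝ) = 2 * m0 + 2 * (p + 1 : ℕ) := by rw [hm0]; ring
  have hqm : m0 * q = 2 * (p + 1 : ℕ) := by
    rw [hq, mul_sub, hmts]; linarith
  have hq0 : 0 < q := by
    have : 0 < m0 * q := by rw [hqm]; positivity
    exact (pos_iff_pos_of_mul_pos this).1 hm
  have hts : twoStar n (p + 1) = q + 2 := by rw [hq]; ring
  set N : ℝ := n * volume.real (ball (0 : EuclideanSpace ℝ (Fin n)) 1) with hN
  have hNpos : 0 < N := by
    refine mul_pos (by exact_mod_cast hn0) ?_
    exact ENNReal.toReal_pos (measure_ball_pos _ _ one_pos).ne' measure_ball_lt_top.ne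
  obtain ⟨lam0, hl0, H⟩ := ode_trivial (p := p) (M := M ^ twoStar n (p + 1) / N) hm hq0
    (by rw [hqm]; linarith) (by rw [hqm]; push_cast; ring) (by positivity)
  refine ⟨lam0, hl0, fun lam hl hll u hu hr heq hbd hen => ?_⟩
  set e : EuclideanSpace ℝ (Fin n) := EuclideanSpace.single ⟨0, hn0⟩ 1 with he'
  have he : ‖e‖ = 1 := by simp [he']
  have hφ : ContDiff ℝ (2 * (p + 1) : ℕ) (Sec e u) := Sec_contDiff hu
  have hv : Van (p + 1) (Sec e u) := van_of_iteratedDeriv fun j hj => by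
    rw [iteratedDeriv_Sec hu (by omega), one_smul]
    exact hbd e he j hj
  have hode : ∀ t, 0 < t → Ph m0 (Las m0 ((up m0 0 (p + 1)).reverse.map Neg.neg)
      (Las m0 (up m0 0 (p + 1)) (Sec e u))) t =
        lam * exp (-(m0 * q * t)) * Ph m0 (Sec e u) t
          + |Ph m0 (Sec e u) t| ^ q * Ph m0 (Sec e u) t := by
    intro t ht
    have hx1 : exp (-t) < 1 := Real.exp_lt_one_iff.2 (by linarith)
    have hperm := mix_perm m0 (p + 1)
    have hlen := hperm.length_eq
    have hLas := Las_perm (m0 := m0) (ψ := Sec e u) hperm (hφ.of_le (by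
      rw [hlen]; simp [up_length]; exact_mod_cast (by omega)))
    rw [← Las_append, ← hLas, Ph, Las_mix hnm he hu hr (p + 1) le_rfl _ (exp_pos _)]
    have hmem : exp (-t) • e ∈ ball (0 : EuclideanSpace ℝ (Fin n)) 1 := by
      rw [mem_ball_zero_iff, norm_smul, he, mul_one, Real.norm_of_nonneg (exp_pos _).le]
      exact hx1
    have h1 := heq _ hmem
    have h2 : Sec e (iterLap (p + 1) u) (exp (-t)) =
        lam * Sec e u (exp (-t)) + |Sec e u (exp (-t))| ^ q * Sec e u (exp (-t)) := by
      simp only [Sec]; linarith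
    have h3 : exp (-t) ^ (2 * (p + 1)) = exp (-(m0 * q * t)) := by
      rw [← Real.exp_nat_mul, hqm]; push_cast; congr 1; ring
    have h4 : |Ph m0 (Sec e u) t| ^ q = exp (-(m0 * q * t)) * |Sec e u (exp (-t))| ^ q := by
      rw [Ph, abs_mul, abs_of_pos (exp_pos _), Real.mul_rpow (exp_pos _).le (abs_nonneg _),
        ← Real.exp_mul]
      congr 2; ring
    rw [h4, h2, h3, Ph]
    ring
  have hen' : (∫ t in Set.Ioi 0, |Ph m0 (Sec e u) t| ^ (q + 2)) ≤ M ^ twoStar n (p + 1) / N := by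
    rw [energy_eq hn0 hmts he hr] at hen
    rw [le_div_iff₀ hNpos, ← hts, mul_comm]
    exact hen
  have hz := H lam (Sec e u) hl hll hφ hv hode hen'
  have hpos : ∀ r ∈ Set.Ioo (0 : ℝ) 1, Sec e u r = 0 := by
    rintro r ⟨hr0, hr1⟩
    have h1 := hz (-Real.log r) (by simpa using Real.log_neg hr0 hr1)
    rw [Ph, neg_neg, Real.exp_log hr0, mul_eq_zero] at h1
    exact h1.resolve_left (exp_pos _).ne'
  intro x hx
  rw [radial_eq he hr x]
  rw [mem_ball_zero_iff] at hx
  rcases (norm_nonneg x).eq_or_lt with h0 | h0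
  · -- The value at the origin follows by continuity.
    have h1 : Tendsto (Sec e u) (𝓝[>] 0) (𝓝 (Sec e u 0)) :=
      (hφ.continuous.tendsto 0).mono_left nhdsWithin_le_nhds
    have h2 : Sec e u =ᶠ[𝓝[>] 0] fun _ => 0 := by
      filter_upwards [Ioo_mem_nhdsGT (zero_lt_one' ℝ)] with r hr using hpos r hr
    rw [← h0]
    exact tendsto_nhds_unique h1 (tendsto_const_nhds.congr' h2.symm)
  · exact hpos _ ⟨h0, hx⟩
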